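/- Let E be a rank two bundle on P^n with isolated cohomology of type (n,k), where n ≥ 7 and 1 < k < n/2. Then the exact sequence 0 → P_k(N) → P ⊕ F → P_{n-k}(M) → 0 associated to the minimal monad bundle P of E is not split. -/

import Mathlib

/-!
Background setup (the paper works on projective space `ℙⁿ` over a field `K`):
we encode a coherent sheaf on `ℙⁿ_K` by a module `M` over the homogeneous coordinate
ring `S = K[X₀,…,Xₙ]` (namely `M = Γ_*` of the sheaf), and the intermediate cohomology
module `H^i_*(F) = ⊕_ν H^i(ℙⁿ, F(ν))` (for `i ≥ 1`) by the local cohomology module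
`H^{i+1}_𝔪(M)` at the irrelevant maximal ideal `𝔪 = (X₀,…,Xₙ)`, to which it is
canonically isomorphic.
-/

open CategoryTheory TensorProduct

noncomputable section

/-- The homogeneous coordinate ring `S = K[X₀,…,Xₙ]` of `ℙⁿ`. -/
abbrev PolyS (K : Type) [Field K] (n : ℕ) : Type := MvPolynomial (Fin (n+1)) K

variable (K : Type) [Field K] (n : ℕ)

/-- The irrelevant maximal ideal `𝔪 = (X₀,…,Xₙ)` of `S`. -/
def irrel : Ideal (PolyS K n) := Ideal.span (Set.range MvPolynomial.X)

/-- `H^i_*` of the sheaf on `ℙⁿ` associated to the `S`-module `M`, encoded (for `i ≥ 1`)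
as the local cohomology module `H^{i+1}_𝔪(M)`. -/
def Hstar (i : ℕ) (M : Type) [AddCommGroup M] [Module (PolyS K n) M] :
    ModuleCat (PolyS K n) :=
  (localCohomology (irrel K n) (i+1)).obj (ModuleCat.of (PolyS K n) M)

/-- `M` is (the module of sections `Γ_*` of) an algebraic vector bundle on `ℙⁿ`:
finitely generated, depth `≥ 2` at `𝔪` (i.e. `H⁰_𝔪(M) = H¹_𝔪(M) = 0`, so `M = Γ_*(M̃)`),
and locally free at every prime other than the irrelevant ideal. -/
structure IsBundleModule (M : Type) [AddCommGroup M] [Module (PolyS K n) M] : Prop where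
  finite : Module.Finite (PolyS K n) M
  h0 : Subsingleton ((localCohomology (irrel K n) 0).obj (ModuleCat.of (PolyS K n) M))
  h1 : Subsingleton ((localCohomology (irrel K n) 1).obj (ModuleCat.of (PolyS K n) M))
  locFree : ∀ p : PrimeSpectrum (PolyS K n), p.asIdeal ≠ irrel K n →
    Module.Free (Localization.AtPrime p.asIdeal) (LocalizedModule p.asIdeal.primeCompl M)

/-- `M` represents a vector bundle of rank two on `ℙⁿ`. -/
structure IsRankTwoBundleModule (M : Type) [AddCommGroup M] [Module (PolyS K n) M]
    extends IsBundleModule K n M : Prop where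
  rank2 : ∀ p : PrimeSpectrum (PolyS K n), p.asIdeal ≠ irrel K n →
    Module.rank (Localization.AtPrime p.asIdeal) (LocalizedModule p.asIdeal.primeCompl M) = 2

/-- A finite length module which is moreover supported at the irrelevant ideal: the
(ungraded avatar of the) notion of a *graded* `S`-module of finite length. -/
def IsGradedFiniteLength (N : Type) [AddCommGroup N] [Module (PolyS K n) N] : Prop :=
  IsFiniteLength (PolyS K n) N ∧
    ∃ c : ℕ, (irrel K n) ^ c ≤ Module.annihilator (PolyS K n) N

/-- A minimal graded free resolution `⋯ → L₁ → L₀ → N → 0` of an `S`-module `N`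
(minimality: all differentials have entries in the maximal ideal `𝔪`).
Here `d i : L (i+1) → L i` and `P_k(N)`, the `k`-th syzygy module, is `range (d k)`,
i.e. the image of `f_{k+1} : L_{k+1} → L_k`. -/
structure MinimalResolution (N : Type) [AddCommGroup N] [Module (PolyS K n) N] where
  L : ℕ → Type
  [addCommGroup : ∀ i, AddCommGroup (L i)]
  [module : ∀ i, Module (PolyS K n) (L i)]
  free : ∀ i, Module.Free (PolyS K n) (L i)
  finite : ∀ i, Module.Finite (PolyS K n) (L i)
  d : ∀ i : ℕ, L (i+1) →ₗ[PolyS K n] L i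
  aug : L 0 →ₗ[PolyS K n] N
  aug_surjective : Function.Surjective aug
  exact0 : LinearMap.range (d 0) = LinearMap.ker aug
  exact : ∀ i : ℕ, LinearMap.range (d (i+1)) = LinearMap.ker (d i)
  minimal : ∀ i : ℕ, LinearMap.range (d i) ≤ (irrel K n) • (⊤ : Submodule (PolyS K n) (L i))
  minimal0 : LinearMap.ker aug ≤ (irrel K n) • (⊤ : Submodule (PolyS K n) (L 0))

attribute [instance] MinimalResolution.addCommGroup MinimalResolution.module

/-- The cohomology `ker β / im α` of a monad `A --α--> P --β--> B`. -/
def MonadHomology {R A P B : Type} [CommRing R] [AddCommGroup A] [Module R A]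
    [AddCommGroup P] [Module R P] [AddCommGroup B] [Module R B]
    (α : A →ₗ[R] P) (β : P →ₗ[R] B) : Type :=
  ↥(LinearMap.ker β) ⧸ (LinearMap.range α).comap (LinearMap.ker β).subtype

instance {R A P B : Type} [CommRing R] [AddCommGroup A] [Module R A]
    [AddCommGroup P] [Module R P] [AddCommGroup B] [Module R B]
    (α : A →ₗ[R] P) (β : P →ₗ[R] B) : AddCommGroup (MonadHomology α β) := by
  unfold MonadHomology; infer_instance

instance {R A P B : Type} [CommRing R] [AddCommGroup A] [Module R A]
    [AddCommGroup P] [Module R P] [AddCommGroup B] [Module R B]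
    (α : A →ₗ[R] P) (β : P →ₗ[R] B) : Module R (MonadHomology α β) := by
  unfold MonadHomology; infer_instance

/-- A linear map of `S`-modules which becomes an isomorphism of the associated sheaves
on `ℙⁿ`: its kernel and cokernel are annihilated by a power of the irrelevant ideal. -/
def IsSheafIso {M N' : Type} [AddCommGroup M] [Module (PolyS K n) M]
    [AddCommGroup N'] [Module (PolyS K n) N'] (f : M →ₗ[PolyS K n] N') : Prop :=
  (∃ c : ℕ, (irrel K n) ^ c ≤ Module.annihilator (PolyS K n) ↥(LinearMap.ker f)) ∧
  (∃ c : ℕ, (irrel K n) ^ c ≤ Module.annihilator (PolyS K n) (N' ⧸ LinearMap.range f))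

/-! ### Part 1 -/

namespace HSplit
open Abelian

/-- `Ext^j(M, N)` for unbundled modules. -/
abbrev EX (R M N : Type) [CommRing R] [AddCommGroup M] [Module R M] [AddCommGroup N] [Module R N]
    (j : ℕ) : Type := Abelian.Ext (ModuleCat.of R M) (ModuleCat.of R N) j

/-- vanishing of `Ext^j(M, N)`. -/
def EV (R M N : Type) [CommRing R] [AddCommGroup M] [Module R M] [AddCommGroup N] [Module R N]
    (j : ℕ) : Prop := ∀ x : EX R M N j, x = 0

section
variable {R : Type} [CommRing R]
variable {A B C N N' : Type} [AddCommGroup A] [Module R A] [AddCommGroup B] [Module R B]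
  [AddCommGroup C] [Module R C] [AddCommGroup N] [Module R N] [AddCommGroup N'] [Module R N']

/-- precomposition -/
def pre (f : A →ₗ[R] B) {j : ℕ} (x : EX R B N j) : EX R A N j :=
  (Ext.mk₀ (ModuleCat.ofHom f)).comp x (zero_add j)

/-- postcomposition -/
def post (f : A →ₗ[R] B) {j : ℕ} (x : EX R N A j) : EX R N B j :=
  x.comp (Ext.mk₀ (ModuleCat.ofHom f)) (add_zero j)

lemma pre_comp (f : A →ₗ[R] B) (g : B →ₗ[R] C) {j : ℕ} (x : EX R C N j) :
    pre (g.comp f) x = pre f (pre g x) := by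
  simp [pre, ModuleCat.ofHom_comp]

lemma pre_id {j : ℕ} (x : EX R A N j) : pre LinearMap.id x = x := by
  simp only [pre, ModuleCat.ofHom_id, Ext.mk₀_id_comp]

lemma pre_add (f g : A →ₗ[R] B) {j : ℕ} (x : EX R B N j) :
    pre (f + g) x = pre f x + pre g x := by
  simp [pre, ModuleCat.ofHom_add, Ext.mk₀_add]

lemma pre_zero' {j : ℕ} (x : EX R B N j) :
    pre (0 : A →ₗ[R] B) x = 0 := by
  simp [pre, ModuleCat.ofHom_zero]

lemma pre_map_zero (f : A →ₗ[R] B) {j : ℕ} : pre f (0 : EX R B N j) = 0 := by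
  simp [pre]

lemma pre_map_add (f : A →ₗ[R] B) {j : ℕ} (x y : EX R B N j) :
    pre f (x + y) = pre f x + pre f y := by
  simp [pre]

lemma pre_smul (r : R) (f : A →ₗ[R] B) {j : ℕ} (x : EX R B N j) :
    pre (r • f) x = r • pre f x := by
  have : ModuleCat.ofHom (r • f) = r • ModuleCat.ofHom f := rfl
  simp [pre, this, Ext.mk₀_smul]

lemma post_smul (r : R) (f : A →ₗ[R] B) {j : ℕ} (x : EX R N A j) :
    post (r • f) x = r • post f x := by
  have : ModuleCat.ofHom (r • f) = r • ModuleCat.ofHom f := rfl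
  simp [post, this, Ext.mk₀_smul]

lemma post_zero' {j : ℕ} (x : EX R N A j) :
    post (0 : A →ₗ[R] B) x = 0 := by
  simp [post, ModuleCat.ofHom_zero]

lemma post_map_zero (f : A →ₗ[R] B) {j : ℕ} : post f (0 : EX R N A j) = 0 := by
  simp [post]

lemma post_id {j : ℕ} (x : EX R N A j) : post LinearMap.id x = x := by
  simp only [post, ModuleCat.ofHom_id, Ext.comp_mk₀_id]

lemma post_comp (f : A →ₗ[R] B) (g : B →ₗ[R] C) {j : ℕ} (x : EX R N A j) :
    post (g.comp f) x = post g (post f x) := by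
  simp only [post, ModuleCat.ofHom_comp, ← Ext.mk₀_comp_mk₀]
  exact (Ext.comp_assoc_of_third_deg_zero _ _ _ _).symm

lemma post_add (f g : A →ₗ[R] B) {j : ℕ} (x : EX R N A j) :
    post (f + g) x = post f x + post g x := by
  simp [post, ModuleCat.ofHom_add, Ext.mk₀_add]

/-- the short complex of a short exact sequence of modules -/
lemma ses {f : A →ₗ[R] B} {g : B →ₗ[R] C} (hf : Function.Injective f) (h : Function.Exact f g)
    (hg : Function.Surjective g) :
    (ModuleCat.shortComplexOfCompEqZero f g h.linearMap_comp_eq_zero).ShortExact :=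
  ModuleCat.shortComplex_shortExact _ h hf hg

lemma con1 {f : A →ₗ[R] B} {g : B →ₗ[R] C} (hf : Function.Injective f) (h : Function.Exact f g)
    (hg : Function.Surjective g) {j : ℕ} (hC : EV R C N (j+1)) (x : EX R A N j) :
    ∃ y : EX R B N j, pre f y = x :=
  Ext.contravariant_sequence_exact₁ (ses hf h hg) _ x (add_comm 1 j) (hC _)

lemma con2 {f : A →ₗ[R] B} {g : B →ₗ[R] C} (hf : Function.Injective f) (h : Function.Exact f g)
    (hg : Function.Surjective g) {j : ℕ} (x : EX R B N j) (hx : pre f x = 0) :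
    ∃ y : EX R C N j, pre g y = x :=
  Ext.contravariant_sequence_exact₂ (ses hf h hg) _ x hx

/-- if `pre f` is surjective in degree j then pre g is injective in degree j+1 -/
lemma con3 {f : A →ₗ[R] B} {g : B →ₗ[R] C} (hf : Function.Injective f) (h : Function.Exact f g)
    (hg : Function.Surjective g) {j : ℕ} (hs : ∀ x : EX R A N j, ∃ y : EX R B N j, pre f y = x)
    (x : EX R C N (j+1)) (hx : pre g x = 0) : x = 0 := by
  obtain ⟨y, rfl⟩ := Ext.contravariant_sequence_exact₃ (ses hf h hg) _ x hx (add_comm 1 j)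
  obtain ⟨z, rfl⟩ := hs y
  exact ShortComplex.ShortExact.extClass_comp_assoc (ses hf h hg) z

lemma con0 {g : B →ₗ[R] C} (hg : Function.Surjective g) (x : EX R C N 0) (hx : pre g x = 0) :
    x = 0 := by
  have : Epi (ModuleCat.ofHom g) := (ModuleCat.epi_iff_surjective _).2 hg
  have := Ext.precomp_mk₀_injective_of_epi (ModuleCat.of R N) (ModuleCat.ofHom g)
  apply this
  simp only [map_zero]
  exact hx

lemma cov1 {f : A →ₗ[R] B} {g : B →ₗ[R] C} (hf : Function.Injective f) (h : Function.Exact f g)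
    (hg : Function.Surjective g) {j : ℕ} (hs : ∀ x : EX R N C j, ∃ y : EX R N B j, post g y = x)
    (x : EX R N A (j+1)) (hx : post f x = 0) : x = 0 := by
  obtain ⟨y, rfl⟩ := Ext.covariant_sequence_exact₁ _ (ses hf h hg) x hx rfl
  obtain ⟨z, rfl⟩ := hs y
  exact (Ext.comp_assoc z _ _ _ (zero_add 1) (by omega)).trans
    ((congrArg (fun w => z.comp w rfl) (ShortComplex.ShortExact.comp_extClass (ses hf h hg))).trans
      (Ext.comp_zero _ _ _ _ _))

lemma cov2 {f : A →ₗ[R] B} {g : B →ₗ[R] C} (hf : Function.Injective f) (h : Function.Exact f g)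
    (hg : Function.Surjective g) {j : ℕ} (x : EX R N B j) (hx : post g x = 0) :
    ∃ y : EX R N A j, post f y = x :=
  Ext.covariant_sequence_exact₂ _ (ses hf h hg) x hx

lemma cov3 {f : A →ₗ[R] B} {g : B →ₗ[R] C} (hf : Function.Injective f) (h : Function.Exact f g)
    (hg : Function.Surjective g) {j : ℕ} (hA : EV R N A (j+1)) (x : EX R N C j) :
    ∃ y : EX R N B j, post g y = x :=
  Ext.covariant_sequence_exact₃ _ (ses hf h hg) x rfl (hA _)

lemma cov0 {f : A →ₗ[R] B} (hf : Function.Injective f) (x : EX R N A 0) (hx : post f x = 0) :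
    x = 0 := by
  have : Mono (ModuleCat.ofHom f) := (ModuleCat.mono_iff_injective _).2 hf
  have := Ext.postcomp_mk₀_injective_of_mono (ModuleCat.of R N) (ModuleCat.ofHom f)
  apply this
  simp only [map_zero]
  exact hx

/-! vanishing corollaries -/

lemma EV.mid {f : A →ₗ[R] B} {g : B →ₗ[R] C} (hf : Function.Injective f) (h : Function.Exact f g)
    (hg : Function.Surjective g) {j : ℕ} (h1 : EV R A N j) (h3 : EV R C N j) : EV R B N j := by
  intro x
  obtain ⟨y, rfl⟩ := con2 hf h hg x (h1 _)
  rw [h3 y, pre_map_zero]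

lemma EV.left {f : A →ₗ[R] B} {g : B →ₗ[R] C} (hf : Function.Injective f) (h : Function.Exact f g)
    (hg : Function.Surjective g) {j : ℕ} (h1 : EV R B N j) (h3 : EV R C N (j+1)) : EV R A N j := by
  intro x
  obtain ⟨y, rfl⟩ := con1 hf h hg h3 x
  rw [h1 y, pre_map_zero]

lemma EV.right {f : A →ₗ[R] B} {g : B →ₗ[R] C} (hf : Function.Injective f) (h : Function.Exact f g)
    (hg : Function.Surjective g) {j : ℕ} (h1 : EV R A N j) (h3 : EV R B N (j+1)) :
    EV R C N (j+1) := by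
  intro x
  exact con3 hf h hg (fun y => ⟨0, by rw [h1 y, pre_map_zero]⟩) x (h3 _)

lemma EV.right0 {g : B →ₗ[R] C} (hg : Function.Surjective g) (h3 : EV R B N 0) :
    EV R C N 0 := fun x => con0 hg x (h3 _)

lemma EV.cmid {f : A →ₗ[R] B} {g : B →ₗ[R] C} (hf : Function.Injective f) (h : Function.Exact f g)
    (hg : Function.Surjective g) {j : ℕ} (h1 : EV R N A j) (h3 : EV R N C j) : EV R N B j := by
  intro x
  obtain ⟨y, rfl⟩ := cov2 hf h hg x (h3 _)
  rw [h1 y, post_map_zero]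

lemma EV.cright {f : A →ₗ[R] B} {g : B →ₗ[R] C} (hf : Function.Injective f)
    (h : Function.Exact f g)
    (hg : Function.Surjective g) {j : ℕ} (h1 : EV R N B j) (h3 : EV R N A (j+1)) : EV R N C j := by
  intro x
  obtain ⟨y, rfl⟩ := cov3 hf h hg h3 x
  rw [h1 y, post_map_zero]

lemma EV.cleft {f : A →ₗ[R] B} {g : B →ₗ[R] C} (hf : Function.Injective f)
    (h : Function.Exact f g)
    (hg : Function.Surjective g) {j : ℕ} (h1 : EV R N C j) (h3 : EV R N B (j+1)) :
    EV R N A (j+1) := by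
  intro x
  exact cov1 hf h hg (fun y => ⟨0, by rw [h1 y, post_map_zero]⟩) x (h3 _)

lemma EV.cleft0 {f : A →ₗ[R] B} (hf : Function.Injective f) (h3 : EV R N B 0) :
    EV R N A 0 := fun x => cov0 hf x (h3 _)

lemma EV.proj [Module.Projective R A] (j : ℕ) (hj : 1 ≤ j) : EV R A N j := by
  obtain ⟨j, rfl⟩ : ∃ i, j = i + 1 := ⟨j - 1, by omega⟩
  intro x
  have : Projective (ModuleCat.of R A) := (IsProjective.iff_projective (R := R) A).1 inferInstance
  exact Ext.eq_zero_of_projective x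

lemma EV.retract {j : ℕ} (i : A →ₗ[R] B) (p : B →ₗ[R] A) (h : p.comp i = LinearMap.id)
    (hB : EV R B N j) : EV R A N j := by
  intro x
  rw [← pre_id x, ← h, pre_comp, hB (pre p x), pre_map_zero]

lemma EV.congr {j : ℕ} (e : A ≃ₗ[R] B) (hB : EV R B N j) : EV R A N j :=
  EV.retract e.toLinearMap e.symm.toLinearMap (by ext; simp) hB

lemma EV.cretract {j : ℕ} (i : A →ₗ[R] B) (p : B →ₗ[R] A) (h : p.comp i = LinearMap.id)
    (hB : EV R N B j) : EV R N A j := by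
  intro x
  rw [← post_id x, ← h, post_comp, hB (post i x), post_map_zero]

lemma EV.ccongr {j : ℕ} (e : A ≃ₗ[R] B) (hB : EV R N B j) : EV R N A j :=
  EV.cretract e.toLinearMap e.symm.toLinearMap (by ext; simp) hB

lemma EV.of_sum {ι : Type} (s : Finset ι) {j : ℕ} (i : ι → A →ₗ[R] B) (p : ι → B →ₗ[R] A)
    (h : ∑ k ∈ s, (p k).comp (i k) = LinearMap.id)
    (hB : EV R B N j) : EV R A N j := by
  intro x
  have key : ∀ s : Finset ι, pre (∑ k ∈ s, (p k).comp (i k)) x = 0 := by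
    classical
    intro s
    induction s using Finset.induction_on with
    | empty => simp [pre_zero']
    | insert a s ha ih =>
      rw [Finset.sum_insert ha, pre_add, ih, pre_comp, hB (pre (p a) x), pre_map_zero, add_zero]
  rw [← pre_id x, ← h, key]

lemma EV.csum {ι : Type} (s : Finset ι) {j : ℕ} (i : ι → A →ₗ[R] B) (p : ι → B →ₗ[R] A)
    (h : ∑ k ∈ s, (p k).comp (i k) = LinearMap.id)
    (hB : EV R N B j) : EV R N A j := by
  intro x
  have key : ∀ s : Finset ι, post (∑ k ∈ s, (p k).comp (i k)) x = 0 := by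
    classical
    intro s
    induction s using Finset.induction_on with
    | empty => simp [post_zero']
    | insert a s ha ih =>
      rw [Finset.sum_insert ha, post_add, ih, post_comp, hB (post (i a) x), post_map_zero, add_zero]
  rw [← post_id x, ← h, key]

lemma EV_zero_iff : EV R A N 0 ↔ ∀ f : A →ₗ[R] N, f = 0 := by
  constructor
  · intro h f
    have := h (Ext.mk₀ (ModuleCat.ofHom f))
    rw [Ext.mk₀_eq_zero_iff] at this
    exact congrArg ModuleCat.Hom.hom this
  · intro h x
    obtain ⟨f, rfl⟩ := (Ext.mk₀_bijective _ _).2 x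
    have : f = 0 := by
      ext1
      exact h f.hom
    rw [this, Ext.mk₀_zero]

/-- every map extends if Ext^1 of the quotient vanishes -/
lemma EV.extend {f : A →ₗ[R] B} {g : B →ₗ[R] C} (hf : Function.Injective f)
    (h : Function.Exact f g) (hg : Function.Surjective g) (h1 : EV R C N 1) (a : A →ₗ[R] N) :
    ∃ b : B →ₗ[R] N, b.comp f = a := by
  obtain ⟨y, hy⟩ := con1 hf h hg (j := 0) h1 (Ext.mk₀ (ModuleCat.ofHom a))
  obtain ⟨b, rfl⟩ := (Ext.mk₀_bijective _ _).2 y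
  refine ⟨b.hom, ?_⟩
  simp only [pre, Ext.mk₀_comp_mk₀] at hy
  have := (Ext.mk₀_bijective _ _).1 hy
  exact congrArg ModuleCat.Hom.hom this

/-- conversely, with B projective. -/
lemma EV.of_extend {f : A →ₗ[R] B} {g : B →ₗ[R] C} (hf : Function.Injective f)
    (h : Function.Exact f g) (hg : Function.Surjective g) [Module.Projective R B]
    (H : ∀ a : A →ₗ[R] N, ∃ b : B →ₗ[R] N, b.comp f = a) : EV R C N 1 := by
  intro x
  refine con3 (j := 0) hf h hg ?_ x (EV.proj 1 le_rfl _)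
  intro y
  obtain ⟨a, rfl⟩ := (Ext.mk₀_bijective _ _).2 y
  obtain ⟨b, hb⟩ := H a.hom
  refine ⟨Ext.mk₀ (ModuleCat.ofHom b), ?_⟩
  simp only [pre, Ext.mk₀_comp_mk₀, ← ModuleCat.ofHom_comp, hb]
  rfl

lemma pre_injective_pow_zero {t : A →ₗ[R] A} {j : ℕ} (hinj : ∀ x : EX R A N j, pre t x = 0 → x = 0)
    (c : ℕ) (x : EX R A N j) (hc : pre (t ^ c) x = 0) : x = 0 := by
  induction c generalizing x with
  | zero => rwa [pow_zero, Module.End.one_eq_id, pre_id] at hc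
  | succ c ih =>
    apply ih
    apply hinj
    rwa [← pre_comp, ← Module.End.mul_eq_comp, ← pow_succ]

lemma pre_surj_pow_zero {t : A →ₗ[R] A} {j : ℕ} (hs : ∀ x : EX R A N j, ∃ y, pre t y = x)
    (c : ℕ) (hc : ∀ x : EX R A N j, pre (t ^ c) x = 0) : EV R A N j := by
  have : ∀ d : ℕ, ∀ x : EX R A N j, ∃ y, pre (t ^ d) y = x := by
    intro d
    induction d with
    | zero => intro x; exact ⟨x, by rw [pow_zero, Module.End.one_eq_id, pre_id]⟩
    | succ d ih =>
      intro x
      obtain ⟨y, rfl⟩ := hs x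
      obtain ⟨z, rfl⟩ := ih y
      exact ⟨z, by rw [pow_succ, Module.End.mul_eq_comp, pre_comp]⟩
  intro x
  obtain ⟨y, rfl⟩ := this c x
  exact hc y

lemma smul_eq_pre (r : R) {j : ℕ} (x : EX R A N j) : r • x = pre (r • LinearMap.id) x := by
  rw [pre_smul, pre_id]

lemma smul_eq_post (r : R) {j : ℕ} (x : EX R N A j) : r • x = post (r • LinearMap.id) x := by
  rw [post_smul, post_id]

/-- if r kills A then r kills Ext(A,N) -/
lemma smul_zero_of_left {r : R} (h : ∀ a : A, r • a = 0) {j : ℕ} (x : EX R A N j) : r • x = 0 := by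
  have : r • (LinearMap.id : A →ₗ[R] A) = 0 := by ext a; simpa using h a
  rw [smul_eq_pre, this, pre_zero']

lemma smul_zero_of_right {r : R} (h : ∀ a : A, r • a = 0) {j : ℕ} (x : EX R N A j) :
    r • x = 0 := by
  have : r • (LinearMap.id : A →ₗ[R] A) = 0 := by ext a; simpa using h a
  rw [smul_eq_post, this, post_zero']

/-- Rees step. -/
lemma EV.rees {r : R} {g : B →ₗ[R] C} (hr : ∀ b : B, r • b = 0 → b = 0)
    (h : ∀ b, g b = 0 ↔ ∃ b', r • b' = b) (hg : Function.Surjective g)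
    {c : ℕ} (hN : ∀ a : N, r ^ c • a = 0) {j : ℕ} (hC : ∀ i < j, EV R N C i) : EV R N B j := by
  intro x
  have hinj : ∀ x : EX R N B j, r • x = 0 → x = 0 := by
    intro x hx
    have hf : Function.Injective (r • (LinearMap.id : B →ₗ[R] B)) :=
      (injective_iff_map_eq_zero _).2 fun b hb => hr b (by simpa using hb)
    rw [smul_eq_post] at hx
    cases j with
    | zero => exact cov0 hf x hx
    | succ j =>
      refine cov1 hf (g := g) (fun b => ?_) hg (fun y => ⟨0, ?_⟩) x hx
      · rw [h]; simp
      · rw [hC j (by omega) y, post_map_zero]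
  have : ∀ (d : ℕ) (x : EX R N B j), r ^ d • x = 0 → x = 0 := by
    intro d
    induction d with
    | zero => intro x hx; simpa using hx
    | succ d ih =>
      intro x hx
      exact hinj x (ih _ (by rw [← mul_smul, ← pow_succ]; exact hx))
  exact this c x (smul_zero_of_left hN x)

end
end HSplit

/-! ### Part 2 -/

namespace HSplit

section
variable {R : Type} [CommRing R] {ι : Type}

/-- all `x i` act nilpotently -/
def Tor (x : ι → R) (Z : Type) [AddCommGroup Z] [Module R Z] : Prop :=
  ∀ i, ∃ c : ℕ, ∀ z : Z, x i ^ c • z = 0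

/-- `Ext^j(Z, R) = 0` for torsion `Z` and `j ≤ n`. -/
def DepthAt (x : ι → R) (n : ℕ) : Prop :=
  ∀ (Z : Type) [AddCommGroup Z] [Module R Z], Tor x Z → ∀ j ≤ n, EV R Z R j

variable {A B C : Type} [AddCommGroup A] [Module R A] [AddCommGroup B] [Module R B]
  [AddCommGroup C] [Module R C]

def TInj (x : ι → R) (a : A →ₗ[R] B) : Prop := ∀ i, ∃ c : ℕ, ∀ z, a z = 0 → x i ^ c • z = 0
def TSurj (x : ι → R) (a : A →ₗ[R] B) : Prop := ∀ i, ∃ c : ℕ, ∀ y, ∃ z, a z = x i ^ c • y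
def TExact (x : ι → R) (a : A →ₗ[R] B) (b : B →ₗ[R] C) : Prop :=
  b.comp a = 0 ∧ ∀ i, ∃ c : ℕ, ∀ y, b y = 0 → ∃ z, a z = x i ^ c • y

lemma TSurj.of_surj {x : ι → R} {a : A →ₗ[R] B} (h : Function.Surjective a) : TSurj x a :=
  fun _ => ⟨0, fun _ => h _⟩

lemma TInj.of_inj {x : ι → R} {a : A →ₗ[R] B} (h : Function.Injective a) : TInj x a :=
  fun _ => ⟨0, fun z hz => by rw [(injective_iff_map_eq_zero a).1 h z hz, smul_zero]⟩

variable {x : ι → R} {n : ℕ} (hD : DepthAt x n)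
include hD

lemma v_range {a : A →ₗ[R] B} (ha : TInj x a) {j : ℕ} (hj : j ≤ n + 1) (h : EV R A R j) :
    EV R (LinearMap.range a) R j := by
  cases j with
  | zero => exact EV.right0 a.surjective_rangeRestrict h
  | succ j =>
    refine EV.right (f := (LinearMap.ker a).subtype) (g := a.rangeRestrict)
      (Submodule.subtype_injective _) ?_ a.surjective_rangeRestrict ?_ h
    · intro y
      simp [Subtype.ext_iff]
    · refine hD _ (fun i => ?_) j (by omega)
      obtain ⟨c, hc⟩ := ha i
      exact ⟨c, fun z => Subtype.ext (hc z.1 z.2)⟩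

lemma v_of_range {a : A →ₗ[R] B} (ha : TInj x a) {j : ℕ} (hj : j ≤ n)
    (h : EV R (LinearMap.range a) R j) : EV R A R j := by
  refine EV.mid (f := (LinearMap.ker a).subtype) (g := a.rangeRestrict)
      (Submodule.subtype_injective _) ?_ a.surjective_rangeRestrict ?_ h
  · intro y
    simp [Subtype.ext_iff]
  · refine hD _ (fun i => ?_) j (by omega)
    obtain ⟨c, hc⟩ := ha i
    exact ⟨c, fun z => Subtype.ext (hc z.1 z.2)⟩

omit hD in
lemma tor_coker {a : A →ₗ[R] B} (hs : TSurj x a) : Tor x (B ⧸ LinearMap.range a) := by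
  intro i
  obtain ⟨c, hc⟩ := hs i
  refine ⟨c, fun z => ?_⟩
  obtain ⟨y, rfl⟩ := Submodule.Quotient.mk_surjective _ z
  rw [← Submodule.Quotient.mk_smul, Submodule.Quotient.mk_eq_zero]
  obtain ⟨w, hw⟩ := hc y
  exact ⟨w, hw⟩

lemma v_sub {a : A →ₗ[R] B} (ha : Function.Injective a) (hs : TSurj x a) {j : ℕ} (hj : j ≤ n)
    (h : EV R A R j) : EV R B R j := by
  refine EV.mid (f := a) (g := (LinearMap.range a).mkQ) ha ?_ (Submodule.mkQ_surjective _) h ?_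
  · exact LinearMap.exact_map_mkQ_range a
  · exact hD _ (tor_coker hs) j hj

lemma v_sub' {a : A →ₗ[R] B} (ha : Function.Injective a) (hs : TSurj x a) {j : ℕ} (hj : j + 1 ≤ n)
    (h : EV R B R j) : EV R A R j := by
  refine EV.left (f := a) (g := (LinearMap.range a).mkQ) ha ?_ (Submodule.mkQ_surjective _) h ?_
  · exact LinearMap.exact_map_mkQ_range a
  · exact hD _ (tor_coker hs) _ hj

omit hD in
lemma tsurj_range_ker {a : A →ₗ[R] B} {b : B →ₗ[R] C} (hab : TExact x a b) :
    ∃ i : LinearMap.range a →ₗ[R] LinearMap.ker b, Function.Injective i ∧ TSurj x i := by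
  have hle : LinearMap.range a ≤ LinearMap.ker b := LinearMap.range_le_ker_iff.2 hab.1
  refine ⟨Submodule.inclusion hle, Submodule.inclusion_injective hle, fun i => ?_⟩
  obtain ⟨c, hc⟩ := hab.2 i
  refine ⟨c, fun y => ?_⟩
  obtain ⟨z, hz⟩ := hc y.1 y.2
  exact ⟨⟨a z, z, rfl⟩, Subtype.ext hz⟩

omit hD in
lemma tsurj_range {b : B →ₗ[R] C} (hb : TSurj x b) : TSurj x (LinearMap.range b).subtype := by
  intro i
  obtain ⟨c, hc⟩ := hb i
  refine ⟨c, fun y => ?_⟩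
  obtain ⟨z, hz⟩ := hc y
  exact ⟨⟨b z, z, rfl⟩, hz⟩

omit hD in
lemma exact_ker_range (b : B →ₗ[R] C) :
    Function.Exact (LinearMap.ker b).subtype b.rangeRestrict := by
  intro y
  simp [Subtype.ext_iff]

lemma v_iso {f : A →ₗ[R] B} (h1 : TInj x f) (h2 : TSurj x f) {j : ℕ} (hj : j ≤ n)
    (h : EV R A R j) : EV R B R j :=
  v_sub hD (Submodule.subtype_injective _) (tsurj_range h2) hj (v_range hD h1 (by omega) h)

lemma v_iso' {f : A →ₗ[R] B} (h1 : TInj x f) (h2 : TSurj x f) {j : ℕ} (hj : j + 1 ≤ n)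
    (h : EV R B R j) : EV R A R j :=
  v_of_range hD h1 (by omega) (v_sub' hD (Submodule.subtype_injective _) (tsurj_range h2) hj h)

/-- middle term -/
lemma V1 {a : A →ₗ[R] B} {b : B →ₗ[R] C} (ha : TInj x a) (hab : TExact x a b) (hb : TSurj x b)
    {j : ℕ} (hj : j + 1 ≤ n) (h1 : EV R A R j) (h3 : EV R C R j) : EV R B R j := by
  obtain ⟨i, hi, hi'⟩ := tsurj_range_ker hab
  exact EV.mid (Submodule.subtype_injective _) (exact_ker_range b) b.surjective_rangeRestrict
    (v_sub hD hi hi' (by omega) (v_range hD ha (by omega) h1))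
    (v_sub' hD (Submodule.subtype_injective _) (tsurj_range hb) hj h3)

/-- left term, with `b` almost surjective. -/
lemma V2 {a : A →ₗ[R] B} {b : B →ₗ[R] C} (ha : TInj x a) (hab : TExact x a b) (hb : TSurj x b)
    {j : ℕ} (hj : j + 2 ≤ n) (h1 : EV R B R j) (h3 : EV R C R (j+1)) : EV R A R j := by
  obtain ⟨i, hi, hi'⟩ := tsurj_range_ker hab
  refine v_of_range hD ha (by omega) (v_sub' hD hi hi' (by omega) ?_)
  exact EV.left (Submodule.subtype_injective _) (exact_ker_range b) b.surjective_rangeRestrict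
    h1 (v_sub' hD (Submodule.subtype_injective _) (tsurj_range hb) (by omega) h3)

/-- left term, with `b` surjective. -/
lemma V2s {a : A →ₗ[R] B} {b : B →ₗ[R] C} (ha : TInj x a) (hab : TExact x a b)
    (hb : Function.Surjective b)
    {j : ℕ} (hj : j + 1 ≤ n) (h1 : EV R B R j) (h3 : EV R C R (j+1)) : EV R A R j := by
  obtain ⟨i, hi, hi'⟩ := tsurj_range_ker hab
  refine v_of_range hD ha (by omega) (v_sub' hD hi hi' (by omega) ?_)
  exact EV.left (Submodule.subtype_injective _) (LinearMap.exact_subtype_ker_map b) hb h1 h3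

/-- right term -/
lemma V3 {a : A →ₗ[R] B} {b : B →ₗ[R] C} (ha : TInj x a) (hab : TExact x a b)
    {j : ℕ} (hj : j ≤ n) (h1 : EV R A R j) (h3 : EV R B R (j+1)) :
    EV R (LinearMap.range b) R (j+1) := by
  obtain ⟨i, hi, hi'⟩ := tsurj_range_ker hab
  exact EV.right (Submodule.subtype_injective _) (exact_ker_range b) b.surjective_rangeRestrict
    (v_sub hD hi hi' (by omega) (v_range hD ha (by omega) h1)) h3

end
end HSplit

/-! ### Part 3 -/

namespace HSplit

section
variable {K : Type} [Field K] {n : ℕ}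

/-- the ideal `(X_0, …, X_{r-1})` -/
def Ir (K : Type) [Field K] (n r : ℕ) : Ideal (PolyS K n) :=
  Ideal.span (MvPolynomial.X '' {i : Fin (n+1) | i.val < r})

/-- the variables -/
abbrev XX (K : Type) [Field K] (n : ℕ) : Fin (n+1) → PolyS K n := MvPolynomial.X

lemma Ir_zero : Ir K n 0 = ⊥ := by simp [Ir]

lemma Ir_top : Ir K n (n+1) = irrel K n := by
  unfold Ir irrel
  congr 1
  ext p
  simp only [Set.mem_image, Set.mem_setOf_eq, Set.mem_range]
  exact ⟨fun ⟨i, _, h⟩ => ⟨i, h⟩, fun ⟨i, h⟩ => ⟨i, i.2, h⟩⟩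

lemma Ir_succ (r : ℕ) (hr : r < n + 1) :
    Ir K n (r+1) = Ir K n r ⊔ Ideal.span {XX K n ⟨r, hr⟩} := by
  unfold Ir
  rw [← Ideal.span_union]
  congr 1
  ext p
  simp only [Set.mem_image, Set.mem_setOf_eq, Set.mem_union, Set.mem_singleton_iff]
  constructor
  · rintro ⟨i, hi, rfl⟩
    rcases Nat.lt_succ_iff_lt_or_eq.1 hi with h | h
    · exact Or.inl ⟨i, h, rfl⟩
    · right
      congr 1
      exact Fin.ext h
  · rintro (⟨i, hi, rfl⟩ | rfl)
    · exact ⟨i, by omega, rfl⟩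
    · exact ⟨_, by simp, rfl⟩

lemma Ir_regular (r : ℕ) (hr : r < n + 1) (p : PolyS K n) (h : XX K n ⟨r, hr⟩ * p ∈ Ir K n r) :
    p ∈ Ir K n r := by
  unfold Ir at *
  rw [MvPolynomial.mem_ideal_span_X_image] at *
  intro m hm
  obtain ⟨i, hi, hi'⟩ := h (Finsupp.single ⟨r, hr⟩ 1 + m) (by
    rw [MvPolynomial.mem_support_iff, MvPolynomial.coeff_X_mul]
    exact MvPolynomial.mem_support_iff.1 hm)
  refine ⟨i, hi, ?_⟩
  have : (⟨r, hr⟩ : Fin (n+1)) ≠ i := by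
    rintro rfl
    simp at hi
  simpa [Finsupp.single_apply, this] using hi'

abbrev Zq (K : Type) [Field K] (n r : ℕ) : Type := PolyS K n ⧸ Ir K n r

lemma Zq_reg (r : ℕ) (hr : r < n + 1) (b : Zq K n r) (h : XX K n ⟨r, hr⟩ • b = 0) : b = 0 := by
  obtain ⟨p, rfl⟩ := Submodule.Quotient.mk_surjective _ b
  rw [← Submodule.Quotient.mk_smul, Submodule.Quotient.mk_eq_zero] at h
  rw [Submodule.Quotient.mk_eq_zero]
  exact Ir_regular r hr p h

/-- projection -/
def Zpr (K : Type) [Field K] (n r : ℕ) (hr : r < n + 1) : Zq K n r →ₗ[PolyS K n] Zq K n (r+1) :=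
  Submodule.mapQ _ _ LinearMap.id (by
    rw [Submodule.comap_id, Ir_succ r hr]; exact le_sup_left)

lemma Zpr_surj (r : ℕ) (hr : r < n + 1) : Function.Surjective (Zpr K n r hr) := by
  intro b
  obtain ⟨p, rfl⟩ := Submodule.Quotient.mk_surjective _ b
  exact ⟨Submodule.Quotient.mk p, rfl⟩

lemma Zpr_ker (r : ℕ) (hr : r < n + 1) (b : Zq K n r) :
    Zpr K n r hr b = 0 ↔ ∃ b', XX K n ⟨r, hr⟩ • b' = b := by
  obtain ⟨p, rfl⟩ := Submodule.Quotient.mk_surjective _ b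
  have : Zpr K n r hr (Submodule.Quotient.mk p) = Submodule.Quotient.mk p := rfl
  rw [this, Submodule.Quotient.mk_eq_zero, Ir_succ r hr]
  constructor
  · intro h
    obtain ⟨y, hy, z, hz, rfl⟩ := Submodule.mem_sup.1 h
    obtain ⟨w, rfl⟩ := Ideal.mem_span_singleton'.1 hz
    refine ⟨Submodule.Quotient.mk w, ?_⟩
    rw [← Submodule.Quotient.mk_smul, Submodule.Quotient.eq, smul_eq_mul]
    have : XX K n ⟨r, hr⟩ * w - (y + w * XX K n ⟨r, hr⟩) = -y := by ring
    rw [this]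
    exact neg_mem hy
  · rintro ⟨b', hb'⟩
    obtain ⟨w, rfl⟩ := Submodule.Quotient.mk_surjective _ b'
    rw [← Submodule.Quotient.mk_smul, Submodule.Quotient.eq, smul_eq_mul] at hb'
    have h2 : XX K n ⟨r, hr⟩ * w ∈ Ideal.span {XX K n ⟨r, hr⟩} :=
      Ideal.mul_mem_right _ _ (Ideal.subset_span rfl)
    have := Submodule.sub_mem _ (Submodule.mem_sup_right (S := Ir K n r) h2)
      (Submodule.mem_sup_left hb')
    simpa using this

variable {Z : Type} [AddCommGroup Z] [Module (PolyS K n) Z]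

lemma rees_Zq (hZ : Tor (XX K n) Z) : ∀ (d r : ℕ), r + d = n + 1 → ∀ j, j + r ≤ n →
    EV (PolyS K n) Z (Zq K n r) j := by
  intro d
  induction d with
  | zero => intro r h j hj; omega
  | succ d ih =>
    intro r h j hj
    have hr : r < n + 1 := by omega
    obtain ⟨c, hc⟩ := hZ ⟨r, hr⟩
    exact EV.rees (Zq_reg r hr) (Zpr_ker r hr) (Zpr_surj r hr) hc
      (fun i hi => ih (r+1) (by omega) i (by omega))

/-- `S ≃ S/0` -/
def Zq0 (K : Type) [Field K] (n : ℕ) : Zq K n 0 ≃ₗ[PolyS K n] PolyS K n :=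
  Submodule.quotEquivOfEqBot _ Ir_zero

lemma depthAt : DepthAt (XX K n) n := by
  intro Z _ _ hZ j hj
  exact EV.ccongr (Zq0 K n).symm (rees_Zq hZ (n+1) 0 (by omega) j (by omega))

lemma EV_free (hZ : Tor (XX K n) Z) {F : Type} [AddCommGroup F] [Module (PolyS K n) F]
    [Module.Free (PolyS K n) F] [Module.Finite (PolyS K n) F] {j : ℕ} (hj : j ≤ n) :
    EV (PolyS K n) Z F j := by
  let b := Module.Free.chooseBasis (PolyS K n) F
  refine EV.csum Finset.univ (fun i => b.coord i)
    (fun i => LinearMap.toSpanSingleton (PolyS K n) F (b i)) ?_ (depthAt Z hZ j hj)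
  ext y
  simp [b.sum_repr]

lemma top_Zq (hZ : Tor (XX K n) Z) (h : EV (PolyS K n) Z (PolyS K n) (n+1)) :
    EV (PolyS K n) Z (Zq K n (n+1)) 0 := by
  have : ∀ r ≤ n + 1, EV (PolyS K n) Z (Zq K n r) (n + 1 - r) := by
    intro r
    induction r with
    | zero => intro _; exact EV.ccongr (Zq0 K n) h
    | succ r ih =>
      intro hr
      have hr : r < n + 1 := by omega
      have h1 := ih (by omega)
      rw [show n + 1 - r = (n + 1 - (r+1)) + 1 by omega] at h1
      refine EV.cright (f := XX K n ⟨r, hr⟩ • LinearMap.id) (g := Zpr K n r hr) ?_ ?_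
        (Zpr_surj r hr) ?_ h1
      · exact (injective_iff_map_eq_zero _).2 fun b hb => Zq_reg r hr b (by simpa using hb)
      · intro b
        rw [Zpr_ker]; simp
      · exact rees_Zq hZ (n + 1 - r) r (by omega) _ (by omega)
  simpa using this (n+1) le_rfl

lemma irrel_maximal : (irrel K n).IsMaximal := by
  have : irrel K n = RingHom.ker (MvPolynomial.constantCoeff (R := K) (σ := Fin (n+1))) := by
    ext p
    rw [RingHom.mem_ker, ← Ir_top, Ir, MvPolynomial.mem_ideal_span_X_image,
      MvPolynomial.constantCoeff_eq]
    constructor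
    · intro h
      by_contra h0
      obtain ⟨i, -, hi⟩ := h 0 (MvPolynomial.mem_support_iff.2 h0)
      simp at hi
    · intro h m hm
      by_contra! hcon
      have : m = 0 := by
        ext i
        exact hcon i i.2
      rw [this, MvPolynomial.mem_support_iff] at hm
      exact hm h
  rw [this]
  exact RingHom.ker_isMaximal_of_surjective _ (fun a => ⟨MvPolynomial.C a, by simp⟩)

omit [Module (PolyS K n) Z] in
/-- nonzero torsion modules map onto the residue field -/
lemma exists_map_residue [Module (PolyS K n) Z] (hZ : Tor (XX K n) Z) [Nontrivial Z] :
    ∃ f : Z →ₗ[PolyS K n] PolyS K n ⧸ irrel K n, f ≠ 0 := by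
  have key : ∀ r ≤ n + 1, ∃ U : Submodule (PolyS K n) Z, U ≠ ⊤ ∧
      ∀ i : Fin (n+1), i.val < r → ∀ z : Z, XX K n i • z ∈ U := by
    intro r
    induction r with
    | zero => intro _; exact ⟨⊥, bot_ne_top, fun i hi => absurd hi (by omega)⟩
    | succ r ih =>
      intro hr
      have hr : r < n + 1 := by omega
      obtain ⟨U, hU, hU'⟩ := ih (by omega)
      set x := XX K n ⟨r, hr⟩ with hx
      obtain ⟨c, hc⟩ := hZ ⟨r, hr⟩
      refine ⟨U ⊔ LinearMap.range (x • (LinearMap.id : Z →ₗ[PolyS K n] Z)), ?_, ?_⟩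
      · intro htop
        apply hU
        have : ∀ d : ℕ, ∀ z : Z, ∃ w : Z, z - x ^ d • w ∈ U := by
          intro d
          induction d with
          | zero => intro z; exact ⟨z, by simp⟩
          | succ d ihd =>
            intro z
            obtain ⟨w, hw⟩ := ihd z
            obtain ⟨y, hy, z', ⟨w', rfl⟩, hyz⟩ :=
              Submodule.mem_sup.1 (htop ▸ Submodule.mem_top (x := w) :)
            refine ⟨w', ?_⟩
            rw [← hyz] at hw
            have e : z - x ^ (d+1) • w' =
              (z - x ^ d • (y + (x • (LinearMap.id : Z →ₗ[PolyS K n] Z)) w')) + x ^ d • y := by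
              simp only [LinearMap.smul_apply, LinearMap.id_apply, smul_add, pow_succ, mul_smul]
              abel
            rw [e]
            exact add_mem hw (U.smul_mem _ hy)
        rw [eq_top_iff]
        intro z _
        obtain ⟨w, hw⟩ := this c z
        rwa [hc, sub_zero] at hw
      · intro i hi z
        rcases Nat.lt_succ_iff_lt_or_eq.1 hi with h | h
        · exact Submodule.mem_sup_left (hU' i h z)
        · refine Submodule.mem_sup_right ⟨z, ?_⟩
          have : i = ⟨r, hr⟩ := Fin.ext h
          simp [hx, this]
  obtain ⟨U, hU, hU'⟩ := key (n+1) le_rfl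
  have := irrel_maximal (K := K) (n := n)
  letI := Ideal.Quotient.field (irrel K n)
  have htor : Module.IsTorsionBySet (PolyS K n) (Z ⧸ U) (irrel K n : Set (PolyS K n)) := by
    have : irrel K n ≤ Module.annihilator (PolyS K n) (Z ⧸ U) := by
      rw [irrel, Ideal.span_le]
      rintro _ ⟨i, rfl⟩
      rw [SetLike.mem_coe, Module.mem_annihilator]
      intro z
      obtain ⟨y, rfl⟩ := Submodule.Quotient.mk_surjective _ z
      rw [← Submodule.Quotient.mk_smul, Submodule.Quotient.mk_eq_zero]
      exact hU' i i.2 y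
    intro z r
    exact Module.mem_annihilator.1 (this r.2) z
  letI : Module (PolyS K n ⧸ irrel K n) (Z ⧸ U) := htor.module
  have : Nontrivial (Z ⧸ U) := Submodule.Quotient.nontrivial_iff.2 hU
  obtain ⟨z, hz⟩ := exists_ne (0 : Z ⧸ U)
  have h1 := (Module.forall_dual_apply_eq_zero_iff (PolyS K n ⧸ irrel K n) z).not.2 hz
  push Not at h1
  obtain ⟨f, hf⟩ := h1
  obtain ⟨y, rfl⟩ := Submodule.Quotient.mk_surjective _ z
  refine ⟨{ toFun := fun w => f (Submodule.Quotient.mk w)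
            map_add' := fun a b => by rw [Submodule.Quotient.mk_add, map_add]
            map_smul' := fun r a => by
              rw [Submodule.Quotient.mk_smul, ← htor.mk_smul, map_smul]; rfl }, ?_⟩
  intro h
  exact hf (congrArg (fun g => g y) h)

lemma EV_top_ne (hZ : Tor (XX K n) Z) (h : EV (PolyS K n) Z (PolyS K n) (n+1)) :
    Subsingleton Z := by
  by_contra hc
  rw [not_subsingleton_iff_nontrivial] at hc
  obtain ⟨f, hf⟩ := exists_map_residue hZ
  exact hf (EV_zero_iff.1
    (EV.ccongr (Submodule.quotEquivOfEq _ _ (Ir_top (K := K) (n := n)).symm) (top_Zq hZ h)) f)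

lemma exists_socle (hZ : Tor (XX K n) Z) [Nontrivial Z] :
    ∃ z : Z, z ≠ 0 ∧ ∀ i, XX K n i • z = 0 := by
  have key : ∀ r ≤ n + 1, ∃ z : Z, z ≠ 0 ∧ ∀ i : Fin (n+1), i.val < r → XX K n i • z = 0 := by
    intro r
    induction r with
    | zero =>
      intro _
      obtain ⟨z, hz⟩ := exists_ne (0 : Z)
      exact ⟨z, hz, fun i hi => absurd hi (by omega)⟩
    | succ r ih =>
      intro hr
      have hr : r < n + 1 := by omega
      obtain ⟨z, hz, hz'⟩ := ih (by omega)
      obtain ⟨c, hc⟩ := hZ ⟨r, hr⟩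
      classical
      have hex : ∃ c : ℕ, XX K n ⟨r, hr⟩ ^ c • z = 0 := ⟨c, hc z⟩
      have h0 : Nat.find hex ≠ 0 := by
        intro h
        have := Nat.find_spec hex
        rw [h, pow_zero, one_smul] at this
        exact hz this
      refine ⟨XX K n ⟨r, hr⟩ ^ (Nat.find hex - 1) • z, Nat.find_min hex (by omega), ?_⟩
      intro i hi
      rcases Nat.lt_succ_iff_lt_or_eq.1 hi with h | h
      · rw [smul_comm, hz' i h, smul_zero]
      · have : i = ⟨r, hr⟩ := Fin.ext h
        have h2 := Nat.find_spec hex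
        rw [this, ← mul_smul, ← pow_succ', show Nat.find hex - 1 + 1 = Nat.find hex by omega]
        exact h2
  obtain ⟨z, hz, h⟩ := key (n+1) le_rfl
  exact ⟨z, hz, fun i => h i i.2⟩

lemma exists_hom_ne {M N : Type} [AddCommGroup M] [Module (PolyS K n) M] [AddCommGroup N]
    [Module (PolyS K n) N] (hM : Tor (XX K n) M) (hN : Tor (XX K n) N) [Nontrivial M]
    [Nontrivial N] : ¬ EV (PolyS K n) M N 0 := by
  rw [EV_zero_iff]
  intro h
  obtain ⟨f, hf⟩ := exists_map_residue hM
  obtain ⟨z, hz, hz'⟩ := exists_socle hN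
  have hle : irrel K n ≤ LinearMap.ker (LinearMap.toSpanSingleton (PolyS K n) N z) := by
    rw [irrel, Ideal.span_le]
    rintro _ ⟨i, rfl⟩
    simpa using hz' i
  let g : (PolyS K n ⧸ irrel K n) →ₗ[PolyS K n] N := Submodule.liftQ _ _ hle
  apply hf
  ext w
  by_contra hw
  have := irrel_maximal (K := K) (n := n)
  letI := Ideal.Quotient.field (irrel K n)
  obtain ⟨p, hp⟩ := Ideal.Quotient.mk_surjective ((f w)⁻¹)
  have h1 : f (p • w) = 1 := by
    rw [map_smul, Algebra.smul_def]
    change Ideal.Quotient.mk _ p * _ = 1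
    rw [hp]
    exact inv_mul_cancel₀ hw
  have h2 : g (f (p • w)) = 0 := congrArg (fun q => q (p • w)) (h (g.comp f))
  rw [h1] at h2
  have h3 : g 1 = z := by
    change LinearMap.toSpanSingleton (PolyS K n) N z 1 = z
    simp
  exact hz (h3 ▸ h2)

lemma EV_Zq_high {N : Type} [AddCommGroup N] [Module (PolyS K n) N] :
    ∀ r ≤ n + 1, ∀ j, r + 1 ≤ j → EV (PolyS K n) (Zq K n r) N j := by
  intro r
  induction r with
  | zero =>
    intro _ j hj
    have : Module.Projective (PolyS K n) (Zq K n 0) := Module.Projective.of_equiv (Zq0 K n).symm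
    exact EV.proj j hj
  | succ r ih =>
    intro hr j hj
    have hr : r < n + 1 := by omega
    obtain ⟨j, rfl⟩ : ∃ i, j = i + 1 := ⟨j - 1, by omega⟩
    refine EV.right (f := XX K n ⟨r, hr⟩ • LinearMap.id) (g := Zpr K n r hr) ?_ ?_
        (Zpr_surj r hr) (ih (by omega) j (by omega)) (ih (by omega) (j+1) (by omega))
    · exact (injective_iff_map_eq_zero _).2 fun b hb => Zq_reg r hr b (by simpa using hb)
    · intro b
      rw [Zpr_ker]; simp

lemma EV_high {N : Type} [AddCommGroup N] [Module (PolyS K n) N] [Module.Finite (PolyS K n) Z]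
    (hZ : Tor (XX K n) Z) {j : ℕ} (hj : n + 2 ≤ j) : EV (PolyS K n) Z N j := by
  revert hZ
  refine IsNoetherianRing.induction_on_isQuotientEquivQuotientPrime (PolyS K n)
    (M := Z) inferInstance
    (motive := fun Z _ _ _ => Tor (XX K n) Z → EV (PolyS K n) Z N j) ?_ ?_ ?_
  · intro Z _ _ _ _ _
    have : Module.Projective (PolyS K n) Z := Module.Projective.of_free
    exact EV.proj j (by omega)
  · intro Z _ _ _ p e hZ
    have hle : irrel K n ≤ p.1 := by
      rw [irrel, Ideal.span_le]
      rintro _ ⟨i, rfl⟩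
      obtain ⟨c, hc⟩ := hZ i
      have h1 : XX K n i ^ c • (1 : PolyS K n ⧸ p.1) = 0 := by
        rw [← e.apply_symm_apply 1, ← map_smul, hc, map_zero]
      have h2 : (Ideal.Quotient.mk p.1) (XX K n i ^ c) = 0 := by
        rw [← h1, Algebra.smul_def, mul_one]; rfl
      exact p.2.mem_of_pow_mem _ (Ideal.Quotient.eq_zero_iff_mem.1 h2)
    have heq : Ir K n (n+1) = p.1 := by
      rw [Ir_top]
      exact irrel_maximal.eq_of_le p.2.ne_top hle
    exact EV.congr (e.trans (Submodule.quotEquivOfEq _ _ heq.symm))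
      (EV_Zq_high (n+1) le_rfl j hj)
  · intro N1 _ _ _ N2 _ _ _ N3 _ _ _ f g hf hg hfg h1 h3 hZ
    refine EV.mid hf hfg hg (h1 fun i => ?_) (h3 fun i => ?_)
    · obtain ⟨c, hc⟩ := hZ i
      exact ⟨c, fun z => hf (by rw [map_smul, hc, map_zero])⟩
    · obtain ⟨c, hc⟩ := hZ i
      refine ⟨c, fun z => ?_⟩
      obtain ⟨w, rfl⟩ := hg z
      rw [← map_smul, hc, map_zero]

end
end HSplit

/-! ### Part 4 -/

namespace HSplit

section
variable {K : Type} [Field K] {n : ℕ}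

/-- `x_i ↦ x_i + t` -/
def phi (i : Fin (n+1)) : PolyS K n →+* Polynomial (PolyS K n) :=
  MvPolynomial.eval₂Hom (Polynomial.C.comp MvPolynomial.C)
    (fun j => if j = i then Polynomial.C (XX K n j) + Polynomial.X else Polynomial.C (XX K n j))

lemma phi_eval (i : Fin (n+1)) (s : PolyS K n) : (phi i s).eval 0 = s := by
  have : ((Polynomial.evalRingHom (0 : PolyS K n)).comp (phi i)) = RingHom.id _ := by
    apply MvPolynomial.ringHom_ext
    · intro r; simp [phi]
    · intro j
      by_cases h : j = i
      · simp [phi, h]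
      · simp [phi, h]
  exact congrArg (fun f => f s) this

lemma phi_same (i : Fin (n+1)) : phi i (XX K n i) = Polynomial.C (XX K n i) + Polynomial.X := by
  simp [phi]

lemma phi_ne {i j : Fin (n+1)} (h : j ≠ i) : phi i (XX K n j) = Polynomial.C (XX K n j) := by
  simp [phi, h]

variable {V : Type} [AddCommGroup V] [Module (PolyS K n) V]

/-- the generic translate of `V` in direction `i` -/
def Shf (K : Type) [Field K] {n : ℕ} (_ : Fin (n+1)) (V : Type) [AddCommGroup V] [Module (PolyS K n) V] : Type :=
  PolynomialModule (PolyS K n) V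

variable (i : Fin (n+1))

instance : AddCommGroup (Shf K i V) := inferInstanceAs (AddCommGroup (PolynomialModule (PolyS K n) V))
instance shfPoly : Module (Polynomial (PolyS K n)) (Shf K i V) :=
  inferInstanceAs (Module (Polynomial (PolyS K n)) (PolynomialModule (PolyS K n) V))
instance shfMod : Module (PolyS K n) (Shf K i V) := Module.compHom _ (phi (K := K) i)

lemma shf_smul (s : PolyS K n) (v : Shf K i V) : s • v = phi i s • v := rfl

/-- the action of a polynomial in `t` -/
def shfEnd (p : Polynomial (PolyS K n)) : Shf K i V →ₗ[PolyS K n] Shf K i V where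
  toFun v := p • v
  map_add' := smul_add p
  map_smul' s v := by simp only [shf_smul, RingHom.id_apply]; rw [smul_comm]

/-- evaluation at `t = 0` -/
def shfEval : Shf K i V →ₗ[PolyS K n] V where
  toFun v := PolynomialModule.eval (0 : PolyS K n) (show PolynomialModule (PolyS K n) V from v)
  map_add' a b := map_add _ _ _
  map_smul' s v := by
    refine (PolynomialModule.eval_smul (phi i s) _ 0).trans ?_
    rw [phi_eval]; rfl

lemma shfEval_surj : Function.Surjective (shfEval (K := K) i (V := V)) := by
  intro v
  refine ⟨PolynomialModule.single _ 0 v, ?_⟩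
  refine (PolynomialModule.eval_single _ 0 v).trans ?_
  simp

lemma X_smul_coeff (v : PolynomialModule (PolyS K n) V) (m : ℕ) :
    ((Polynomial.X : Polynomial (PolyS K n)) • v).coeff (m+1) = v.coeff m := by
  rw [← Polynomial.monomial_one_one_eq_X, PolynomialModule.monomial_smul_apply]
  simp

lemma X_smul_coeff0 (v : PolynomialModule (PolyS K n) V) :
    ((Polynomial.X : Polynomial (PolyS K n)) • v).coeff 0 = 0 := by
  rw [← Polynomial.monomial_one_one_eq_X, PolynomialModule.monomial_smul_apply]
  simp

lemma shf_t_inj : Function.Injective (shfEnd i Polynomial.X : Shf K i V →ₗ[PolyS K n] Shf K i V) := by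
  rw [injective_iff_map_eq_zero]
  intro v hv
  apply PolynomialModule.ext
  ext m
  have h := X_smul_coeff (V := V) v m
  rw [← h]
  exact congrArg (fun w : PolynomialModule (PolyS K n) V => w.coeff (m+1)) hv

lemma shfEval_apply (v : PolynomialModule (PolyS K n) V) :
    shfEval (K := K) i (V := V) v = v.coeff 0 := by
  induction v using PolynomialModule.induction_linear with
  | zero => exact (map_zero (shfEval (K := K) i (V := V)))
  | add x y hx hy => 
    refine (map_add (shfEval (K := K) i (V := V)) x y).trans ?_
    exact congrArg₂ (· + ·) hx hy
  | single m a =>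
    refine (PolynomialModule.eval_single _ m a).trans ?_
    cases m <;> simp

lemma shf_exact : Function.Exact (shfEnd i Polynomial.X : Shf K i V →ₗ[PolyS K n] Shf K i V)
    (shfEval (K := K) i (V := V)) := by
  intro v
  constructor
  · intro h
    refine ⟨PolynomialModule.ofCoeff _ (Finsupp.comapDomain Nat.succ v.coeff
      (Nat.succ_injective.injOn)), ?_⟩
    apply PolynomialModule.ext
    ext m
    cases m with
    | zero =>
      refine (X_smul_coeff0 _).trans ?_
      exact ((shfEval_apply i v).symm.trans h).symm
    | succ m =>
      refine (X_smul_coeff _ _).trans ?_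
      simp
  · rintro ⟨w, rfl⟩
    exact (shfEval_apply i _).trans (X_smul_coeff0 w)

lemma C_smul (s : PolyS K n) (hs : ∀ v : V, s • v = 0) (v : Shf K i V) :
    (Polynomial.C s : Polynomial (PolyS K n)) • v = 0 := by
  apply PolynomialModule.ext
  ext m
  change ((Polynomial.C s : Polynomial (PolyS K n)) •
    (show PolynomialModule (PolyS K n) V from v)).coeff m = 0
  rw [← Polynomial.monomial_zero_left, PolynomialModule.monomial_smul_apply]
  simp [hs]

lemma shf_nil {j : Fin (n+1)} (hj : j ≠ i) {c : ℕ} (hc : ∀ v : V, XX K n j ^ c • v = 0)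
    (v : Shf K i V) : XX K n j ^ c • v = 0 := by
  rw [shf_smul, map_pow, phi_ne hj, ← Polynomial.C_pow]
  exact C_smul i _ hc v

lemma shfEnd_pow (p : Polynomial (PolyS K n)) (d : ℕ) :
    (shfEnd i p : Shf K i V →ₗ[PolyS K n] Shf K i V) ^ d = shfEnd i (p ^ d) := by
  induction d with
  | zero => ext v; simp [shfEnd]
  | succ d ih => 
    ext v
    rw [pow_succ, Module.End.mul_apply, ih]
    simp [shfEnd, pow_succ, mul_smul]

lemma shf_t_nil {N : Type} [AddCommGroup N] [Module (PolyS K n) N] {c a : ℕ}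
    (hc : ∀ v : V, XX K n i ^ c • v = 0) (ha : ∀ v : N, XX K n i ^ a • v = 0) {p : ℕ}
    (x : EX (PolyS K n) (Shf K i V) N p) :
    pre ((shfEnd i Polynomial.X : Shf K i V →ₗ[PolyS K n] Shf K i V) ^ (c * a)) x = 0 := by
  set f := phi i (XX K n i) with hf
  obtain ⟨q, hq⟩ : f ∣ (Polynomial.X) ^ c - (Polynomial.X - f) ^ c := by
    have := sub_dvd_pow_sub_pow (Polynomial.X : Polynomial (PolyS K n)) (Polynomial.X - f) c
    rwa [sub_sub_cancel] at this
  have hz : ∀ v : Shf K i V, ((Polynomial.X - f) ^ c : Polynomial (PolyS K n)) • v = 0 := by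
    intro v
    have : Polynomial.X - f = - Polynomial.C (XX K n i) := by rw [hf, phi_same]; ring
    have h2 : ((Polynomial.X - f) ^ c : Polynomial (PolyS K n)) = (-1) ^ c * Polynomial.C (XX K n i ^ c) := by
      rw [this, Polynomial.C_pow]; exact neg_pow (Polynomial.C (XX K n i) : Polynomial (PolyS K n)) c
    exact (congrArg (· • v) h2).trans ((mul_smul _ _ v).trans ((congrArg _ (C_smul i _ hc v)).trans (smul_zero _)))
  have e1 : (shfEnd i (Polynomial.X ^ c) : Shf K i V →ₗ[PolyS K n] Shf K i V) = shfEnd i (f * q) := by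
    ext v
    have : Polynomial.X ^ c = f * q + (Polynomial.X - f) ^ c := by rw [← hq]; ring
    have h3 : ((Polynomial.X ^ c : Polynomial (PolyS K n))) • v = (f * q) • v := by
      rw [this, add_smul, hz, add_zero]
    exact h3
  have e2 : (shfEnd i Polynomial.X : Shf K i V →ₗ[PolyS K n] Shf K i V) ^ (c * a) =
      XX K n i ^ a • shfEnd i (q ^ a) := by
    rw [pow_mul, shfEnd_pow, e1, shfEnd_pow, mul_pow]
    ext v
    rw [LinearMap.smul_apply, shf_smul, map_pow, ← hf]
    exact mul_smul (f ^ a) (q ^ a) v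
  rw [e2, pre_smul]
  exact smul_zero_of_right ha _

lemma rigid_aux {N : Type} [AddCommGroup N] [Module (PolyS K n) N] (hN : Tor (XX K n) N) :
    ∀ (d s : ℕ), s + d = n + 1 → ∀ (V : Type) [AddCommGroup V] [Module (PolyS K n) V],
    (∀ j : Fin (n+1), s ≤ j.val → ∃ c : ℕ, ∀ v : V, XX K n j ^ c • v = 0) →
    ¬ EV (PolyS K n) V N 0 → ∀ p ≤ d, ¬ EV (PolyS K n) V N p := by
  intro d
  induction d with
  | zero => intro s _ V _ _ _ h p hp; rwa [Nat.le_zero.1 hp]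
  | succ d ih =>
    intro s hs V _ _ hV h p hp
    cases p with
    | zero => exact h
    | succ p =>
      intro hcon
      let i : Fin (n+1) := ⟨s, by omega⟩
      refine ih (s+1) (by omega) (Shf K i V) ?_ ?_ p (by omega) ?_
      · intro j hj
        obtain ⟨c, hc⟩ := hV j (by omega)
        exact ⟨c, shf_nil i (by rintro rfl; simp [i] at hj) hc⟩
      · intro h0
        exact h (EV.right0 (shfEval_surj i) h0)
      · obtain ⟨c, hc⟩ := hV i le_rfl
        obtain ⟨a, ha⟩ := hN i
        exact pre_surj_pow_zero
          (fun x => con1 (shf_t_inj i) (shf_exact i) (shfEval_surj i) hcon x) (c * a)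
          (shf_t_nil i hc ha)

lemma rigidity {M N : Type} [AddCommGroup M] [Module (PolyS K n) M] [AddCommGroup N]
    [Module (PolyS K n) N] (hM : Tor (XX K n) M) (hN : Tor (XX K n) N) [Nontrivial M]
    [Nontrivial N] {p : ℕ} (hp : p ≤ n + 1) : ¬ EV (PolyS K n) M N p :=
  rigid_aux hN (n+1) 0 (by omega) M (fun j _ => hM j) (exists_hom_ne hM hN) p hp

end
end HSplit

/-! ### Part 5 -/

namespace HSplit

section
variable {R : Type} [CommRing R]

lemma ext_kill (X Y : ModuleCat.{0} R) (r : R) (hr : ∀ x : X, r • x = 0) (i : ℕ)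
    (y : ((_root_.Ext R (ModuleCat.{0} R) (i+1)).obj (Opposite.op X)).obj Y) : r • y = 0 := by
  let P : ProjectiveResolution X := ProjectiveResolution.of X
  have hc : (r • 𝟙 P.complex) ≫ P.π = 0 := by
    apply HomologicalComplex.to_single_hom_ext
    rw [HomologicalComplex.comp_f]
    ext z
    have h1 : ((r • 𝟙 P.complex : P.complex ⟶ P.complex).f 0 ≫ P.π.f 0) = r • P.π.f 0 := by
      refine (Linear.smul_comp _ _ _ r (𝟙 (P.complex.X 0)) (P.π.f 0)).trans ?_
      rw [Category.id_comp]
    rw [h1]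
    exact hr (P.π.f 0 z)
  have h := ProjectiveResolution.liftHomotopyZero (r • 𝟙 P.complex) hc
  have hcomm := h.comm (i+1)
  rw [Homotopy.dNext_succ_chainComplex, Homotopy.prevD_chainComplex] at hcomm
  let C := P.complex.linearYonedaObj R Y
  suffices H : ∀ y : C.homology (i+1), r • y = 0 by
    let e := P.isoExt (R := R) (i+1) Y
    have h1 := H (e.hom y)
    have h2 : e.hom (r • y) = 0 := by rw [map_smul]; exact h1
    have h3 : e.inv (e.hom (r • y)) = 0 := by rw [h2, map_zero]
    have h4 : e.inv (e.hom (r • y)) = r • y := by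
      rw [← ConcreteCategory.comp_apply, Iso.hom_inv_id]; rfl
    exact h4.symm.trans h3
  intro y
  obtain ⟨z, rfl⟩ := (ModuleCat.epi_iff_surjective (C.homologyπ (i+1))).1 inferInstance y
  let w : C.X i := (h.hom i (i+1) ≫ (show P.complex.X (i+1) ⟶ Y from C.iCycles (i+1) z))
  have : r • z = C.toCycles i (i+1) w := by
    apply (ModuleCat.mono_iff_injective (C.iCycles (i+1))).1 inferInstance
    have e1 : C.iCycles (i+1) (C.toCycles i (i+1) w) = C.d i (i+1) w := by
      rw [← ConcreteCategory.comp_apply, HomologicalComplex.toCycles_i]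
    rw [e1, map_smul]
    have e2 : C.d (i+1) (i+1+1) (C.iCycles (i+1) z) = 0 := by
      rw [← ConcreteCategory.comp_apply, HomologicalComplex.iCycles_d]; rfl
    let q : P.complex.X (i+1) ⟶ Y := C.iCycles (i+1) z
    have e3 : P.complex.d (i+1+1) (i+1) ≫ q = 0 := e2
    change r • q = P.complex.d (i+1) i ≫ h.hom i (i+1) ≫ q
    have e4 : (r • 𝟙 P.complex : P.complex ⟶ P.complex).f (i+1) ≫ q = r • q := by simp
    rw [← e4, hcomm]
    simp [e3]
  rw [← map_smul, this, ← ConcreteCategory.comp_apply, HomologicalComplex.toCycles_comp_homologyπ]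
  rfl

lemma lc_kill (J : Ideal R) (i : ℕ) (E : ModuleCat.{0} R)
    (y : (localCohomology J (i+1)).obj E) : ∃ t, ∀ r ∈ J ^ t, r • y = 0 := by
  have := localCohomology.hasColimitDiagram.{0,0} (localCohomology.idealPowersDiagram J) (i+1)
  have hc := Limits.isColimitOfPreserves ((evaluation _ _).obj E)
    (Limits.colimit.isColimit (localCohomology.diagram (localCohomology.idealPowersDiagram J) (i+1)))
  obtain ⟨t, z, hz⟩ := Limits.Concrete.isColimit_exists_rep _ hc y
  refine ⟨Opposite.unop (Opposite.unop t), fun r hr => ?_⟩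
  have := ext_kill _ E r (fun x => ?_) i z
  · rw [← hz]
    refine Eq.trans ?_ ((congrArg _ this).trans (map_zero (ConcreteCategory.hom
        ((((evaluation (ModuleCat R) (ModuleCat R)).obj E).mapCocone
                (Limits.colimit.cocone (localCohomology.diagram (localCohomology.idealPowersDiagram J) (i + 1)))).ι.app
          t))))
    exact (map_smul (ModuleCat.Hom.hom ((((evaluation (ModuleCat R) (ModuleCat R)).obj E).mapCocone
                (Limits.colimit.cocone (localCohomology.diagram (localCohomology.idealPowersDiagram J) (i + 1)))).ι.app
          t)) r z).symm
  · obtain ⟨x, rfl⟩ := Submodule.Quotient.mk_surjective _ x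
    refine (Submodule.Quotient.mk_eq_zero _).2 ?_
    exact Ideal.mul_mem_right _ _ hr

lemma Hstar_tor {K : Type} [Field K] {n : ℕ} (i : ℕ) (E : Type) [AddCommGroup E] [Module (PolyS K n) E]
    [Module.Finite (PolyS K n) (Hstar K n i E)] : Tor (XX K n) (Hstar K n i E) := by
  intro a
  obtain ⟨s, hs⟩ := Module.Finite.fg_top (R := PolyS K n) (M := Hstar K n i E)
  have h : ∀ y : Hstar K n i E, ∃ t, XX K n a ^ t • y = 0 := by
    intro y
    obtain ⟨t, ht⟩ := lc_kill (irrel K n) i (ModuleCat.of (PolyS K n) E) y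
    have hm : XX K n a ∈ irrel K n := Ideal.subset_span ⟨a, rfl⟩
    exact ⟨t, ht _ (Ideal.pow_mem_pow hm t)⟩
  choose t ht using h
  refine ⟨s.sup t, fun z => ?_⟩
  have hz : z ∈ Submodule.span (PolyS K n) (s : Set (Hstar K n i E)) := by rw [hs]; trivial
  induction hz using Submodule.span_induction with
  | mem y hy =>
    obtain ⟨d, hd⟩ := Nat.exists_eq_add_of_le (Finset.le_sup (f := t) hy)
    rw [hd, add_comm (t y) d, pow_add, mul_smul, ht, smul_zero]
  | zero => exact smul_zero _
  | add x y _ _ hx hy => rw [smul_add, hx, hy, add_zero]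
  | smul c y _ hy => rw [smul_comm, hy, smul_zero]

end
end HSplit

/-! ### Part 6 -/

namespace HSplit

section
variable {K : Type} [Field K] {n : ℕ} {N : Type} [AddCommGroup N] [Module (PolyS K n) N]

/-- the syzygy module -/
abbrev Q (res : MinimalResolution K n N) (j : ℕ) : Type := ↥(LinearMap.range (res.d j))

variable (res : MinimalResolution K n N)

instance resFree (j : ℕ) : Module.Free (PolyS K n) (res.L j) := res.free j
instance resFinite (j : ℕ) : Module.Finite (PolyS K n) (res.L j) := res.finite j

/-- the inclusion -/
def qi (j : ℕ) : Q res j →ₗ[PolyS K n] res.L j := (LinearMap.range (res.d j)).subtype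
/-- the projection -/
def qp (j : ℕ) : res.L (j+1) →ₗ[PolyS K n] Q res j := (res.d j).rangeRestrict

lemma qi_inj (j : ℕ) : Function.Injective (qi res j) := Submodule.subtype_injective _
lemma qp_surj (j : ℕ) : Function.Surjective (qp res j) := LinearMap.surjective_rangeRestrict _
lemma q_exact (j : ℕ) : Function.Exact (qi res (j+1)) (qp res j) := by
  rw [LinearMap.exact_iff]
  rw [qp, LinearMap.ker_rangeRestrict, qi, Submodule.range_subtype, res.exact]
lemma q_exact0 : Function.Exact (qi res 0) res.aug := by
  rw [LinearMap.exact_iff, qi, Submodule.range_subtype, res.exact0]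

lemma res_finite (res : MinimalResolution K n N) : Module.Finite (PolyS K n) N :=
  Module.Finite.of_surjective res.aug res.aug_surjective

variable {T : Type} [AddCommGroup T] [Module (PolyS K n) T]

lemma shift_up (j : ℕ) : ∀ i, EV (PolyS K n) (Q res j) T (i+1) → EV (PolyS K n) N T (i+j+2) := by
  induction j with
  | zero => intro i h
            exact EV.right (qi_inj res 0) (q_exact0 res) res.aug_surjective h (EV.proj _ (by omega))
  | succ j ih => 
    intro i h
    have := ih (i+1) (EV.right (qi_inj res (j+1)) (q_exact res j) (qp_surj res j) h (EV.proj _ (by omega)))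
    rwa [show i + (j+1) + 2 = i + 1 + j + 2 by omega]

lemma shift_down (j : ℕ) : ∀ i, EV (PolyS K n) N T (i+j+2) → EV (PolyS K n) (Q res j) T (i+1) := by
  induction j with
  | zero => intro i h
            exact EV.left (qi_inj res 0) (q_exact0 res) res.aug_surjective (EV.proj _ (by omega)) h
  | succ j ih => 
    intro i h
    refine EV.left (qi_inj res (j+1)) (q_exact res j) (qp_surj res j) (EV.proj _ (by omega)) (ih (i+1) ?_)
    rwa [show i + 1 + j + 2 = i + (j+1) + 2 by omega]

lemma EV_N (hN : Tor (XX K n) N) (res : MinimalResolution K n N) {j : ℕ} (hj : j ≠ n + 1) :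
    EV (PolyS K n) N (PolyS K n) j := by
  have := res_finite res
  rcases Nat.lt_or_ge j (n+1) with h | h
  · exact depthAt N hN j (by omega)
  · exact EV_high hN (by omega)

lemma EV_Q (hN : Tor (XX K n) N) {i j : ℕ} (hj : i + j + 1 ≠ n + 1) (hi : 1 ≤ i) :
    EV (PolyS K n) (Q res j) (PolyS K n) i := by
  obtain ⟨i, rfl⟩ : ∃ a, i = a + 1 := ⟨i - 1, by omega⟩
  exact shift_down res j i (EV_N hN res (by omega))

lemma split_f (f : PolyS K n) (hf : ∀ z : N, f • z = 0) (j : ℕ) :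
    ∃ s : res.L j →ₗ[PolyS K n] Q res j, ∀ q : Q res j, s (qi res j q) = f • q := by
  induction j with
  | zero =>
    refine ⟨LinearMap.codRestrict _ (f • LinearMap.id) ?_, ?_⟩
    · intro c
      rw [res.exact0, LinearMap.mem_ker]
      simp [hf]
    · intro q
      ext
      rfl
  | succ j ih =>
    obtain ⟨s, hs⟩ := ih
    obtain ⟨t, ht⟩ := Module.projective_lifting_property (qp res j) s (qp_surj res j)
    have ht' : ∀ l, qp res j (t l) = s l := fun l => congrArg (fun g => g l) ht
    refine ⟨LinearMap.codRestrict _ (f • LinearMap.id - t.comp (res.d j)) ?_, ?_⟩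
    · intro c
      rw [res.exact, LinearMap.mem_ker]
      have h1 : res.d j (t (res.d j c)) = f • res.d j c := by
        have := (ht' (res.d j c)).trans (hs (qp res j c))
        exact congrArg Subtype.val this
      simp [h1]
    · intro q
      have : res.d j (qi res (j+1) q) = 0 := by
        exact (res.exact j).le q.2
      apply Subtype.ext
      change f • qi res (j+1) q - t (res.d j (qi res (j+1) q)) = f • qi res (j+1) q
      rw [this, map_zero, sub_zero]

section X
variable (X : Type) [AddCommGroup X] [Module (PolyS K n) X]

lemma tens_tinj (hN : Tor (XX K n) N) (j : ℕ) : TInj (XX K n) ((qi res j).lTensor X) := by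
  intro a
  obtain ⟨c, hc⟩ := hN a
  obtain ⟨s, hs⟩ := split_f res _ hc j
  refine ⟨c, fun z hz => ?_⟩
  have h1 : s.comp (qi res j) = XX K n a ^ c • LinearMap.id := by ext q; rw [LinearMap.comp_apply, hs]; rfl
  have h2 : (s.lTensor X) ((qi res j).lTensor X z) = XX K n a ^ c • z := by
    rw [← LinearMap.comp_apply, ← LinearMap.lTensor_comp, h1, LinearMap.lTensor_smul]
    simp
  rw [← h2, hz, map_zero]

lemma tens_texact (j : ℕ) : TExact (XX K n) ((qi res (j+1)).lTensor X) ((qp res j).lTensor X) := by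
  have := lTensor_exact X (q_exact res j) (qp_surj res j)
  refine ⟨?_, fun a => ⟨0, fun y hy => ?_⟩⟩
  · exact this.linearMap_comp_eq_zero
  · obtain ⟨z, hz⟩ := (this y).1 hy
    exact ⟨z, by rw [hz]; simp⟩

/-- `Ext` of a tensor product with a free module -/
lemma EV_tens_free {R : Type} [CommRing R] {X L T : Type} [AddCommGroup X] [Module R X]
    [AddCommGroup L] [Module R L] [AddCommGroup T] [Module R T] [Module.Free R L] [Module.Finite R L]
    {j : ℕ} (h : EV R X T j) : EV R (X ⊗[R] L) T j := by
  let b := Module.Free.chooseBasis R L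
  refine EV.of_sum (B := X) Finset.univ
    (fun i => (TensorProduct.rid R X).toLinearMap.comp ((b.coord i).lTensor X))
    (fun i => ((LinearMap.toSpanSingleton R L (b i)).lTensor X).comp
      (TensorProduct.rid R X).symm.toLinearMap) ?_ h
  ext x l
  simp only [TensorProduct.AlgebraTensorModule.curry_apply, LinearMap.restrictScalars_self, curry_apply, LinearMap.coe_sum, Finset.sum_apply, LinearMap.coe_comp,
    Function.comp_apply, LinearMap.lTensor_tmul, LinearEquiv.coe_coe, rid_tmul, map_smul, rid_symm_apply, LinearMap.toSpanSingleton_apply, one_smul, LinearMap.id_coe, id_eq]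
  simp only [← TensorProduct.tmul_smul]
  rw [← TensorProduct.tmul_sum]
  congr 1
  exact b.sum_repr l

variable {X}
lemma descend (hN : Tor (XX K n) N) (p : ℕ) (hX : ∀ a, 1 ≤ a → a ≤ p → EV (PolyS K n) X (PolyS K n) a)
    (hpn : p + 1 ≤ n) : ∀ j, EV (PolyS K n) (X ⊗[PolyS K n] Q res j) (PolyS K n) (p+1) →
      EV (PolyS K n) (X ⊗[PolyS K n] Q res (j+p)) (PolyS K n) 1 := by
  induction p with
  | zero => intro j h; exact h
  | succ p ih =>
    intro j h
    rw [show j + (p+1) = (j+1) + p by omega]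
    refine ih (fun a h1 h2 => hX a h1 (by omega)) (by omega) (j+1) ?_
    exact V2s depthAt (tens_tinj res X hN (j+1)) (tens_texact res X j)
      (LinearMap.lTensor_surjective X (qp_surj res j)) (by omega)
      (EV_tens_free (hX _ (by omega) le_rfl)) h

lemma ext_one_dual (hN : Tor (XX K n) N) (j : ℕ)
    (h : EV (PolyS K n) (X ⊗[PolyS K n] Q res j) (PolyS K n) 1) :
    EV (PolyS K n) (Q res j) (X →ₗ[PolyS K n] PolyS K n) 1 := by
  refine EV.of_extend (qi_inj res (j+1)) (q_exact res j) (qp_surj res j) fun a => ?_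
  let i := (qi res (j+1)).lTensor X
  let φ : X ⊗[PolyS K n] Q res (j+1) →ₗ[PolyS K n] PolyS K n := TensorProduct.lift a.flip
  have hker : LinearMap.ker i ≤ LinearMap.ker φ := by
    intro z hz
    obtain ⟨c, hc⟩ := tens_tinj res X hN (j+1) 0
    have := congrArg φ (hc z hz)
    rw [map_smul, map_zero, smul_eq_mul] at this
    refine (mul_eq_zero.1 this).resolve_left (pow_ne_zero _ (MvPolynomial.X_ne_zero _))
  let ψ : LinearMap.range i →ₗ[PolyS K n] PolyS K n :=
    ((LinearMap.ker i).liftQ φ hker).comp i.quotKerEquivRange.symm.toLinearMap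
  have hψ : ∀ z, ψ (i.rangeRestrict z) = φ z := by
    intro z
    have : i.quotKerEquivRange.symm (i.rangeRestrict z) = Submodule.Quotient.mk z := by
      rw [LinearEquiv.symm_apply_eq]; rfl
    simp only [ψ, LinearMap.comp_apply, LinearEquiv.coe_coe, this]
    rfl
  have hex : Function.Exact (LinearMap.range i).subtype ((qp res j).lTensor X) := by
    have := lTensor_exact X (q_exact res j) (qp_surj res j)
    rw [LinearMap.exact_iff] at this ⊢
    rw [this, Submodule.range_subtype]
  obtain ⟨b, hb⟩ := EV.extend (Submodule.subtype_injective _) hex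
    (LinearMap.lTensor_surjective X (qp_surj res j)) h ψ
  refine ⟨(TensorProduct.curry b).flip, ?_⟩
  refine LinearMap.ext fun q => LinearMap.ext fun x => ?_
  have h2 := congrArg (fun g => g (i.rangeRestrict (x ⊗ₜ q))) hb
  simp only [hψ] at h2
  exact h2
end X

/-- the dual of a syzygy module -/
abbrev Zd (j : ℕ) : Type := Q res j →ₗ[PolyS K n] PolyS K n

/-- dual of the projection -/
def zi (j : ℕ) : Zd res j →ₗ[PolyS K n] (res.L (j+1) →ₗ[PolyS K n] PolyS K n) :=
  LinearMap.lcomp (PolyS K n) (PolyS K n) (qp res j)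
/-- dual of the inclusion -/
def zp (j : ℕ) : (res.L j →ₗ[PolyS K n] PolyS K n) →ₗ[PolyS K n] Zd res j :=
  LinearMap.lcomp (PolyS K n) (PolyS K n) (qi res j)

lemma zi_inj (j : ℕ) : Function.Injective (zi res j) := by
  intro f g h
  refine LinearMap.ext fun q => ?_
  obtain ⟨l, rfl⟩ := qp_surj res j q
  exact congrArg (fun g => g l) h

lemma z_exact (j : ℕ) : Function.Exact (zi res j) (zp res (j+1)) := by
  intro f
  constructor
  · intro h
    have hk : LinearMap.ker (qp res j) ≤ LinearMap.ker f := by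
      intro l hl
      obtain ⟨q, rfl⟩ := (q_exact res j l).1 hl
      exact congrArg (fun g => g q) h
    refine ⟨((LinearMap.ker (qp res j)).liftQ f hk).comp
      ((qp res j).quotKerEquivOfSurjective (qp_surj res j)).symm.toLinearMap, ?_⟩
    refine LinearMap.ext fun l => ?_
    have : ((qp res j).quotKerEquivOfSurjective (qp_surj res j)).symm (qp res j l) =
        Submodule.Quotient.mk l := by
      rw [LinearEquiv.symm_apply_eq]; rfl
    simp only [zi, LinearMap.lcomp_apply, LinearMap.comp_apply, LinearEquiv.coe_coe, this]
    rfl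
  · rintro ⟨g, rfl⟩
    refine LinearMap.ext fun q => ?_
    have : qp res j (qi res (j+1) q) = 0 := (q_exact res j _).2 ⟨q, rfl⟩
    change g (qp res j (qi res (j+1) q)) = 0
    rw [this, map_zero]

lemma zp_surj (j : ℕ) (h : EV (PolyS K n) (Q res j) (PolyS K n) 1) :
    Function.Surjective (zp res (j+1)) := fun f => by
  obtain ⟨b, hb⟩ := EV.extend (qi_inj res (j+1)) (q_exact res j) (qp_surj res j) h f
  exact ⟨b, hb⟩

variable {M : Type} [AddCommGroup M] [Module (PolyS K n) M]

lemma climb (hM : Tor (XX K n) M) (hN : Tor (XX K n) N) (i : ℕ) : ∀ j p, j + i + 1 ≤ n → p + i ≤ n → 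
    EV (PolyS K n) M (Zd res j) (p + i) → EV (PolyS K n) M (Zd res (j+i)) p := by
  induction i with
  | zero => intro j p _ _ h; exact h
  | succ i ih =>
    intro j p h1 h2 h
    rw [show j + (i+1) = j + 1 + i by omega]
    refine ih (j+1) p (by omega) (by omega) ?_
    exact EV.cright (zi_inj res j) (z_exact res j) (zp_surj res j (EV_Q res hN (by omega) le_rfl))
      (EV_free hM (by omega)) h

lemma high_z (hM : Tor (XX K n) M) (hN : Tor (XX K n) N) (a : ℕ) : ∀ j, n ≤ j → a ≤ n →
    EV (PolyS K n) M (Zd res j) a := by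
  induction a with
  | zero => intro j _ _; exact EV.cleft0 (zi_inj res j) (EV_free hM (by omega))
  | succ a ih =>
    intro j h1 h2
    exact EV.cleft (zi_inj res j) (z_exact res j) (zp_surj res j (EV_Q res hN (by omega) le_rfl))
      (ih (j+1) (by omega) (by omega)) (EV_free hM h2)

theorem case_ge3 (hM : Tor (XX K n) M) (hN : Tor (XX K n) N) [Nontrivial M] [Nontrivial N]
    (resN : MinimalResolution K n N) (resM : MinimalResolution K n M) {k : ℕ} (hk : 3 ≤ k)
    (hkn : 2 * k < n)
    (h : EV (PolyS K n) (Q resN k ⊗[PolyS K n] Q resM (n-k)) (PolyS K n) (k-1)) : False := by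
  obtain ⟨k, rfl⟩ : ∃ a, k = a + 2 := ⟨k - 2, by omega⟩
  obtain ⟨n, rfl⟩ : ∃ b, n = b + k + 4 := ⟨n - k - 4, by omega⟩
  have h1 := descend resM hM k (fun a ha1 ha2 => EV_Q resN hN (by omega) ha1) (by omega) _ h
  have h2 := shift_up resM _ 0 (ext_one_dual resM hM _ h1)
  rw [show 0 + ((n + k + 4) - (k+2) + k) + 2 = (k + 3) + (n + 1) by omega] at h2
  have h3 := climb resN hM hN (n+1) (k+2) (k+3) (by omega) (by omega) h2
  rw [show k + 2 + (n+1) = n + k + 3 by omega] at h3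
  have h4 : EV (PolyS K (n+k+4)) M (LinearMap.range (zp resN (n+k+4))) (k+2) := by
    refine EV.cright (g := (zp resN (n+k+4)).rangeRestrict) (zi_inj resN (n+k+3)) ?_ (LinearMap.surjective_rangeRestrict _)
      (EV_free hM (by omega)) h3
    rw [LinearMap.exact_iff, LinearMap.ker_rangeRestrict]
    exact LinearMap.exact_iff.1 (z_exact resN (n+k+3))
  have h5 : EV (PolyS K (n+k+4)) M (Zd resN (n+k+4) ⧸ LinearMap.range (zp resN (n+k+4))) (k+1) := by
    refine EV.cright (Submodule.subtype_injective _) (LinearMap.exact_subtype_mkQ _)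
      (Submodule.mkQ_surjective _) (high_z resN hM hN _ _ le_rfl (by omega)) h4
  have hT : Tor (XX K (n+k+4)) (Zd resN (n+k+4) ⧸ LinearMap.range (zp resN (n+k+4))) := by
    intro a
    obtain ⟨c, hc⟩ := hN a
    obtain ⟨s, hs⟩ := split_f resN _ hc (n+k+4)
    refine ⟨c, fun z => ?_⟩
    obtain ⟨φ, rfl⟩ := Submodule.Quotient.mk_surjective _ z
    rw [← Submodule.Quotient.mk_smul, Submodule.Quotient.mk_eq_zero]
    refine ⟨φ.comp s, ?_⟩
    refine LinearMap.ext fun q => ?_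
    change φ (s (qi resN _ q)) = _
    rw [hs, map_smul]; rfl
  rcases subsingleton_or_nontrivial (Zd resN (n+k+4) ⧸ LinearMap.range (zp resN (n+k+4))) with hs | hs
  · rw [Submodule.Quotient.subsingleton_iff] at hs
    have h6 : EV (PolyS K (n+k+4)) (Q resN (n+k+3)) (PolyS K (n+k+4)) 1 :=
      EV.of_extend (qi_inj resN (n+k+4)) (q_exact resN (n+k+3)) (qp_surj resN (n+k+3))
        fun a => LinearMap.range_eq_top.1 hs a
    have h7 := shift_up resN _ 0 h6
    rw [show 0 + (n+k+3) + 2 = n + k + 4 + 1 by omega] at h7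
    exact not_subsingleton N (EV_top_ne hN h7)
  · exact rigidity hM hT (by omega) h5
end
end HSplit

/-! ### Part 7 -/

namespace HSplit

section
variable {R : Type} [CommRing R] {M N T : Type} [AddCommGroup M] [Module R M] [AddCommGroup N] [Module R N]
  [AddCommGroup T] [Module R T]

/-- span of the squares -/
def altSub (R : Type) [CommRing R] (M : Type) [AddCommGroup M] [Module R M] : Submodule R (M ⊗[R] M) :=
  Submodule.span R (Set.range fun m : M => m ⊗ₜ[R] m)

/-- span of the commutators -/
def symSub (R : Type) [CommRing R] (M : Type) [AddCommGroup M] [Module R M] : Submodule R (M ⊗[R] M) :=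
  Submodule.span R (Set.range fun p : M × M => p.1 ⊗ₜ[R] p.2 - p.2 ⊗ₜ[R] p.1)

/-- exterior square -/
def A2 (R : Type) [CommRing R] (M : Type) [AddCommGroup M] [Module R M] : Type := (M ⊗[R] M) ⧸ altSub R M
/-- symmetric square -/
def S2 (R : Type) [CommRing R] (M : Type) [AddCommGroup M] [Module R M] : Type := (M ⊗[R] M) ⧸ symSub R M

instance : AddCommGroup (A2 R M) := inferInstanceAs (AddCommGroup ((M ⊗[R] M) ⧸ altSub R M))
instance : Module R (A2 R M) := inferInstanceAs (Module R ((M ⊗[R] M) ⧸ altSub R M))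
instance : AddCommGroup (S2 R M) := inferInstanceAs (AddCommGroup ((M ⊗[R] M) ⧸ symSub R M))
instance : Module R (S2 R M) := inferInstanceAs (Module R ((M ⊗[R] M) ⧸ symSub R M))

/-- projection -/
def pA (R : Type) [CommRing R] (M : Type) [AddCommGroup M] [Module R M] : M ⊗[R] M →ₗ[R] A2 R M := (altSub R M).mkQ
/-- projection -/
def pS (R : Type) [CommRing R] (M : Type) [AddCommGroup M] [Module R M] : M ⊗[R] M →ₗ[R] S2 R M := (symSub R M).mkQ

lemma pA_surj : Function.Surjective (pA R M) := Submodule.mkQ_surjective _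
lemma pS_surj : Function.Surjective (pS R M) := Submodule.mkQ_surjective _

/-- wedge -/
def wd (R : Type) [CommRing R] {M : Type} [AddCommGroup M] [Module R M] (m m' : M) : A2 R M := pA R M (m ⊗ₜ m')
/-- product -/
def sm (R : Type) [CommRing R] {M : Type} [AddCommGroup M] [Module R M] (m m' : M) : S2 R M := pS R M (m ⊗ₜ m')

@[simp] lemma pA_tmul (m m' : M) : pA R M (m ⊗ₜ m') = wd R m m' := rfl
@[simp] lemma pS_tmul (m m' : M) : pS R M (m ⊗ₜ m') = sm R m m' := rfl
@[simp] lemma wd_self (m : M) : wd R m m = 0 :=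
  (Submodule.Quotient.mk_eq_zero _).2 (Submodule.subset_span ⟨m, rfl⟩)
lemma sm_comm (m m' : M) : sm R m m' = sm R m' m :=
  (Submodule.Quotient.eq _).2 (Submodule.subset_span ⟨(m, m'), rfl⟩)
@[simp] lemma wd_add_left (a b c : M) : wd R (a+b) c = wd R a c + wd R b c := by rw [wd, TensorProduct.add_tmul, map_add]; rfl
@[simp] lemma wd_add_right (a b c : M) : wd R a (b+c) = wd R a b + wd R a c := by rw [wd, TensorProduct.tmul_add, map_add]; rfl
@[simp] lemma wd_sub_left (a b c : M) : wd R (a-b) c = wd R a c - wd R b c := by rw [wd, TensorProduct.sub_tmul, map_sub]; rfl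
@[simp] lemma wd_sub_right (a b c : M) : wd R a (b-c) = wd R a b - wd R a c := by rw [wd, TensorProduct.tmul_sub, map_sub]; rfl
@[simp] lemma wd_smul_left (r : R) (a c : M) : wd R (r•a) c = r • wd R a c := by 
  rw [wd, ← TensorProduct.smul_tmul', map_smul, pA_tmul]
@[simp] lemma wd_smul_right (r : R) (a c : M) : wd R a (r•c) = r • wd R a c := by 
  rw [wd, TensorProduct.tmul_smul, map_smul, pA_tmul]
@[simp] lemma wd_zero_left (c : M) : wd R 0 c = 0 := by simp [wd]
@[simp] lemma wd_zero_right (c : M) : wd R c 0 = 0 := by simp [wd]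
@[simp] lemma sm_add_left (a b c : M) : sm R (a+b) c = sm R a c + sm R b c := by rw [sm, TensorProduct.add_tmul, map_add]; rfl
@[simp] lemma sm_add_right (a b c : M) : sm R a (b+c) = sm R a b + sm R a c := by rw [sm, TensorProduct.tmul_add, map_add]; rfl
@[simp] lemma sm_sub_left (a b c : M) : sm R (a-b) c = sm R a c - sm R b c := by rw [sm, TensorProduct.sub_tmul, map_sub]; rfl
@[simp] lemma sm_sub_right (a b c : M) : sm R a (b-c) = sm R a b - sm R a c := by rw [sm, TensorProduct.tmul_sub, map_sub]; rfl
@[simp] lemma sm_smul_left (r : R) (a c : M) : sm R (r•a) c = r • sm R a c := by 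
  rw [sm, ← TensorProduct.smul_tmul', map_smul, pS_tmul]
@[simp] lemma sm_smul_right (r : R) (a c : M) : sm R a (r•c) = r • sm R a c := by 
  rw [sm, TensorProduct.tmul_smul, map_smul, pS_tmul]
@[simp] lemma sm_zero_left (c : M) : sm R 0 c = 0 := by simp [sm]
@[simp] lemma sm_zero_right (c : M) : sm R c 0 = 0 := by simp [sm]
lemma wd_swap (m m' : M) : wd R m m' = - wd R m' m := by
  have := wd_self (R := R) (m + m')
  rw [wd_add_left, wd_add_right, wd_add_right, wd_self, wd_self, zero_add, add_zero] at this
  exact eq_neg_of_add_eq_zero_left this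

/-- universal property -/
def A2lift (f : M ⊗[R] M →ₗ[R] T) (h : ∀ m, f (m ⊗ₜ m) = 0) : A2 R M →ₗ[R] T :=
  (altSub R M).liftQ f (by rw [altSub, Submodule.span_le]; rintro _ ⟨m, rfl⟩; exact h m)
/-- universal property -/
def S2lift (f : M ⊗[R] M →ₗ[R] T) (h : ∀ m m', f (m ⊗ₜ m') = f (m' ⊗ₜ m)) : S2 R M →ₗ[R] T :=
  (symSub R M).liftQ f (by 
    rw [symSub, Submodule.span_le]; rintro _ ⟨⟨m, m'⟩, rfl⟩
    simp only [SetLike.mem_coe, LinearMap.mem_ker, map_sub, h m m', sub_self])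
@[simp] lemma A2lift_wd (f : M ⊗[R] M →ₗ[R] T) (h) (m m' : M) : A2lift f h (wd R m m') = f (m ⊗ₜ m') := rfl
@[simp] lemma S2lift_sm (f : M ⊗[R] M →ₗ[R] T) (h) (m m' : M) : S2lift f h (sm R m m') = f (m ⊗ₜ m') := rfl

@[ext] lemma A2_ext {f g : A2 R M →ₗ[R] T} (h : ∀ m m', f (wd R m m') = g (wd R m m')) : f = g := by
  have : f.comp (pA R M) = g.comp (pA R M) := TensorProduct.ext' h
  refine LinearMap.ext fun z => ?_
  obtain ⟨z, rfl⟩ := pA_surj z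
  exact congrArg (fun g => g z) this
@[ext] lemma S2_ext {f g : S2 R M →ₗ[R] T} (h : ∀ m m', f (sm R m m') = g (sm R m m')) : f = g := by
  have : f.comp (pS R M) = g.comp (pS R M) := TensorProduct.ext' h
  refine LinearMap.ext fun z => ?_
  obtain ⟨z, rfl⟩ := pS_surj z
  exact congrArg (fun g => g z) this

/-- functoriality -/
def A2map (f : M →ₗ[R] N) : A2 R M →ₗ[R] A2 R N :=
  A2lift ((pA R N).comp (TensorProduct.map f f)) (by intro m; simp)
@[simp] lemma A2map_wd (f : M →ₗ[R] N) (m m' : M) : A2map f (wd R m m') = wd R (f m) (f m') := by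
  simp [A2map]
/-- functoriality -/
def S2map (f : M →ₗ[R] N) : S2 R M →ₗ[R] S2 R N :=
  S2lift ((pS R N).comp (TensorProduct.map f f)) (by intro m m'; simp [sm_comm])
@[simp] lemma S2map_sm (f : M →ₗ[R] N) (m m' : M) : S2map f (sm R m m') = sm R (f m) (f m') := rfl
lemma A2map_comp_apply (f : M →ₗ[R] N) (g : N →ₗ[R] T) (z : A2 R M) :
    A2map g (A2map f z) = A2map (g.comp f) z := by
  have : (A2map g).comp (A2map f) = A2map (g.comp f) := by ext; simp
  exact congrArg (fun g => g z) this
lemma A2map_smul_id (c : R) (z : A2 R M) : A2map (c • (LinearMap.id : M →ₗ[R] M)) z = (c * c) • z := by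
  have : A2map (c • (LinearMap.id : M →ₗ[R] M)) = (c * c) • LinearMap.id := by ext; simp [mul_smul]
  rw [this]; rfl

/-- `m ∧ m' ↦ m ⊗ φ m' - m' ⊗ φ m` -/
def kos (φ : M →ₗ[R] N) : A2 R M →ₗ[R] M ⊗[R] N :=
  A2lift (φ.lTensor M - (φ.lTensor M).comp (TensorProduct.comm R M M).toLinearMap) (by intro m; simp)
@[simp] lemma kos_wd (φ : M →ₗ[R] N) (m m' : M) : kos φ (wd R m m') = m ⊗ₜ φ m' - m' ⊗ₜ φ m := by
  simp [kos]
/-- `m ⊗ n ↦ φ m n` -/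
def kos2 (φ : M →ₗ[R] N) : M ⊗[R] N →ₗ[R] S2 R N := (pS R N).comp (φ.rTensor N)
@[simp] lemma kos2_tmul (φ : M →ₗ[R] N) (m : M) (y : N) : kos2 φ (m ⊗ₜ y) = sm R (φ m) y := by
  simp [kos2]

section free
variable (R M) [Module.Free R M]

/-- index type of a basis -/
abbrev bI := Module.Free.ChooseBasisIndex R M
/-- a basis -/
abbrev bb := Module.Free.chooseBasis R M
instance bIord : LinearOrder (bI R M) := by
  classical
  exact linearOrderOfSTO WellOrderingRel

/-- left inverse of antisymmetrization -/
def tauF : M ⊗[R] M →ₗ[R] A2 R M := ((bb R M).tensorProduct (bb R M)).constr R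
  fun p => if p.1 < p.2 then wd R (bb R M p.1) (bb R M p.2) else 0
/-- section of the symmetric square -/
def upre : M ⊗[R] M →ₗ[R] M ⊗[R] M := ((bb R M).tensorProduct (bb R M)).constr R
  fun p => (bb R M (min p.1 p.2)) ⊗ₜ (bb R M (max p.1 p.2))
/-- the correction -/
def wF : M ⊗[R] M →ₗ[R] A2 R M := ((bb R M).tensorProduct (bb R M)).constr R
  fun p => if p.2 < p.1 then wd R (bb R M p.1) (bb R M p.2) else 0

variable {R M}
lemma tauF_b (i j : bI R M) : tauF R M (bb R M i ⊗ₜ bb R M j) = 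
    if i < j then wd R (bb R M i) (bb R M j) else 0 := by
  have := ((bb R M).tensorProduct (bb R M)).constr_basis R (fun p => if p.1 < p.2 then wd R (bb R M p.1) (bb R M p.2) else 0) (i,j)
  rwa [Module.Basis.tensorProduct_apply] at this
lemma wF_b (i j : bI R M) : wF R M (bb R M i ⊗ₜ bb R M j) = 
    if j < i then wd R (bb R M i) (bb R M j) else 0 := by
  have := ((bb R M).tensorProduct (bb R M)).constr_basis R (fun p => if p.2 < p.1 then wd R (bb R M p.1) (bb R M p.2) else 0) (i,j)
  rwa [Module.Basis.tensorProduct_apply] at this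
lemma upre_b (i j : bI R M) : upre R M (bb R M i ⊗ₜ bb R M j) = 
    (bb R M (min i j)) ⊗ₜ (bb R M (max i j)) := by
  have := ((bb R M).tensorProduct (bb R M)).constr_basis R (fun p => (bb R M (min p.1 p.2)) ⊗ₜ[R] (bb R M (max p.1 p.2))) (i,j)
  rwa [Module.Basis.tensorProduct_apply] at this

lemma tens_ext {f g : M ⊗[R] M →ₗ[R] T} (h : ∀ i j, f (bb R M i ⊗ₜ bb R M j) = g (bb R M i ⊗ₜ bb R M j)) :
    f = g := by
  refine ((bb R M).tensorProduct (bb R M)).ext fun ⟨i, j⟩ => ?_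
  rw [Module.Basis.tensorProduct_apply]; exact h i j

lemma A2_ext_b {f g : A2 R M →ₗ[R] T} (h : ∀ i j, f (wd R (bb R M i) (bb R M j)) = g (wd R (bb R M i) (bb R M j))) :
    f = g := by
  have : f.comp (pA R M) = g.comp (pA R M) := tens_ext h
  refine LinearMap.ext fun z => ?_
  obtain ⟨z, rfl⟩ := pA_surj z
  exact congrArg (fun g => g z) this

/-- antisymmetrization has a left inverse -/
lemma tau_anti (z : A2 R M) : tauF R M (kos LinearMap.id z) = z := by
  have : (tauF R M).comp (kos LinearMap.id) = LinearMap.id := by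
    refine A2_ext_b fun i j => ?_
    simp only [LinearMap.comp_apply, kos_wd, LinearMap.id_apply, map_sub, tauF_b]
    rcases lt_trichotomy i j with h | rfl | h
    · simp [h, h.le]
    · simp
    · rw [if_neg h.not_gt, if_pos h, wd_swap]; simp
  exact congrArg (fun g => g z) this

lemma upre_symm (m m' : M) : upre R M (m ⊗ₜ m') = upre R M (m' ⊗ₜ m) := by
  have : upre R M = (upre R M).comp (TensorProduct.comm R M M).toLinearMap := by
    refine tens_ext fun i j => ?_
    simp [upre_b, min_comm, max_comm]
  conv_lhs => rw [this]
  simp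

variable (R M) in
/-- section of the symmetric square -/
def uS : S2 R M →ₗ[R] M ⊗[R] M := S2lift (upre R M) upre_symm

lemma pS_uS (z : S2 R M) : pS R M (uS R M z) = z := by
  obtain ⟨z, rfl⟩ := pS_surj z
  have : (pS R M).comp (upre R M) = pS R M := by
    refine tens_ext fun i j => ?_
    rw [LinearMap.comp_apply, upre_b, pS_tmul, pS_tmul]
    rcases le_total i j with h | h
    · simp [h]
    · simp [h]; rw [sm_comm]
  exact congrArg (fun g => g z) this

lemma decomp (z : M ⊗[R] M) : z = kos LinearMap.id (wF R M z) + uS R M (pS R M z) := by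
  have : LinearMap.id = (kos LinearMap.id).comp (wF R M) + (uS R M).comp (pS R M) := by
    refine tens_ext fun i j => ?_
    simp only [LinearMap.add_apply, LinearMap.comp_apply, wF_b, pS_tmul, uS, S2lift_sm, upre_b, LinearMap.id_apply]
    rcases lt_or_ge j i with h | h
    · simp [h, h.le]
    · simp [h, h.not_gt]
  exact congrArg (fun g => g z) this

instance A2proj : Module.Projective R (A2 R M) := 
  Module.Projective.of_split (kos LinearMap.id) (tauF R M) (LinearMap.ext fun z => tau_anti z)
instance S2proj : Module.Projective R (S2 R M) := 
  Module.Projective.of_split (uS R M) (pS R M) (LinearMap.ext fun z => pS_uS z)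

end free
end
end HSplit

/-! ### Part 8 -/

namespace HSplit

section
variable {R : Type} [CommRing R] {A P B E : Type} [AddCommGroup A] [Module R A] [AddCommGroup P] [Module R P]
  [AddCommGroup B] [Module R B] [AddCommGroup E] [Module R E]
variable {ι : Type} {x : ι → R}

/-! ### the sequence `Λ²K → Λ²P → P ⊗ B → S²B` -/
section first
variable [Module.Free R B] (β : P →ₗ[R] B) (f : R) (s : B →ₗ[R] P) (hs : ∀ b, β (s b) = f • b)
include hs

lemma exists_rho : ∃ ρ : P →ₗ[R] LinearMap.ker β, ∀ p, (ρ p : P) = f • p - s (β p) := by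
  refine ⟨LinearMap.codRestrict _ (f • LinearMap.id - s.comp β) ?_, ?_⟩
  · intro p; simp [hs]
  · intro p; rfl

lemma first_inj (z : A2 R (LinearMap.ker β)) (hz : A2map (LinearMap.ker β).subtype z = 0) :
    (f * f) • z = 0 := by
  obtain ⟨ρ, hρ⟩ := exists_rho β f s hs
  have h : ρ.comp (LinearMap.ker β).subtype = f • LinearMap.id := by
    ext k
    rw [LinearMap.comp_apply, hρ]
    simp
  rw [← A2map_smul_id, ← h, ← A2map_comp_apply, hz, map_zero]

omit hs [Module.Free R B] in
lemma first_zero (z : A2 R (LinearMap.ker β)) : kos β (A2map (LinearMap.ker β).subtype z) = 0 := by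
  have : (kos β).comp (A2map (LinearMap.ker β).subtype) = 0 := by
    refine A2_ext fun m m' => ?_
    simp
  exact congrArg (fun g => g z) this

lemma first_exact (z : A2 R P) (hz : kos β z = 0) :
    ∃ y, A2map (LinearMap.ker β).subtype y = (f * f) • z := by
  obtain ⟨ρ, hρ⟩ := exists_rho β f s hs
  have key : (f * f) • LinearMap.id = (A2map (LinearMap.ker β).subtype).comp (A2map ρ) +
      ((pA R P).comp (TensorProduct.map ((LinearMap.ker β).subtype.comp ρ) s) +
        (A2map s).comp ((tauF R B).comp (β.rTensor B))).comp (kos β) := by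
    refine A2_ext fun p p' => ?_
    have h1 := tau_anti (wd R (β p) (β p'))
    simp only [kos_wd, LinearMap.id_apply] at h1
    simp only [LinearMap.add_apply, LinearMap.comp_apply, kos_wd, A2map_wd, map_sub, TensorProduct.map_tmul, pA_tmul,
      LinearMap.rTensor_tmul, Submodule.subtype_apply, hρ, LinearMap.smul_apply, LinearMap.id_apply]
    have h1' := congrArg (A2map s) h1
    rw [map_sub, map_sub, A2map_wd, sub_eq_iff_eq_add] at h1'
    rw [h1']
    simp only [A2map_wd, wd_sub_left, wd_sub_right, wd_smul_left, wd_smul_right]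
    rw [wd_swap p' (s (β p)), wd_swap (s (β p')) (s (β p)), mul_smul]
    module
  refine ⟨A2map ρ z, ?_⟩
  have := congrArg (fun g => g z) key
  simp only [LinearMap.add_apply, LinearMap.comp_apply, LinearMap.smul_apply, LinearMap.id_apply, hz, map_zero, add_zero] at this
  exact this.symm

omit hs [Module.Free R B] in
lemma second_zero (z : A2 R P) : kos2 β (kos β z) = 0 := by
  have : (kos2 β).comp (kos β) = 0 := by
    refine A2_ext fun m m' => ?_
    simp only [LinearMap.comp_apply, kos_wd, map_sub, kos2_tmul, LinearMap.zero_apply]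
    rw [sm_comm, sub_self]
  exact congrArg (fun g => g z) this

lemma second_exact (z : P ⊗[R] B) (hz : kos2 β z = 0) : ∃ y, kos β y = (f * f) • z := by
  have key : (f * f) • LinearMap.id = (kos β).comp (f • (pA R P).comp (s.lTensor P) +
      (A2map s).comp ((wF R B).comp ((TensorProduct.comm R B B).toLinearMap.comp (β.rTensor B)))) +
      f • (s.rTensor B).comp ((uS R B).comp (kos2 β)) := by
    refine TensorProduct.ext' fun p b => ?_
    have h1 : (kos β).comp (A2map s) = f • (s.rTensor B).comp (kos LinearMap.id) := by
      refine A2_ext fun m m' => ?_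
      simp [hs, smul_sub]
    have h1' := fun z => congrArg (fun g => g z) h1
    simp only [LinearMap.comp_apply, LinearMap.smul_apply] at h1'
    have h2 := decomp (b ⊗ₜ[R] β p)
    have h3 := congrArg (s.rTensor B) h2
    simp only [LinearMap.rTensor_tmul, map_add, pS_tmul] at h3
    simp only [LinearMap.add_apply, LinearMap.comp_apply, LinearMap.smul_apply, LinearMap.id_apply,
      LinearMap.lTensor_tmul, LinearMap.rTensor_tmul, pA_tmul, map_add, map_smul, h1', kos_wd, hs, kos2_tmul,
      LinearEquiv.coe_coe, TensorProduct.comm_tmul]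
    rw [sm_comm (β p) b, add_assoc, ← smul_add, ← h3]
    simp only [TensorProduct.tmul_smul, smul_sub, mul_smul]
    abel
  exact ⟨_, (by
    have := congrArg (fun g => g z) key
    simp only [LinearMap.add_apply, LinearMap.comp_apply, LinearMap.smul_apply, LinearMap.id_apply, hz, map_zero, smul_zero, add_zero] at this
    exact this.symm)⟩

lemma third_surj (z : S2 R B) : ∃ y, kos2 β y = f • z := by
  refine ⟨(s.rTensor B) (uS R B z), ?_⟩
  have h : (kos2 β).comp (s.rTensor B) = f • pS R B := TensorProduct.ext' fun m m' => by
    simp [hs]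
  have := congrArg (fun g => g (uS R B z)) h
  simp only [LinearMap.comp_apply, LinearMap.smul_apply, pS_uS] at this
  exact this
end first

/-! ### the sequence `D²A → K ⊗ A → Λ²K → Λ²E` -/
section second
variable {M : Type} [AddCommGroup M] [Module R M] (α : A →ₗ[R] M) (g : M →ₗ[R] E)

/-- `k ⊗ a ↦ k ∧ α a` -/
def muF : M ⊗[R] A →ₗ[R] A2 R M := (pA R M).comp (α.lTensor M)
@[simp] lemma muF_tmul (k : M) (a : A) : muF α (k ⊗ₜ a) = wd R k (α a) := rfl

/-- divided square -/
abbrev D2 (R A : Type) [CommRing R] [AddCommGroup A] [Module R A] := LinearMap.ker (pA R A)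
/-- the map from the divided square -/
def dmap : D2 R A →ₗ[R] M ⊗[R] A := (α.rTensor A).comp (D2 R A).subtype

variable (f : R) (r : M →ₗ[R] A) (hr : ∀ a, r (α a) = f • a)

lemma d_zero (z : D2 R A) : muF α (dmap α z) = 0 := by
  have : (muF α).comp (α.rTensor A) = (A2map α).comp (pA R A) := TensorProduct.ext' fun a b => by simp
  have := congrArg (fun g => g z.1) this
  refine this.trans ?_
  have h := z.2
  rw [LinearMap.mem_ker] at h
  rw [LinearMap.comp_apply, h, map_zero]

include hr
lemma d_inj (z : D2 R A) (hz : dmap α z = 0) : f • z = 0 := by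
  have h : (r.rTensor A).comp (α.rTensor A) = f • LinearMap.id := TensorProduct.ext' fun a b => by
    simp [hr, TensorProduct.smul_tmul']
  have := congrArg (fun g => g z.1) h
  simp only [LinearMap.comp_apply] at this
  apply Subtype.ext
  refine this.symm.trans ?_
  have hz' : (α.rTensor A) z.1 = 0 := hz
  rw [hz', map_zero]; rfl

lemma d_exact (z : M ⊗[R] A) (hz : muF α z = 0) : ∃ y, dmap α y = (f * f) • z := by
  let w : A ⊗[R] A := (TensorProduct.comm R A A) ((r.rTensor A) z)
  have h1 : f • pA R A w = - A2map r (muF α z) := by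
    have : f • (pA R A).comp ((TensorProduct.comm R A A).toLinearMap.comp (r.rTensor A)) =
        - (A2map r).comp (muF α) := TensorProduct.ext' fun k a => by
      simp only [LinearMap.smul_apply, LinearMap.comp_apply, LinearMap.rTensor_tmul, LinearEquiv.coe_coe,
        TensorProduct.comm_tmul, pA_tmul, LinearMap.neg_apply, muF_tmul, A2map_wd, hr, wd_smul_right]
      rw [wd_swap a (r k), smul_neg]
    exact congrArg (fun g => g z) this
  have h2 : (α.rTensor A) w = f • z := by
    have : (r.lTensor M).comp ((kos LinearMap.id).comp (muF α)) = f • LinearMap.id - (α.rTensor A).comp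
        ((TensorProduct.comm R A A).toLinearMap.comp (r.rTensor A)) := TensorProduct.ext' fun k a => by
      simp [hr]
    have := congrArg (fun g => g z) this
    simp only [LinearMap.comp_apply, LinearMap.sub_apply, hz, map_zero] at this
    exact (sub_eq_zero.1 this.symm).symm
  refine ⟨⟨f • w, ?_⟩, ?_⟩
  · rw [LinearMap.mem_ker, map_smul, h1, hz, map_zero, neg_zero]
  · change (α.rTensor A) (f • w) = _
    rw [map_smul, h2, mul_smul]
omit hr

variable (hgα : ∀ a, g (α a) = 0)
include hgα
lemma mu_zero (z : M ⊗[R] A) : A2map g (muF α z) = 0 := by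
  have : (A2map g).comp (muF α) = 0 := TensorProduct.ext' fun a b => by simp [hgα]
  exact congrArg (fun g => g z) this
omit hgα

lemma mu_exact (h : E →ₗ[R] M) (hh : ∀ k, h (g k) = f • k - α (r k)) (z : A2 R M) (hz : A2map g z = 0) :
    ∃ y, muF α y = (f * f) • z := by
  obtain ⟨z, rfl⟩ := pA_surj z
  have key : (f * f) • pA R M = (A2map h).comp ((A2map g).comp (pA R M)) +
      (muF α).comp (TensorProduct.map (h.comp g) r - (TensorProduct.map (h.comp g) r).comp
        (TensorProduct.comm R M M).toLinearMap + TensorProduct.map (α.comp r) r) := by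
    refine TensorProduct.ext' fun k k' => ?_
    simp only [LinearMap.add_apply, LinearMap.sub_apply, LinearMap.comp_apply, LinearMap.smul_apply, pA_tmul, A2map_wd,
      map_add, map_sub, TensorProduct.map_tmul, LinearEquiv.coe_coe, TensorProduct.comm_tmul, muF_tmul, hh,
      wd_sub_left, wd_sub_right, wd_smul_left, wd_smul_right]
    rw [wd_swap (α (r k)) k', wd_swap (α (r k)) (α (r k')), mul_smul]
    module
  have := congrArg (fun g => g z) key
  simp only [LinearMap.add_apply, LinearMap.comp_apply, LinearMap.smul_apply, hz, map_zero, zero_add] at this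
  exact ⟨_, this.symm⟩
end second

/-- construction of the quasi-inverse -/
lemma exists_h {M : Type} [AddCommGroup M] [Module R M] (α : A →ₗ[R] M) (g : M →ₗ[R] E) (t : R) {c d e : ℕ}
    (hker : ∀ z, g z = 0 → ∃ a, α a = t ^ c • z) (hsurj : ∀ y, ∃ z, g z = t ^ d • y)
    (hgα : ∀ a, g (α a) = 0)
    (r : M →ₗ[R] A) (hr : ∀ a, r (α a) = t ^ e • a) :
    ∃ (N : ℕ) (r' : M →ₗ[R] A) (h : E →ₗ[R] M), (∀ k, h (g k) = t ^ N • k - α (r' k)) ∧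
      ∀ y, g (h y) = t ^ N • y := by
  let π : M →ₗ[R] M := t ^ c • (t ^ e • LinearMap.id - α.comp r)
  have hπ : ∀ k, g k = 0 → π k = 0 := by
    intro k hk
    obtain ⟨a, ha⟩ := hker k hk
    simp only [π, LinearMap.smul_apply, ← map_smul, ← ha]
    simp [hr]
  have hπ' : ∀ k k', g k = g k' → π k = π k' := by
    intro k k' hk
    rw [← sub_eq_zero, ← map_sub]; apply hπ; rw [map_sub, hk, sub_self]
  choose q hq using hsurj
  let h : E →ₗ[R] M :=
    { toFun := fun y => π (q y)
      map_add' := fun y y' => by rw [← map_add]; apply hπ'; simp [hq]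
      map_smul' := fun a y => by
        rw [← map_smul]; apply hπ'; simp only [hq, map_smul, RingHom.id_apply]; rw [smul_comm] }
  refine ⟨c + e + d, t ^ (c + d) • r, h, fun k => ?_, fun y => ?_⟩
  · have : h (g k) = π (t ^ d • k) := hπ' _ _ (by rw [hq, map_smul])
    rw [this]
    simp only [π, LinearMap.smul_apply, LinearMap.sub_apply, LinearMap.comp_apply, LinearMap.id_apply, map_smul, smul_sub, pow_add, mul_smul]
    congr 1
    · rw [smul_comm (t^e) (t^d), smul_comm (t^d) (t^c)]
    · rw [smul_comm (t^d) (t^c)]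
  · change g (π (q y)) = _
    simp only [π, LinearMap.smul_apply, LinearMap.sub_apply, LinearMap.comp_apply, LinearMap.id_apply, map_smul, map_sub, hgα, sub_zero, hq, pow_add, mul_smul]

/-- the monad lemma -/
theorem monad_A2 {n : ℕ} (hD : DepthAt x n) [Module.Free R A] [Module.Finite R A] [Module.Free R B]
    [Module.Finite R B] (β : P →ₗ[R] B) (α : A →ₗ[R] LinearMap.ker β) (g : LinearMap.ker β →ₗ[R] E)
    (hs : ∀ i, ∃ (c : ℕ) (s : B →ₗ[R] P), ∀ b, β (s b) = x i ^ c • b)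
    (hr : ∀ i, ∃ (c : ℕ) (r : LinearMap.ker β →ₗ[R] A), ∀ a, r (α a) = x i ^ c • a)
    (hgα : ∀ a, g (α a) = 0)
    (hker : ∀ i, ∃ c : ℕ, ∀ z, g z = 0 → ∃ a, α a = x i ^ c • z)
    (hsurj : TSurj x g) {j : ℕ} (hj : 2 ≤ j) (hjn : j + 2 ≤ n)
    (hP : EV R P R j) (hE : EV R (A2 R E) R j) : EV R (A2 R P) R j := by
  have hK : EV R (LinearMap.ker β) R j := by
    refine V2 hD (TInj.of_inj (Submodule.subtype_injective (LinearMap.ker β))) (b := β) ⟨?_, ?_⟩ ?_ hjn hP (EV.proj _ (by omega))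
    · ext k; simp
    · exact fun i => ⟨0, fun y hy => ⟨⟨y, hy⟩, by simp⟩⟩
    · intro i
      obtain ⟨c, s, hs⟩ := hs i
      exact ⟨c, fun y => ⟨s y, hs y⟩⟩
  have hKA : EV R (LinearMap.ker β ⊗[R] A) R j := EV_tens_free hK
  have hDA : EV R (D2 R A) R (j-1) :=
    EV.left (Submodule.subtype_injective _) (LinearMap.exact_subtype_ker_map _) pA_surj
      (EV.proj _ (by omega)) (EV.proj _ (by omega))
  have hG : EV R (LinearMap.range (muF α)) R (j-1+1) := by
    refine V3 hD (a := dmap α) ?_ ⟨LinearMap.ext fun z => d_zero α z, ?_⟩ (by omega) hDA (by rwa [show j - 1 + 1 = j by omega])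
    · intro i
      obtain ⟨c, r, hr⟩ := hr i
      exact ⟨c, fun z hz => d_inj α _ r hr z hz⟩
    · intro i
      obtain ⟨c, r, hr⟩ := hr i
      exact ⟨c + c, fun z hz => by rw [pow_add]; exact d_exact α _ r hr z hz⟩
  rw [show j - 1 + 1 = j by omega] at hG
  have hA2K : EV R (A2 R (LinearMap.ker β)) R j := by
    refine V1 hD (TInj.of_inj (Submodule.subtype_injective (LinearMap.range (muF α)))) (b := A2map g) ⟨?_, ?_⟩ ?_
      (by omega) hG hE
    · refine LinearMap.ext ?_
      rintro ⟨_, z, rfl⟩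
      exact mu_zero α g hgα z
    · intro i
      obtain ⟨c, hc⟩ := hker i
      obtain ⟨d, hd⟩ := hsurj i
      obtain ⟨e, r, hr⟩ := hr i
      obtain ⟨N, r', h, hh, _⟩ := exists_h α g (x i) hc hd hgα r hr
      refine ⟨N + N, fun z hz => ?_⟩
      obtain ⟨y, hy⟩ := mu_exact α g _ r' h hh z hz
      exact ⟨⟨_, y, rfl⟩, by rw [pow_add]; exact hy⟩
    · intro i
      obtain ⟨c, hc⟩ := hker i
      obtain ⟨d, hd⟩ := hsurj i
      obtain ⟨e, r, hr⟩ := hr i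
      obtain ⟨N, r', h, _, hh⟩ := exists_h α g (x i) hc hd hgα r hr
      refine ⟨N + N, fun z => ⟨A2map h z, ?_⟩⟩
      have : g.comp h = x i ^ N • LinearMap.id := LinearMap.ext hh
      rw [A2map_comp_apply, this, A2map_smul_id, pow_add]
  have hI : EV R (LinearMap.range (kos β)) R j := by
    refine V2 hD (TInj.of_inj (Submodule.subtype_injective (LinearMap.range (kos β)))) (b := kos2 β) ⟨?_, ?_⟩ ?_
      (by omega) (EV_tens_free hP) (EV.proj _ (by omega))
    · refine LinearMap.ext ?_
      rintro ⟨_, z, rfl⟩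
      exact second_zero β z
    · intro i
      obtain ⟨c, s, hs⟩ := hs i
      refine ⟨c + c, fun z hz => ?_⟩
      obtain ⟨y, hy⟩ := second_exact β _ s hs z hz
      exact ⟨⟨_, y, rfl⟩, by rw [pow_add]; exact hy⟩
    · intro i
      obtain ⟨c, s, hs⟩ := hs i
      exact ⟨c, third_surj β _ s hs⟩
  refine V1 hD (a := A2map (LinearMap.ker β).subtype) (b := (kos β).rangeRestrict) ?_ ⟨?_, ?_⟩
    (TSurj.of_surj (LinearMap.surjective_rangeRestrict _)) (by omega) hA2K hI
  · intro i
    obtain ⟨c, s, hs⟩ := hs i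
    exact ⟨c + c, fun z hz => by rw [pow_add]; exact first_inj β _ s hs z hz⟩
  · refine LinearMap.ext fun z => Subtype.ext ?_
    exact first_zero β z
  · intro i
    obtain ⟨c, s, hs⟩ := hs i
    exact ⟨c + c, fun z hz => by rw [pow_add]; exact first_exact β _ s hs z (congrArg Subtype.val hz)⟩
end
end HSplit

/-! ### Part 9 -/

namespace HSplit

section
variable {R : Type} [CommRing R] {X L2 L1 L0 : Type} [AddCommGroup X] [Module R X] [AddCommGroup L2] [Module R L2]
  [AddCommGroup L1] [Module R L1] [AddCommGroup L0] [Module R L0]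
  (i : X →ₗ[R] L2) (d : L2 →ₗ[R] L1) (e : L1 →ₗ[R] L0)

/-- `ab ↦ a ⊗ eb + b ⊗ ea` -/
def Te : S2 R L1 →ₗ[R] L1 ⊗[R] L0 :=
  S2lift (e.lTensor L1 + (e.lTensor L1).comp (TensorProduct.comm R L1 L1).toLinearMap)
    (by intro a b; simp only [LinearMap.add_apply, LinearMap.comp_apply, LinearEquiv.coe_coe, TensorProduct.comm_tmul]; rw [add_comm])
@[simp] lemma Te_sm (a b : L1) : Te e (sm R a b) = a ⊗ₜ e b + b ⊗ₜ e a := by simp [Te]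

/-- third differential -/
def p3 : L2 ⊗[R] L1 →ₗ[R] S2 R L1 × (L2 ⊗[R] L0) := (kos2 d).prod (-(e.lTensor L2))
/-- second differential -/
def p2 : S2 R L1 × (L2 ⊗[R] L0) →ₗ[R] (L1 ⊗[R] L0) × S2 R L0 :=
  LinearMap.coprod ((Te e).prod (S2map e)) ((d.rTensor L0).prod 0)
/-- first differential -/
def p1 : (L1 ⊗[R] L0) × S2 R L0 →ₗ[R] L0 ⊗[R] L0 :=
  LinearMap.coprod (e.rTensor L0) (-(Te LinearMap.id))

lemma p3_tmul (l : L2) (a : L1) : p3 d e (l ⊗ₜ a) = (sm R (d l) a, - (l ⊗ₜ e a)) := by simp [p3]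
lemma p3_apply (z : L2 ⊗[R] L1) : p3 d e z = (kos2 d z, - (e.lTensor L2 z)) := by simp [p3]
lemma p2_apply (z : S2 R L1) (w : L2 ⊗[R] L0) : p2 d e (z, w) = (Te e z + d.rTensor L0 w, S2map e z) := by simp [p2]
lemma p1_apply (z : L1 ⊗[R] L0) (w : S2 R L0) : p1 e (z, w) = e.rTensor L0 z - Te LinearMap.id w := by
  simp [p1, sub_eq_add_neg]

lemma c54 (hdi : ∀ q, d (i q) = 0) : (kos d).comp (A2map i) = 0 := by
  refine A2_ext fun m m' => ?_
  simp [hdi]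
variable (hed : ∀ q, e (d q) = 0)
include hed
lemma c43 : (p3 d e).comp (kos d) = 0 := by
  refine A2_ext fun m m' => ?_
  simp only [LinearMap.comp_apply, kos_wd, map_sub, p3_tmul, LinearMap.zero_apply, hed, TensorProduct.tmul_zero, neg_zero]
  rw [sm_comm, sub_self]
lemma c32 : (p2 d e).comp (p3 d e) = 0 := by
  refine TensorProduct.ext' fun m m' => ?_
  simp [p3_tmul, p2_apply, hed]
lemma c21 : (p1 e).comp (p2 d e) = 0 := by
  refine LinearMap.prod_ext (S2_ext fun m m' => ?_) (TensorProduct.ext' fun m m' => ?_)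
  · simp [p2_apply, p1_apply]
  · simp [p2_apply, p1_apply, hed]
omit hed

variable (f : R) (s0 : L0 →ₗ[R] L1) (s1 : L1 →ₗ[R] L2) (s2 : L2 →ₗ[R] X)

lemma h5 (h : ∀ q, s2 (i q) = f • q) (z : A2 R X) (hz : A2map i z = 0) : (f * f) • z = 0 := by
  have h : s2.comp i = f • LinearMap.id := LinearMap.ext h
  rw [← A2map_smul_id, ← h, ← A2map_comp_apply, hz, map_zero]

lemma h4 [Module.Free R L1] (h2 : ∀ l, i (s2 l) + s1 (d l) = f • l) (z : A2 R L2) (hz : kos d z = 0) :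
    ∃ y, A2map i y = (f * f) • z := by
  have h2' : ∀ l, i (s2 l) = f • l - s1 (d l) := fun l => eq_sub_of_add_eq (h2 l)
  have key : (f * f) • LinearMap.id = (A2map i).comp (A2map s2) +
      ((pA R L2).comp (TensorProduct.map (i.comp s2) s1) +
        (A2map s1).comp ((tauF R L1).comp (d.rTensor L1))).comp (kos d) := by
    refine A2_ext fun p p' => ?_
    have h1 := tau_anti (wd R (d p) (d p'))
    simp only [kos_wd, LinearMap.id_apply] at h1
    simp only [LinearMap.add_apply, LinearMap.comp_apply, kos_wd, A2map_wd, map_sub, TensorProduct.map_tmul, pA_tmul,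
      LinearMap.rTensor_tmul, h2', LinearMap.smul_apply, LinearMap.id_apply]
    have h1' := congrArg (A2map s1) h1
    rw [map_sub, map_sub, A2map_wd, sub_eq_iff_eq_add] at h1'
    rw [h1']
    simp only [A2map_wd, wd_sub_left, wd_sub_right, wd_smul_left, wd_smul_right]
    rw [wd_swap p' (s1 (d p)), wd_swap (s1 (d p')) (s1 (d p)), mul_smul]
    module
  refine ⟨A2map s2 z, ?_⟩
  have := congrArg (fun g => g z) key
  simp only [LinearMap.add_apply, LinearMap.comp_apply, LinearMap.smul_apply, LinearMap.id_apply, hz, map_zero, add_zero] at this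
  exact this.symm

lemma h3 [Module.Free R L1] (hdi : ∀ q, d (i q) = 0) (h2 : ∀ l, i (s2 l) + s1 (d l) = f • l)
    (h1 : ∀ l, d (s1 l) + s0 (e l) = f • l) (z : L2 ⊗[R] L1) (hz : p3 d e z = 0) :
    ∃ y, kos d y = (f * f) • z := by
  rw [p3_apply] at hz
  obtain ⟨hz1, hz2⟩ := Prod.mk.inj hz
  replace hz2 := neg_eq_zero.1 hz2
  have k1 : f • z = (d.comp s1).lTensor L2 z := by
    have : f • LinearMap.id = (d.comp s1).lTensor L2 + (s0.lTensor L2).comp (e.lTensor L2) := by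
      refine TensorProduct.ext' fun l a => ?_
      simp only [LinearMap.smul_apply, LinearMap.id_apply, LinearMap.add_apply, LinearMap.comp_apply, LinearMap.lTensor_tmul,
        ← TensorProduct.tmul_add, h1, TensorProduct.tmul_smul]
    have := congrArg (fun g => g z) this
    simp only [LinearMap.smul_apply, LinearMap.id_apply, LinearMap.add_apply, LinearMap.comp_apply, hz2, map_zero, add_zero] at this
    exact this
  have k2 : f • (d.comp s1).lTensor L2 z = kos d (pA R L2 (TensorProduct.map (i.comp s2) s1 z)) +
      TensorProduct.map s1 (d.comp s1) (d.rTensor L1 z) := by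
    have : f • (d.comp s1).lTensor L2 = (kos d).comp ((pA R L2).comp (TensorProduct.map (i.comp s2) s1)) +
      (TensorProduct.map s1 (d.comp s1)).comp (d.rTensor L1) := by
      refine TensorProduct.ext' fun l a => ?_
      simp only [LinearMap.smul_apply, LinearMap.add_apply, LinearMap.comp_apply, LinearMap.lTensor_tmul, LinearMap.rTensor_tmul,
        TensorProduct.map_tmul, pA_tmul, kos_wd, hdi, TensorProduct.tmul_zero, sub_zero, ← TensorProduct.add_tmul, h2,
        TensorProduct.smul_tmul']
    exact congrArg (fun g => g z) this
  have k3 : TensorProduct.map s1 (d.comp s1) (d.rTensor L1 z) = kos d (A2map s1 (wF R L1 (d.rTensor L1 z))) := by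
    have hd := decomp (d.rTensor L1 z)
    have : pS R L1 (d.rTensor L1 z) = 0 := hz1
    rw [this, map_zero, add_zero] at hd
    have h : (TensorProduct.map s1 (d.comp s1)).comp (kos LinearMap.id) = (kos d).comp (A2map s1) := by
      refine A2_ext fun m m' => ?_
      simp
    have := congrArg (fun g => g (wF R L1 (d.rTensor L1 z))) h
    simp only [LinearMap.comp_apply, ← hd] at this
    exact this
  exact ⟨pA R L2 (TensorProduct.map (i.comp s2) s1 z) + A2map s1 (wF R L1 (d.rTensor L1 z)), by
    rw [map_add, ← k3, ← k2, ← k1, mul_smul]⟩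

lemma h2' [Module.Free R L1] (hdi : ∀ q, d (i q) = 0) (h2 : ∀ l, i (s2 l) + s1 (d l) = f • l)
    (h1 : ∀ l, d (s1 l) + s0 (e l) = f • l) (h0 : ∀ l, e (s0 l) = f • l) 
    (z : S2 R L1 × (L2 ⊗[R] L0)) (hz : p2 d e z = 0) :
    ∃ y, p3 d e y = (f * f) • z := by
  obtain ⟨σ, ρ⟩ := z
  rw [p2_apply] at hz
  obtain ⟨hz1, hz2⟩ := Prod.mk.inj hz
  obtain ⟨u, rfl⟩ := pS_surj σ
  let sw := (TensorProduct.comm R L0 L1).toLinearMap.comp (e.rTensor L1)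
  have a1 : f • kos2 d (s1.rTensor L1 u) + kos2 d (TensorProduct.map s1 s0 (sw u)) = (f * f) • pS R L1 u := by
    have : f • (kos2 d).comp (s1.rTensor L1) + (kos2 d).comp ((TensorProduct.map s1 s0).comp sw) = (f * f) • pS R L1 - 
      (S2map s0).comp ((S2map e).comp (pS R L1)) := by
      refine TensorProduct.ext' fun a b => ?_
      have h1' : ∀ l, d (s1 l) = f • l - s0 (e l) := fun l => eq_sub_of_add_eq (h1 l)
      simp only [sw, LinearMap.smul_apply, LinearMap.add_apply, LinearMap.sub_apply, LinearMap.comp_apply, LinearMap.rTensor_tmul,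
        TensorProduct.map_tmul, kos2_tmul, LinearEquiv.coe_coe, TensorProduct.comm_tmul, pS_tmul, S2map_sm, h1', sm_sub_left, sm_smul_left]
      rw [sm_comm b, sm_comm (s0 (e b))]
      module
    have := congrArg (fun g => g u) this
    simp only [LinearMap.smul_apply, LinearMap.add_apply, LinearMap.sub_apply, LinearMap.comp_apply, hz2, map_zero, sub_zero] at this
    exact this
  have a2 : kos2 d (TensorProduct.map (i.comp s2) s0 ρ) = 0 := by
    have : (kos2 d).comp (TensorProduct.map (i.comp s2) s0) = 0 := TensorProduct.ext' fun a b => by simp [hdi]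
    exact congrArg (fun g => g ρ) this
  have b1 : e.lTensor L2 (s1.rTensor L1 u) + s1.rTensor L0 (sw u) = s1.rTensor L0 (Te e (pS R L1 u)) := by
    have : (e.lTensor L2).comp (s1.rTensor L1) + (s1.rTensor L0).comp sw = (s1.rTensor L0).comp ((Te e).comp (pS R L1)) :=
      TensorProduct.ext' fun a b => by simp [sw]
    exact congrArg (fun g => g u) this
  have b2 : e.lTensor L2 (TensorProduct.map s1 s0 (sw u)) = f • s1.rTensor L0 (sw u) := by
    have : (e.lTensor L2).comp (TensorProduct.map s1 s0) = f • s1.rTensor L0 :=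
      TensorProduct.ext' fun a b => by simp [h0]
    exact congrArg (fun g => g (sw u)) this
  have b3 : e.lTensor L2 (TensorProduct.map (i.comp s2) s0 ρ) = f • (f • ρ - s1.rTensor L0 (d.rTensor L0 ρ)) := by
    have h2' : ∀ l, i (s2 l) = f • l - s1 (d l) := fun l => eq_sub_of_add_eq (h2 l)
    have : (e.lTensor L2).comp (TensorProduct.map (i.comp s2) s0) = 
        f • (f • LinearMap.id - (s1.rTensor L0).comp (d.rTensor L0)) :=
      TensorProduct.ext' fun a b => by simp [h0, h2', TensorProduct.sub_tmul, TensorProduct.smul_tmul']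
    exact congrArg (fun g => g ρ) this
  have hT : Te e (pS R L1 u) = - d.rTensor L0 ρ := eq_neg_of_add_eq_zero_left hz1
  refine ⟨f • s1.rTensor L1 u + TensorProduct.map s1 s0 (sw u) - TensorProduct.map (i.comp s2) s0 ρ, ?_⟩
  rw [p3_apply]
  refine Prod.ext ?_ ?_
  · change kos2 d _ = (f * f) • pS R L1 u
    rw [map_sub, map_add, map_smul, a1, a2, sub_zero]
  · change - (e.lTensor L2 _) = (f * f) • ρ
    rw [hT, map_neg] at b1
    rw [map_sub, map_add, map_smul, b2, b3, ← smul_add, b1, mul_smul]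
    module

lemma h1' [Module.Free R L1] 
    (h1 : ∀ l, d (s1 l) + s0 (e l) = f • l) (h0 : ∀ l, e (s0 l) = f • l) 
    (z : (L1 ⊗[R] L0) × S2 R L0) (hz : p1 e z = 0) :
    ∃ y, p2 d e y = (f * f) • z := by
  obtain ⟨u, t⟩ := z
  rw [p1_apply, sub_eq_zero] at hz
  have a1 : Te e (S2map s0 t) = f • s0.rTensor L0 (Te LinearMap.id t) := by
    have : (Te e).comp (S2map s0) = f • (s0.rTensor L0).comp (Te LinearMap.id) := S2_ext fun a b => by simp [h0]
    exact congrArg (fun g => g t) this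
  have a2 : d.rTensor L0 (s1.rTensor L0 u) = f • u - s0.rTensor L0 (e.rTensor L0 u) := by
    have h1' : ∀ l, d (s1 l) = f • l - s0 (e l) := fun l => eq_sub_of_add_eq (h1 l)
    have : (d.rTensor L0).comp (s1.rTensor L0) = f • LinearMap.id - (s0.rTensor L0).comp (e.rTensor L0) :=
      TensorProduct.ext' fun a b => by simp [h1', TensorProduct.sub_tmul, TensorProduct.smul_tmul']
    exact congrArg (fun g => g u) this
  have a3 : S2map e (S2map s0 t) = (f * f) • t := by
    have : (S2map e).comp (S2map s0) = (f * f) • LinearMap.id := S2_ext fun a b => by simp [h0, mul_smul]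
    exact congrArg (fun g => g t) this
  refine ⟨(S2map s0 t, f • s1.rTensor L0 u), ?_⟩
  rw [p2_apply]
  refine Prod.ext ?_ a3
  change _ = (f * f) • u
  simp only
  rw [map_smul, a1, a2, hz, mul_smul]
  module

lemma h0' (h0 : ∀ l, e (s0 l) = f • l) (z : L0 ⊗[R] L0) : ∃ y, p1 e y = f • z := by
  refine ⟨(s0.rTensor L0 z, 0), ?_⟩
  rw [p1_apply, map_zero, sub_zero]
  have : (e.rTensor L0).comp (s0.rTensor L0) = f • LinearMap.id :=
    TensorProduct.ext' fun a b => by simp [h0, TensorProduct.smul_tmul']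
  exact congrArg (fun g => g z) this
end
end HSplit

/-! ### Part 10 -/

namespace HSplit

section
variable {R : Type} [CommRing R] {X L2 L1 L0 : Type} [AddCommGroup X] [Module R X] [AddCommGroup L2] [Module R L2]
  [AddCommGroup L1] [Module R L1] [AddCommGroup L0] [Module R L0]
  (i : X →ₗ[R] L2) (d : L2 →ₗ[R] L1) (e : L1 →ₗ[R] L0) {κ : Type} {x : κ → R}

/-- homotopy data -/
def HasHtpy (x : κ → R) : Prop := ∀ a, ∃ (c : ℕ) (s0 : L0 →ₗ[R] L1) (s1 : L1 →ₗ[R] L2) (s2 : L2 →ₗ[R] X),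
  (∀ l, e (s0 l) = x a ^ c • l) ∧ (∀ l, d (s1 l) + s0 (e l) = x a ^ c • l) ∧
  (∀ l, i (s2 l) + s1 (d l) = x a ^ c • l) ∧ (∀ l, s2 (i l) = x a ^ c • l)

variable {i d e} {n : ℕ} (hD : DepthAt x n) [Module.Free R L2] [Module.Free R L1] [Module.Free R L0]
  (hdi : ∀ q, d (i q) = 0) (hed : ∀ q, e (d q) = 0) (H : HasHtpy i d e x)
include hD hdi hed H

lemma range_p2 {j : ℕ} (hj : j + 2 ≤ n) (h : EV R (A2 R X) R j) : EV R (LinearMap.range (p2 d e)) R (j+3) := by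
  have e4 : EV R (LinearMap.range (kos d)) R (j+1) := by
    refine V3 hD (a := A2map i) ?_ ⟨c54 i d hdi, ?_⟩ (by omega) h (EV.proj _ (by omega))
    · intro a
      obtain ⟨c, s0, s1, s2, h0, h1, h2, h3⟩ := H a
      exact ⟨c + c, fun z hz => by rw [pow_add]; exact h5 i _ s2 h3 z hz⟩
    · intro a
      obtain ⟨c, s0, s1, s2, h0, h1, h2, h3⟩ := H a
      exact ⟨c + c, fun z hz => by rw [pow_add]; exact h4 i d _ s1 s2 h2 z hz⟩
  have e3 : EV R (LinearMap.range (p3 d e)) R (j+1+1) := by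
    refine V3 hD (a := (LinearMap.range (kos d)).subtype) (TInj.of_inj (Submodule.subtype_injective _)) ⟨?_, ?_⟩
      (by omega) e4 (EV.proj _ (by omega))
    · refine LinearMap.ext ?_
      rintro ⟨_, z, rfl⟩
      exact congrArg (fun g => g z) (c43 d e hed)
    · intro a
      obtain ⟨c, s0, s1, s2, h0, h1, h2, hh3⟩ := H a
      refine ⟨c + c, fun z hz => ?_⟩
      obtain ⟨y, hy⟩ := h3 i d e _ s0 s1 s2 hdi h2 h1 z hz
      exact ⟨⟨_, y, rfl⟩, by rw [pow_add]; exact hy⟩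
  refine V3 hD (a := (LinearMap.range (p3 d e)).subtype) (TInj.of_inj (Submodule.subtype_injective _)) ⟨?_, ?_⟩
      (by omega) e3 (EV.proj _ (by omega))
  · refine LinearMap.ext ?_
    rintro ⟨_, z, rfl⟩
    exact congrArg (fun g => g z) (c32 d e hed)
  · intro a
    obtain ⟨c, s0, s1, s2, h0, h1, h2, hh3⟩ := H a
    refine ⟨c + c, fun z hz => ?_⟩
    obtain ⟨y, hy⟩ := h2' i d e _ s0 s1 s2 hdi h2 h1 h0 z hz
    exact ⟨⟨_, y, rfl⟩, by rw [pow_add]; exact hy⟩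

omit hD hdi hed [Module.Free R L2] [Module.Free R L0] in
lemma tor_H1 : Tor x (LinearMap.ker (p1 e) ⧸ (LinearMap.range (p2 d e)).comap (LinearMap.ker (p1 e)).subtype) := by
  intro a
  obtain ⟨c, s0, s1, s2, h0, h1, h2, hh3⟩ := H a
  refine ⟨c + c, fun z => ?_⟩
  obtain ⟨z, rfl⟩ := Submodule.Quotient.mk_surjective _ z
  rw [← Submodule.Quotient.mk_smul, Submodule.Quotient.mk_eq_zero, pow_add]
  exact h1' d e _ s0 s1 h1 h0 z.1 z.2

omit hD hdi hed [Module.Free R L2] [Module.Free R L0] [Module.Free R L1] in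
lemma tor_W : Tor x ((L0 ⊗[R] L0) ⧸ LinearMap.range (p1 e)) := by
  refine tor_coker fun a => ?_
  obtain ⟨c, s0, s1, s2, h0, h1, h2, hh3⟩ := H a
  exact ⟨c, fun z => h0' e _ s0 h0 z⟩

lemma EV_W {j : ℕ} (hj : j + 3 ≤ n) (h : EV R (A2 R X) R j) :
    EV R ((L0 ⊗[R] L0) ⧸ LinearMap.range (p1 e)) R (j+5) := by
  have e2 := range_p2 hD hdi hed H (by omega) h
  have e1 : EV R (LinearMap.range (p1 e)) R (j+3+1) := by
    refine V3 hD (a := (LinearMap.range (p2 d e)).subtype) (TInj.of_inj (Submodule.subtype_injective _)) ⟨?_, ?_⟩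
      (by omega) e2 (EV.proj _ (by omega))
    · refine LinearMap.ext ?_
      rintro ⟨_, z, rfl⟩
      exact congrArg (fun g => g z) (c21 d e hed)
    · intro a
      obtain ⟨c, s0, s1, s2, h0, h1, h2, hh3⟩ := H a
      refine ⟨c + c, fun z hz => ?_⟩
      obtain ⟨y, hy⟩ := h1' d e _ s0 s1 h1 h0 z hz
      exact ⟨⟨_, y, rfl⟩, by rw [pow_add]; exact hy⟩
  exact EV.right (Submodule.subtype_injective _) (LinearMap.exact_subtype_mkQ _) (Submodule.mkQ_surjective _) e1
    (EV.proj _ (by omega))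

lemma EV_H1 {j : ℕ} (hj : j + 2 ≤ n) (h : EV R (A2 R X) R j) (hs : Function.Surjective (p1 e)) :
    EV R (LinearMap.ker (p1 e) ⧸ (LinearMap.range (p2 d e)).comap (LinearMap.ker (p1 e)).subtype) R (j+4) := by
  have e2 := range_p2 hD hdi hed H (by omega) h
  obtain ⟨t, ht⟩ := LinearMap.exists_rightInverse_of_surjective _ (LinearMap.range_eq_top.2 hs)
  have hp : Module.Projective R (LinearMap.ker (p1 e)) := by
    refine Module.Projective.of_split (LinearMap.ker (p1 e)).subtype
      (LinearMap.codRestrict _ (LinearMap.id - t.comp (p1 e)) ?_) ?_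
    · intro z
      have := congrArg (fun g => g (p1 e z)) ht
      simp only [LinearMap.comp_apply, LinearMap.id_apply] at this
      simp [this]
    · refine LinearMap.ext fun z => Subtype.ext ?_
      have : p1 e z.1 = 0 := z.2
      simp [this]
  have hle : LinearMap.range (p2 d e) ≤ LinearMap.ker (p1 e) := LinearMap.range_le_ker_iff.2 (c21 d e hed)
  refine EV.right (f := Submodule.inclusion hle) (Submodule.inclusion_injective hle) ?_ (Submodule.mkQ_surjective _) e2
    (EV.proj _ (by omega))
  rw [LinearMap.exact_iff, Submodule.ker_mkQ, Submodule.range_inclusion]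
end

section
variable {K : Type} [Field K] {n : ℕ}
variable {X L2 L1 L0 : Type} [AddCommGroup X] [Module (PolyS K n) X] [AddCommGroup L2] [Module (PolyS K n) L2]
  [AddCommGroup L1] [Module (PolyS K n) L1] [AddCommGroup L0] [Module (PolyS K n) L0]
  {i : X →ₗ[PolyS K n] L2} {d : L2 →ₗ[PolyS K n] L1} {e : L1 →ₗ[PolyS K n] L0}
  [Module.Free (PolyS K n) L2] [Module.Free (PolyS K n) L1] [Module.Free (PolyS K n) L0]

lemma psi_not (ψ : L0 ⊗[PolyS K n] L0 →ₗ[PolyS K n] PolyS K n) (hs : Function.Surjective (p1 e))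
    (h1 : ∀ a c, ψ (e a ⊗ₜ c) ∈ irrel K n) (h2 : ∀ c c', ψ (c ⊗ₜ c' + c' ⊗ₜ c) ∈ irrel K n)
    (z : L0 ⊗[PolyS K n] L0) : ψ z ∈ irrel K n := by
  obtain ⟨⟨u, t⟩, rfl⟩ := hs z
  rw [p1_apply, map_sub]
  refine Ideal.sub_mem _ ?_ ?_
  · induction u using TensorProduct.induction_on with
    | zero => simp
    | tmul a c => exact h1 a c
    | add a b ha hb => rw [map_add, map_add]; exact Ideal.add_mem _ ha hb
  · obtain ⟨t, rfl⟩ := pS_surj t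
    induction t using TensorProduct.induction_on with
    | zero => simp
    | tmul a c => simpa using h2 a c
    | add a b ha hb => rw [map_add, map_add, map_add]; exact Ideal.add_mem _ ha hb

lemma coord_mem (hmin : LinearMap.range e ≤ irrel K n • (⊤ : Submodule (PolyS K n) L0)) 
    (φ : L0 →ₗ[PolyS K n] PolyS K n) (a : L1) : φ (e a) ∈ irrel K n := by
  have := hmin ⟨a, rfl⟩
  have h2 := Submodule.mem_map_of_mem (f := φ) this
  rw [Submodule.map_smul''] at h2
  have h3 : irrel K n • Submodule.map φ (⊤ : Submodule (PolyS K n) L0) ≤ irrel K n := by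
    rw [Submodule.smul_le]
    intro r hr y _
    exact Ideal.mul_mem_right _ _ hr
  exact h3 h2

lemma unique_index (hs : Function.Surjective (p1 e))
    (hmin : LinearMap.range e ≤ irrel K n • (⊤ : Submodule (PolyS K n) L0)) 
    (κ : Type) (b : Module.Basis κ (PolyS K n) L0) : Subsingleton κ := by
  refine ⟨fun p q => ?_⟩
  by_contra hpq
  let ψ : L0 ⊗[PolyS K n] L0 →ₗ[PolyS K n] PolyS K n :=
    (LinearMap.mul' (PolyS K n) (PolyS K n)).comp (TensorProduct.map (b.coord p) (b.coord q)) - 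
    (LinearMap.mul' (PolyS K n) (PolyS K n)).comp (TensorProduct.map (b.coord q) (b.coord p))
  have h := psi_not ψ hs ?_ ?_ (b p ⊗ₜ b q)
  · have h1 : ψ (b p ⊗ₜ b q) = 1 := by
      simp [ψ, Ne.symm hpq, hpq]
    rw [h1] at h
    exact irrel_maximal.ne_top ((Ideal.eq_top_iff_one _).2 h)
  · intro a c
    simp only [ψ, LinearMap.sub_apply, LinearMap.comp_apply, TensorProduct.map_tmul, LinearMap.mul'_apply]
    exact Ideal.sub_mem _ (Ideal.mul_mem_right _ _ (coord_mem hmin _ _)) (Ideal.mul_mem_right _ _ (coord_mem hmin _ _))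
  · intro c c'
    have : ψ (c ⊗ₜ c' + c' ⊗ₜ c) = 0 := by
      simp only [ψ, map_add, LinearMap.sub_apply, LinearMap.comp_apply, TensorProduct.map_tmul, LinearMap.mul'_apply]
      ring
    rw [this]; exact Ideal.zero_mem _

lemma two_ne (hs : Function.Surjective (p1 e))
    (hmin : LinearMap.range e ≤ irrel K n • (⊤ : Submodule (PolyS K n) L0)) 
    (κ : Type) (b : Module.Basis κ (PolyS K n) L0) (p : κ) : (2 : K) ≠ 0 := by
  intro h2
  have h2' : (2 : PolyS K n) = 0 := by
    rw [← map_ofNat (MvPolynomial.C : K →+* PolyS K n), h2, map_zero]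
  let ψ : L0 ⊗[PolyS K n] L0 →ₗ[PolyS K n] PolyS K n :=
    (LinearMap.mul' (PolyS K n) (PolyS K n)).comp (TensorProduct.map (b.coord p) (b.coord p))
  have h := psi_not ψ hs ?_ ?_ (b p ⊗ₜ b p)
  · have h1 : ψ (b p ⊗ₜ b p) = 1 := by
      simp [ψ]
    rw [h1] at h
    exact irrel_maximal.ne_top ((Ideal.eq_top_iff_one _).2 h)
  · intro a c
    simp only [ψ, LinearMap.comp_apply, TensorProduct.map_tmul, LinearMap.mul'_apply]
    exact (Ideal.mul_mem_right _ _ (coord_mem hmin _ _))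
  · intro c c'
    have : ψ (c ⊗ₜ c' + c' ⊗ₜ c) = 2 * (b.coord p c * b.coord p c') := by
      simp only [ψ, map_add, LinearMap.comp_apply, TensorProduct.map_tmul, LinearMap.mul'_apply]
      ring
    rw [this, h2', zero_mul]; exact Ideal.zero_mem _

lemma ideal_idem (hs : Function.Surjective (p1 e)) 
    (hH : ∀ z, p1 e z = 0 → ∃ y, p2 d e y = z) (hed : ∀ q, e (d q) = 0) (h2 : (2 : K) ≠ 0)
    (b : L0) (φ : L0 →ₗ[PolyS K n] PolyS K n) (hb : ∀ l, φ l • b = l) (hφ : φ b = 1) :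
    LinearMap.range (φ.comp e) ≤ LinearMap.range (φ.comp e) * LinearMap.range (φ.comp e) := by
  rintro _ ⟨a, rfl⟩
  obtain ⟨⟨σ, ρ⟩, hy⟩ := hH ((2 : PolyS K n) • (a ⊗ₜ b), sm _ (e a) b) (by
    rw [p1_apply, map_smul]
    simp only [LinearMap.rTensor_tmul, Te_sm, LinearMap.id_apply]
    have : b ⊗ₜ[PolyS K n] e a = e a ⊗ₜ b := by
      conv_lhs => rw [← hb (e a)]
      conv_rhs => rw [← hb (e a)]
      rw [TensorProduct.tmul_smul, TensorProduct.smul_tmul']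
    rw [this, two_smul, sub_self])
  rw [p2_apply] at hy
  replace hy := (Prod.mk.inj hy).1
  let θ : L1 ⊗[PolyS K n] L0 →ₗ[PolyS K n] PolyS K n :=
    (LinearMap.mul' (PolyS K n) (PolyS K n)).comp (TensorProduct.map (φ.comp e) φ)
  set I := LinearMap.range (φ.comp e) with hI
  have h1 : ∀ σ, θ (Te e σ) ∈ I * I := by
    intro σ
    obtain ⟨t, rfl⟩ := pS_surj σ
    induction t using TensorProduct.induction_on with
    | zero => simp
    | tmul a c => 
      simp only [pS_tmul, Te_sm, map_add, θ, LinearMap.comp_apply, TensorProduct.map_tmul, LinearMap.mul'_apply]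
      exact add_mem (Submodule.mul_mem_mul ⟨a, rfl⟩ ⟨c, rfl⟩) (Submodule.mul_mem_mul ⟨c, rfl⟩ ⟨a, rfl⟩)
    | add a b ha hb => rw [map_add, map_add, map_add]; exact add_mem ha hb
  have h3 : θ (d.rTensor L0 ρ) = 0 := by
    have : θ.comp (d.rTensor L0) = 0 := TensorProduct.ext' fun a b => by simp [θ, hed]
    exact congrArg (fun g => g ρ) this
  have h4 := congrArg θ hy
  rw [map_add, h3, add_zero, map_smul] at h4
  replace h1 := h1 σ
  rw [h4] at h1
  have h5 : θ (a ⊗ₜ b) = φ (e a) := by simp [θ, hφ]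
  rw [h5] at h1
  have h6 := Submodule.smul_mem _ (MvPolynomial.C (2⁻¹ : K) : PolyS K n) h1
  have h7 : (MvPolynomial.C (2⁻¹ : K) : PolyS K n) * 2 = 1 := by
    rw [← map_ofNat (MvPolynomial.C : K →+* PolyS K n), ← map_mul, inv_mul_cancel₀ h2, map_one]
  rw [smul_smul, h7, one_smul] at h6
  exact h6

theorem case2_aux [Module.Finite (PolyS K n) L0] [Module.Finite (PolyS K n) L1] (hn : 7 ≤ n)
    (hdi : ∀ q, d (i q) = 0) (hed : ∀ q, e (d q) = 0) (H : HasHtpy i d e (XX K n))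
    (hmin : LinearMap.range e ≤ irrel K n • (⊤ : Submodule (PolyS K n) L0)) 
    (hnt : Nontrivial L0)
    (hA : EV (PolyS K n) (A2 (PolyS K n) X) (PolyS K n) (n-4)) 
    (hB : EV (PolyS K n) (A2 (PolyS K n) X) (PolyS K n) (n-3)) : False := by
  have hW := EV_W depthAt hdi hed H (by omega) hA
  rw [show n - 4 + 5 = n + 1 by omega] at hW
  have hW' := EV_top_ne (tor_W H) hW
  have hs : Function.Surjective (p1 e) := by
    rw [← LinearMap.range_eq_top]
    exact Submodule.Quotient.subsingleton_iff.1 hW'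
  have hH := EV_H1 depthAt hdi hed H (by omega) hB hs
  rw [show n - 3 + 4 = n + 1 by omega] at hH
  have hH' := EV_top_ne (tor_H1 H) hH
  have hH2 : ∀ z, p1 e z = 0 → ∃ y, p2 d e y = z := by
    have := Submodule.Quotient.subsingleton_iff.1 hH'
    intro z hz
    have h : (⟨z, hz⟩ : LinearMap.ker (p1 e)) ∈ (LinearMap.range (p2 d e)).comap (LinearMap.ker (p1 e)).subtype := by
      rw [this]; trivial
    exact h
  let B := Module.Free.chooseBasis (PolyS K n) L0
  have hsub := unique_index hs hmin _ B
  have hne : Nonempty (Module.Free.ChooseBasisIndex (PolyS K n) L0) := B.index_nonempty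
  obtain ⟨p⟩ := hne
  have h2 := two_ne hs hmin _ B p
  have hb : ∀ l, B.coord p l • B p = l := by
    intro l
    conv_rhs => rw [← B.sum_repr l]
    rw [Fintype.sum_subsingleton _ p]; rfl
  have hid := ideal_idem hs hH2 hed h2 (B p) (B.coord p) hb (by simp)
  have hfg : (LinearMap.range ((B.coord p).comp e)).FG := IsNoetherian.noetherian _
  have := (Ideal.isIdempotentElem_iff_eq_bot_or_top (LinearMap.range ((B.coord p).comp e)) hfg).1
    (le_antisymm Ideal.mul_le_left hid)
  rcases this with h | h
  · obtain ⟨c, s0, s1, s2, h0, -⟩ := H 0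
    have h3 : (B.coord p) (e (s0 (B p))) ∈ LinearMap.range ((B.coord p).comp e) := ⟨_, rfl⟩
    rw [h, h0, map_smul] at h3
    simp at h3
  · have h3 : (1 : PolyS K n) ∈ LinearMap.range ((B.coord p).comp e) := by rw [h]; trivial
    obtain ⟨a, ha⟩ := h3
    have := coord_mem hmin (B.coord p) a
    rw [← LinearMap.comp_apply, ha] at this
    exact irrel_maximal.ne_top ((Ideal.eq_top_iff_one _).2 this)

end

section
variable {K : Type} [Field K] {n : ℕ} {N : Type} [AddCommGroup N] [Module (PolyS K n) N]

theorem case2 (hN : Tor (XX K n) N) [Nontrivial N] (res : MinimalResolution K n N) (hn : 7 ≤ n)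
    (hA : EV (PolyS K n) (A2 (PolyS K n) (Q res 2)) (PolyS K n) (n-4)) 
    (hB : EV (PolyS K n) (A2 (PolyS K n) (Q res 2)) (PolyS K n) (n-3)) : False := by
  have hdi : ∀ q, res.d 1 (qi res 2 q) = 0 := fun q => by
    have : q.1 ∈ LinearMap.ker (res.d 1) := by rw [← res.exact]; exact q.2
    exact this
  have hdd : ∀ j q, res.d j (res.d (j+1) q) = 0 := fun j q => by
    have : res.d (j+1) q ∈ LinearMap.ker (res.d j) := by rw [← res.exact]; exact ⟨q, rfl⟩
    exact this
  refine case2_aux (i := qi res 2) (d := res.d 1) (e := res.d 0) hn hdi (hdd 0) ?_ ?_ ?_ hA hB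
  · intro a
    obtain ⟨c, hc⟩ := hN a
    obtain ⟨s0, h0⟩ := Module.projective_lifting_property (qp res 0)
      (LinearMap.codRestrict (LinearMap.range (res.d 0)) (XX K n a ^ c • LinearMap.id) (by
        intro l; rw [res.exact0, LinearMap.mem_ker]; simp [hc])) (qp_surj res 0)
    have h0' : ∀ l, res.d 0 (s0 l) = XX K n a ^ c • l := fun l => 
      congrArg Subtype.val (congrArg (fun g => g l) h0)
    obtain ⟨s1, h1⟩ := Module.projective_lifting_property (qp res 1)
      (LinearMap.codRestrict (LinearMap.range (res.d 1)) (XX K n a ^ c • LinearMap.id - s0.comp (res.d 0)) (by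
        intro l; rw [res.exact, LinearMap.mem_ker]; simp [h0'])) (qp_surj res 1)
    have h1' : ∀ l, res.d 1 (s1 l) + s0 (res.d 0 l) = XX K n a ^ c • l := fun l => by
      have : res.d 1 (s1 l) = XX K n a ^ c • l - s0 (res.d 0 l) :=
        congrArg Subtype.val (congrArg (fun g => g l) h1)
      rw [this, sub_add_cancel]
    let s2 : res.L 2 →ₗ[PolyS K n] Q res 2 := 
      (LinearMap.codRestrict (LinearMap.range (res.d 2)) (XX K n a ^ c • LinearMap.id - s1.comp (res.d 1)) (by
        intro l; rw [res.exact, LinearMap.mem_ker]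
        have := h1' (res.d 1 l)
        rw [hdd 0, map_zero, add_zero] at this
        simp [this]))
    have h2 : ∀ l, qi res 2 (s2 l) = XX K n a ^ c • l - s1 (res.d 1 l) := fun l => rfl
    refine ⟨c, s0, s1, s2, h0', h1', fun l => by rw [h2, sub_add_cancel], fun l => ?_⟩
    apply qi_inj res 2
    rw [h2, hdi, map_zero, sub_zero, map_smul]
  · rw [res.exact0]; exact res.minimal0
  · exact res.aug_surjective.nontrivial
end
end HSplit

/-! ### Part 11 -/

namespace HSplit

section
variable {R : Type} [CommRing R] [IsDomain R] {E : Type} [AddCommGroup E] [Module R E]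

lemma local_frame [Module.Finite R E] (p : PrimeSpectrum R)
    (hfree : Module.Free (Localization.AtPrime p.asIdeal) (LocalizedModule p.asIdeal.primeCompl E))
    (hrank : Module.rank (Localization.AtPrime p.asIdeal) (LocalizedModule p.asIdeal.primeCompl E) = 2) :
    ∃ (Φ : R × R →ₗ[R] E) (s : R), Function.Injective Φ ∧ s ∉ p.asIdeal ∧ ∀ y, ∃ u, Φ u = s • y := by
  have hfin : Module.Finite (Localization.AtPrime p.asIdeal) (LocalizedModule p.asIdeal.primeCompl E) :=
    Module.Finite.of_isLocalizedModule p.asIdeal.primeCompl (LocalizedModule.mkLinearMap p.asIdeal.primeCompl E)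
  have hfr : Module.finrank (Localization.AtPrime p.asIdeal) (LocalizedModule p.asIdeal.primeCompl E) = 2 :=
    Module.finrank_eq_of_rank_eq hrank
  let b := Module.finBasisOfFinrankEq _ _ hfr
  obtain ⟨e0, t0, h0⟩ : ∃ e0 t0, b 0 = LocalizedModule.mk e0 t0 := by
    induction h : b 0 with | _ m s => exact ⟨m, s, rfl⟩
  obtain ⟨e1, t1, h1⟩ : ∃ e1 t1, b 1 = LocalizedModule.mk e1 t1 := by
    induction h : b 1 with | _ m s => exact ⟨m, s, rfl⟩
  let Φ : R × R →ₗ[R] E := LinearMap.coprod (LinearMap.toSpanSingleton R E e0) (LinearMap.toSpanSingleton R E e1)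
  have hΦ : ∀ u, Φ u = u.1 • e0 + u.2 • e1 := fun u => rfl
  have hinj : Function.Injective Φ := by
    rw [injective_iff_map_eq_zero]
    rintro ⟨a, c⟩ hac
    rw [hΦ] at hac
    have hli := Fintype.linearIndependent_iff.1 b.linearIndependent
      ![Localization.mk (a * t0.1) 1, Localization.mk (c * t1.1) 1] (by
        rw [Fin.sum_univ_two, h0, h1]
        simp only [Matrix.cons_val_zero, Matrix.cons_val_one]
        rw [LocalizedModule.mk_smul_mk, LocalizedModule.mk_smul_mk, LocalizedModule.mk_add_mk]
        have : ((1 * t1) • (a * t0.1) • e0 + (1 * t0) • (c * t1.1) • e1 : E) = 0 := by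
          simp only [one_mul, Submonoid.smul_def]
          have := congrArg (fun z => (t0.1 * t1.1) • z) hac
          simp only [smul_add, smul_zero, smul_smul] at this
          rw [← this]
          simp only [smul_smul]
          congr 2 <;> ring
        rw [this, LocalizedModule.zero_mk])
    have hz : ∀ r : R, Localization.mk r (1 : p.asIdeal.primeCompl) = 0 → r = 0 := by
      intro r hr
      rw [Localization.mk_one_eq_algebraMap] at hr
      exact (IsLocalization.injective (Localization.AtPrime p.asIdeal) p.asIdeal.primeCompl_le_nonZeroDivisors)
        (by rw [hr, map_zero])
    have ht : ∀ t : p.asIdeal.primeCompl, t.1 ≠ 0 := fun t h => t.2 (by rw [h]; exact Ideal.zero_mem _)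
    have ha := hz _ (hli 0)
    have hc := hz _ (hli 1)
    ext
    · exact (mul_eq_zero.1 ha).resolve_right (ht _)
    · exact (mul_eq_zero.1 hc).resolve_right (ht _)
  have hp : p ∉ Module.support R (E ⧸ LinearMap.range Φ) := by
    rw [Module.notMem_support_iff']
    intro z
    obtain ⟨y, rfl⟩ := Submodule.Quotient.mk_surjective _ z
    have hy := b.sum_repr (LocalizedModule.mk y 1)
    rw [Fin.sum_univ_two, h0, h1] at hy
    generalize b.repr (LocalizedModule.mk y 1) 0 = r0 at hy
    generalize b.repr (LocalizedModule.mk y 1) 1 = r1 at hy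
    induction r0 using Localization.induction_on with | _ r0 =>
    induction r1 using Localization.induction_on with | _ r1 =>
    rw [LocalizedModule.mk_smul_mk, LocalizedModule.mk_smul_mk, LocalizedModule.mk_add_mk, LocalizedModule.mk_eq] at hy
    obtain ⟨u, hu⟩ := hy
    refine ⟨u.1 * (r0.2 * t0 * (r1.2 * t1) : p.asIdeal.primeCompl).1, ?_, ?_⟩
    · exact (u * (r0.2 * t0 * (r1.2 * t1))).2
    · rw [← Submodule.Quotient.mk_smul, Submodule.Quotient.mk_eq_zero]
      refine ⟨(u.1 * (r1.2 * t1 : p.asIdeal.primeCompl).1 * r0.1, u.1 * (r0.2 * t0 : p.asIdeal.primeCompl).1 * r1.1), ?_⟩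
      rw [hΦ, mul_smul u.1]
      simp only [Submonoid.smul_def] at hu
      rw [← hu]
      simp only [smul_add, smul_smul, one_smul, mul_assoc, Submonoid.coe_one, one_mul]
  rw [Module.mem_support_iff_of_finite, SetLike.not_le_iff_exists] at hp
  obtain ⟨s, hs, hs'⟩ := hp
  refine ⟨Φ, s, hinj, hs', fun y => ?_⟩
  have := Module.mem_annihilator.1 hs (Submodule.Quotient.mk y)
  rwa [← Submodule.Quotient.mk_smul, Submodule.Quotient.mk_eq_zero] at this

/-- coordinates from a frame -/
lemma frame_det (Φ : R × R →ₗ[R] E) (s : R) (hΦ : Function.Injective Φ) (hs : ∀ y, ∃ u, Φ u = s • y) :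
    ∃ δ : A2 R E →ₗ[R] R, (∀ z, (s * s) • z = δ z • wd R (Φ (1,0)) (Φ (0,1))) ∧
      δ (wd R (Φ (1,0)) (Φ (0,1))) = s * s := by
  let c : E →ₗ[R] R × R := (LinearEquiv.ofInjective Φ hΦ).symm.toLinearMap.comp
    (LinearMap.codRestrict (LinearMap.range Φ) (s • LinearMap.id) hs)
  have hc : ∀ y, Φ (c y) = s • y := fun y => by
    have := (LinearEquiv.ofInjective Φ hΦ).apply_symm_apply
      (LinearMap.codRestrict (LinearMap.range Φ) (s • LinearMap.id) hs y)
    exact congrArg Subtype.val this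
  have hc' : ∀ u, c (Φ u) = s • u := fun u => hΦ (by rw [hc, map_smul])
  let π1 : E →ₗ[R] R := (LinearMap.fst R R R).comp c
  let π2 : E →ₗ[R] R := (LinearMap.snd R R R).comp c
  have hdec : ∀ y, s • y = π1 y • Φ (1,0) + π2 y • Φ (0,1) := fun y => by
    rw [← hc, ← map_smul, ← map_smul, ← map_add]
    congr 1
    ext <;> simp [π1, π2]
  let δ : A2 R E →ₗ[R] R := A2lift ((LinearMap.mul' R R).comp (TensorProduct.map π1 π2) -
    (LinearMap.mul' R R).comp (TensorProduct.map π2 π1)) (by intro m; simp [mul_comm])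
  have hδ : ∀ y y', δ (wd R y y') = π1 y * π2 y' - π2 y * π1 y' := fun y y' => by simp [δ]
  refine ⟨δ, fun z => ?_, ?_⟩
  · have : (s * s) • LinearMap.id = (LinearMap.toSpanSingleton R _ (wd R (Φ (1,0)) (Φ (0,1)))).comp δ := by
      refine A2_ext fun y y' => ?_
      simp only [LinearMap.smul_apply, LinearMap.id_apply, LinearMap.comp_apply, hδ, LinearMap.toSpanSingleton_apply]
      rw [mul_smul, ← wd_smul_right, ← wd_smul_left, hdec y, hdec y']
      simp only [wd_add_left, wd_add_right, wd_smul_left, wd_smul_right, wd_self]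
      rw [wd_swap (Φ (0,1))]
      module
    exact congrArg (fun g => g z) this
  · rw [hδ]
    simp [π1, π2, hc']

/-- division of a functional -/
lemma div_functional {M : Type} [AddCommGroup M] [Module R M] (δ : M →ₗ[R] R) (q : R) (hq : q ≠ 0)
    (h : ∀ z, q ∣ δ z) : ∃ δ' : M →ₗ[R] R, ∀ z, δ z = q * δ' z := by
  choose g hg using h
  refine ⟨⟨⟨g, fun a b => ?_⟩, fun a b => ?_⟩, hg⟩
  · apply mul_left_cancel₀ hq; rw [← hg, map_add, hg a, hg b, mul_add]
  · apply mul_left_cancel₀ hq; rw [← hg, map_smul, hg b, smul_eq_mul, smul_eq_mul, RingHom.id_apply]; ring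

lemma prime_factor [UniqueFactorizationMonoid R] (p : Ideal R) (hp : p.IsPrime) (D : R) (hD : D ∈ p) (h0 : D ≠ 0) :
    ∃ q, Prime q ∧ q ∣ D ∧ q ∈ p := by
  obtain ⟨f, hf, ha⟩ := UniqueFactorizationMonoid.exists_prime_factors D h0
  have : f.prod ∈ p := by
    obtain ⟨u, hu⟩ := ha.symm
    rw [← hu]; exact Ideal.mul_mem_right _ _ hD
  obtain ⟨q, hq, hqp⟩ := (hp.multiset_prod_mem_iff_exists_mem f).1 this
  exact ⟨q, hf q hq, (Multiset.dvd_prod hq).trans ha.dvd, hqp⟩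
end

section
variable {K : Type} [Field K] {n : ℕ}

lemma pow_mem_of_primes (J : Ideal (PolyS K n)) 
    (h : ∀ p : PrimeSpectrum (PolyS K n), p.asIdeal ≠ irrel K n → ∃ s ∈ J, s ∉ p.asIdeal) (a : Fin (n+1)) :
    ∃ c : ℕ, XX K n a ^ c ∈ J := by
  have : XX K n a ∈ J.radical := by
    rw [Ideal.radical_eq_sInf, Submodule.mem_sInf]
    rintro p ⟨hJ, hp⟩
    by_cases hpm : p = irrel K n
    · rw [hpm]; exact Ideal.subset_span ⟨a, rfl⟩
    · obtain ⟨s, hs, hs'⟩ := h ⟨p, hp⟩ hpm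
      exact absurd (hJ hs) hs'
  exact this

variable {E : Type} [AddCommGroup E] [Module (PolyS K n) E]

theorem EV_A2E (hE : IsRankTwoBundleModule K n E) {j : ℕ} (hj : 1 ≤ j) (hjn : j + 1 ≤ n) :
    EV (PolyS K n) (A2 (PolyS K n) E) (PolyS K n) j := by
  have := hE.finite
  have frame : ∀ p : PrimeSpectrum (PolyS K n), p.asIdeal ≠ irrel K n → 
      ∃ (w : A2 (PolyS K n) E) (s : PolyS K n) (δ : A2 (PolyS K n) E →ₗ[PolyS K n] PolyS K n), s ∉ p.asIdeal ∧ 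
        (∀ z, (s * s) • z = δ z • w) ∧ δ w = s * s := by
    intro p hp
    obtain ⟨Φ, s, h1, h2, h3⟩ := local_frame p (hE.locFree p hp) (hE.rank2 p hp)
    obtain ⟨δ, h4, h5⟩ := frame_det Φ s h1 h3
    exact ⟨_, s, δ, h2, h4, h5⟩
  have hbot : (⊥ : Ideal (PolyS K n)) ≠ irrel K n := by
    intro h
    have : XX K n 0 ∈ irrel K n := Ideal.subset_span ⟨0, rfl⟩
    rw [← h] at this
    exact MvPolynomial.X_ne_zero _ this
  obtain ⟨w0, s0, δ0, hs0, h0, h0'⟩ := frame ⟨⊥, Ideal.isPrime_bot⟩ hbot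
  have hs0' : s0 ≠ 0 := fun h => hs0 h
  obtain ⟨D, ⟨δ, hδD, hD0⟩, hmin⟩ := (wellFounded_dvdNotUnit (α := PolyS K n)).has_min
    {D | ∃ δ : A2 (PolyS K n) E →ₗ[PolyS K n] PolyS K n, δ w0 = D ∧ D ≠ 0} ⟨_, δ0, rfl, by rw [h0']; exact mul_ne_zero hs0' hs0'⟩
  have key : ∀ {w s} {δ1 : A2 (PolyS K n) E →ₗ[PolyS K n] PolyS K n}, (∀ z, (s * s) • z = δ1 z • w) → s ≠ 0 → 
      (∀ z, (s * s) * δ z = δ1 z * δ w) ∧ δ w ≠ 0 := by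
    intro w s δ1 h hs
    have h1 : ∀ z, (s * s) * δ z = δ1 z * δ w := fun z => by
      have := congrArg δ (h z); rwa [map_smul, map_smul, smul_eq_mul, smul_eq_mul] at this
    refine ⟨h1, fun hw => hD0 ?_⟩
    have := h1 w0
    rw [hw, mul_zero, hδD] at this
    exact (mul_eq_zero.1 this).resolve_left (mul_ne_zero hs hs)
  have hne : ∀ (p : PrimeSpectrum (PolyS K n)) s, s ∉ p.asIdeal → s ≠ 0 := fun p s hs h => hs (by rw [h]; exact Ideal.zero_mem _)
  refine v_iso' depthAt (f := δ) ?_ ?_ hjn (EV.proj _ hj)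
  · intro a
    obtain ⟨c, hc⟩ := pow_mem_of_primes (Module.annihilator (PolyS K n) (LinearMap.ker δ)) (by
      intro p hp
      obtain ⟨w, s, δ1, hs, h1, h2⟩ := frame p hp
      obtain ⟨k1, k2⟩ := key h1 (hne p s hs)
      refine ⟨s * s, Module.mem_annihilator.2 ?_, fun h => hs ((p.2.mem_or_mem h).elim id id)⟩
      rintro ⟨z, hz⟩
      apply Subtype.ext
      change (s * s) • z = 0
      have := k1 z
      rw [LinearMap.mem_ker.1 hz, mul_zero] at this
      rw [h1, (mul_eq_zero.1 this.symm).resolve_right k2, zero_smul]) a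
    exact ⟨c, fun z hz => congrArg Subtype.val (Module.mem_annihilator.1 hc ⟨z, hz⟩)⟩
  · intro a
    obtain ⟨c, z, hz⟩ := pow_mem_of_primes (LinearMap.range δ) (by
      intro p hp
      obtain ⟨w, s, δ1, hs, h1, h2⟩ := frame p hp
      obtain ⟨k1, k2⟩ := key h1 (hne p s hs)
      refine ⟨δ w, ⟨w, rfl⟩, fun hw => ?_⟩
      obtain ⟨q, hq, hqD, hqp⟩ := prime_factor p.asIdeal p.2 _ hw k2
      have hqs : ¬ q ∣ s := fun h => hs (Ideal.mem_of_dvd _ h hqp)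
      obtain ⟨δ', hδ'⟩ := div_functional δ q hq.ne_zero (fun z => by
        have : q ∣ (s * s) * δ z := by rw [k1]; exact hqD.mul_left _
        rcases hq.dvd_or_dvd this with h | h
        · rcases hq.dvd_or_dvd h with h | h <;> exact absurd h hqs
        · exact h)
      have hne' : δ' w0 ≠ 0 := fun h => hD0 (by rw [← hδD, hδ', h, mul_zero])
      refine hmin (δ' w0) ⟨δ', rfl, hne'⟩ ⟨hne', q, hq.not_unit, ?_⟩
      rw [← hδD, hδ', mul_comm]) a
    exact ⟨c, fun y => ⟨y • z, by rw [map_smul, hz, smul_eq_mul, smul_eq_mul, mul_comm]⟩⟩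

/-- sections -/
theorem exists_retr {A P : Type} [AddCommGroup A] [Module (PolyS K n) A] [AddCommGroup P] [Module (PolyS K n) P]
    [Module.Finite (PolyS K n) P]
    (α : A →ₗ[PolyS K n] P) (hα : Function.Injective α)
    (hsub : ∀ p : PrimeSpectrum (PolyS K n), p.asIdeal ≠ irrel K n →
      Module.Free (Localization.AtPrime p.asIdeal)
        (LocalizedModule p.asIdeal.primeCompl (P ⧸ LinearMap.range α))) (i : Fin (n+1)) :
    ∃ (c : ℕ) (r : P →ₗ[PolyS K n] A), ∀ a, r (α a) = XX K n i ^ c • a := by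
  let J : Ideal (PolyS K n) :=
    { carrier := {s | ∃ r : P →ₗ[PolyS K n] A, ∀ a, r (α a) = s • a}
      add_mem' := by
        rintro s t ⟨r, hr⟩ ⟨r', hr'⟩
        exact ⟨r + r', fun a => by rw [LinearMap.add_apply, hr, hr', add_smul]⟩
      zero_mem' := ⟨0, fun a => by simp⟩
      smul_mem' := by
        rintro c s ⟨r, hr⟩
        exact ⟨c • r, fun a => by rw [LinearMap.smul_apply, hr, smul_eq_mul, mul_smul]⟩ }
  suffices h : ∃ c : ℕ, XX K n i ^ c ∈ J by
    obtain ⟨c, r, hr⟩ := h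
    exact ⟨c, r, hr⟩
  refine pow_mem_of_primes J (fun p hp => ?_) i
  have hfree := hsub p hp
  set C := p.asIdeal.primeCompl with hC
  let π := (LinearMap.range α).mkQ
  let Q := P ⧸ LinearMap.range α
  let lP := LocalizedModule.mkLinearMap C P
  let lQ := LocalizedModule.mkLinearMap C Q
  let πp : LocalizedModule C P →ₗ[Localization C] LocalizedModule C Q := LocalizedModule.map C π
  have hπs : Function.Surjective πp := LocalizedModule.map_surjective C π (Submodule.mkQ_surjective _)
  obtain ⟨σ, hσ⟩ := LinearMap.exists_rightInverse_of_surjective πp (LinearMap.range_eq_top.2 hπs)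
  have hfp : Module.FinitePresentation (PolyS K n) Q := Module.finitePresentation_of_finite _ _
  obtain ⟨h', s, hs⟩ := Module.FinitePresentation.exists_lift_of_isLocalizedModule C lP 
    ((σ.restrictScalars (PolyS K n)).comp lQ)
  have h1 : lQ.comp (π.comp h') = lQ.comp (s.1 • LinearMap.id) := by
    refine LinearMap.ext fun q => ?_
    have h2 := congrArg (fun g => πp (g q)) hs
    have h3 : ∀ z, πp (lP z) = lQ (π z) := fun z => by
      simp [πp, lP, lQ, LocalizedModule.map_mk]
    have h4 : ∀ z, πp (σ z) = z := fun z => congrArg (fun g => g z) hσ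
    simp only [LinearMap.comp_apply, h3] at h2
    rw [LinearMap.comp_apply, LinearMap.comp_apply, h2, LinearMap.smul_apply, Submonoid.smul_def, LinearMap.comp_apply,
      LinearMap.restrictScalars_apply, ← IsScalarTower.algebraMap_smul (Localization C), map_smul, h4,
      IsScalarTower.algebraMap_smul]
    simp
  obtain ⟨t, ht⟩ := Module.Finite.exists_smul_of_comp_eq_of_isLocalizedModule C lQ _ _ h1
  have ht' : ∀ q, t.1 • π (h' q) = t.1 • s.1 • q := fun q => congrArg (fun g => g q) ht
  refine ⟨t.1 * s.1, ?_, (t * s).2⟩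
  let r : P →ₗ[PolyS K n] A := (LinearEquiv.ofInjective α hα).symm.toLinearMap.comp
    (LinearMap.codRestrict (LinearMap.range α) ((t.1 * s.1) • LinearMap.id - t.1 • h'.comp π) (by
      intro z
      rw [← Submodule.Quotient.mk_eq_zero]
      change π _ = 0
      simp only [LinearMap.sub_apply, LinearMap.smul_apply, LinearMap.id_apply, LinearMap.comp_apply, map_sub, map_smul, ht', mul_smul, sub_self]))
  refine ⟨r, fun a => ?_⟩
  have hπa : π (α a) = 0 := (Submodule.Quotient.mk_eq_zero _).2 ⟨a, rfl⟩
  apply hα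
  have := (LinearEquiv.ofInjective α hα).apply_symm_apply
    (LinearMap.codRestrict (LinearMap.range α) ((t.1 * s.1) • LinearMap.id - t.1 • h'.comp π) (by
      intro z
      rw [← Submodule.Quotient.mk_eq_zero]
      change π _ = 0
      simp only [LinearMap.sub_apply, LinearMap.smul_apply, LinearMap.id_apply, LinearMap.comp_apply, map_sub, map_smul, ht', mul_smul, sub_self]) (α a))
  refine (congrArg Subtype.val this).trans ?_
  simp [hπa]
end
end HSplit

/-! ### Part 12 -/

namespace HSplit

section
variable {K : Type} [Field K] {n : ℕ}

lemma XX_pow_mem (c : ℕ) (i : Fin (n+1)) : XX K n i ^ c ∈ irrel K n ^ c :=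
  Ideal.pow_mem_pow (by exact Ideal.subset_span ⟨i, rfl⟩) c

variable {M N : Type} [AddCommGroup M] [Module (PolyS K n) M] [AddCommGroup N] [Module (PolyS K n) N]

lemma ann_range {f : M →ₗ[PolyS K n] N}
    (h : ∃ c : ℕ, (irrel K n) ^ c ≤ Module.annihilator (PolyS K n) (N ⧸ LinearMap.range f)) :
    ∃ c : ℕ, ∀ i y, XX K n i ^ c • y ∈ LinearMap.range f := by
  obtain ⟨c, hc⟩ := h
  refine ⟨c, fun i y => ?_⟩
  have := Module.mem_annihilator.1 (hc (XX_pow_mem c i)) ((LinearMap.range f).mkQ y)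
  rw [← map_smul] at this
  exact (Submodule.Quotient.mk_eq_zero _).1 this

lemma ann_ker {f : M →ₗ[PolyS K n] N}
    (h : ∃ c : ℕ, (irrel K n) ^ c ≤ Module.annihilator (PolyS K n) ↥(LinearMap.ker f)) :
    ∃ c : ℕ, ∀ i y, f y = 0 → XX K n i ^ c • y = 0 := by
  obtain ⟨c, hc⟩ := h
  refine ⟨c, fun i y hy => ?_⟩
  have := Module.mem_annihilator.1 (hc (XX_pow_mem c i)) ⟨y, hy⟩
  exact congrArg Subtype.val this

variable {A B P E F : Type} [AddCommGroup A] [Module (PolyS K n) A]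
    [AddCommGroup B] [Module (PolyS K n) B] [AddCommGroup P] [Module (PolyS K n) P]
    [AddCommGroup E] [Module (PolyS K n) E] [AddCommGroup F] [Module (PolyS K n) F]

lemma lift_B [Module.Free (PolyS K n) B] (β : P →ₗ[PolyS K n] B)
    (h : ∃ c : ℕ, ∀ i y, XX K n i ^ c • y ∈ LinearMap.range β) (i) :
    ∃ (c : ℕ) (s : B →ₗ[PolyS K n] P), ∀ b, β (s b) = XX K n i ^ c • b := by
  obtain ⟨c, h⟩ := h
  obtain ⟨s, hs⟩ := Module.projective_lifting_property β.rangeRestrict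
    (LinearMap.codRestrict (LinearMap.range β) (XX K n i ^ c • (LinearMap.id : B →ₗ[PolyS K n] B)) (fun b => h i b))
    (LinearMap.surjective_rangeRestrict _)
  refine ⟨c, s, fun b => ?_⟩
  exact congrArg Subtype.val (LinearMap.congr_fun hs b)

/-- kernel of the stabilised map -/
def kfst (β : P →ₗ[PolyS K n] B) :
    LinearMap.ker (β.prodMap (LinearMap.id : F →ₗ[PolyS K n] F)) →ₗ[PolyS K n] LinearMap.ker β :=
  LinearMap.codRestrict _ ((LinearMap.fst _ P F).comp (Submodule.subtype _)) (fun z => by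
    have := z.2
    rw [LinearMap.mem_ker] at this
    exact congrArg Prod.fst this)

/-- the stabilised sub -/
def kinl (β : P →ₗ[PolyS K n] B) (α : A →ₗ[PolyS K n] P) (h : β.comp α = 0) :
    A →ₗ[PolyS K n] LinearMap.ker (β.prodMap (LinearMap.id : F →ₗ[PolyS K n] F)) :=
  LinearMap.codRestrict _ ((LinearMap.inl _ P F).comp α) (fun a => by
    have := LinearMap.congr_fun h a
    simpa using this)

lemma kinl_fst (β : P →ₗ[PolyS K n] B) (α : A →ₗ[PolyS K n] P) (h : β.comp α = 0) (a : A)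
    (z : LinearMap.ker (β.prodMap (LinearMap.id : F →ₗ[PolyS K n] F))) (ha : α a = (kfst β z).1) :
    kinl β α h a = z := by
  have h2 : z.1.2 = 0 := by
    have := z.2
    rw [LinearMap.mem_ker] at this
    exact congrArg Prod.snd this
  refine Subtype.ext (Prod.ext ha h2.symm)

/-- quotient map -/
def mh (α : A →ₗ[PolyS K n] P) (β : P →ₗ[PolyS K n] B) : LinearMap.ker β →ₗ[PolyS K n] MonadHomology α β :=
  ((LinearMap.range α).comap (LinearMap.ker β).subtype).mkQ

lemma mh_surj (α : A →ₗ[PolyS K n] P) (β : P →ₗ[PolyS K n] B) : Function.Surjective (mh α β) :=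
  Submodule.mkQ_surjective _

lemma mh_zero (α : A →ₗ[PolyS K n] P) (β : P →ₗ[PolyS K n] B) (z) : mh α β z = 0 ↔ ∃ a, α a = z.1 :=
  Submodule.Quotient.mk_eq_zero _

theorem A2_PF [Module.Free (PolyS K n) A] [Module.Finite (PolyS K n) A]
    [Module.Free (PolyS K n) B] [Module.Finite (PolyS K n) B]
    [Module.Free (PolyS K n) F] [Module.Finite (PolyS K n) F] [Module.Finite (PolyS K n) P]
    (α : A →ₗ[PolyS K n] P) (β : P →ₗ[PolyS K n] B)
    (hβα : β.comp α = 0)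
    (hαinj : Function.Injective α)
    (hsubbundle : ∀ p : PrimeSpectrum (PolyS K n), p.asIdeal ≠ irrel K n →
      Module.Free (Localization.AtPrime p.asIdeal)
        (LocalizedModule p.asIdeal.primeCompl (P ⧸ LinearMap.range α)))
    (hβsurj : ∃ c : ℕ, (irrel K n) ^ c ≤
      Module.annihilator (PolyS K n) (B ⧸ LinearMap.range β))
    (hcoh : ∃ f : MonadHomology α β →ₗ[PolyS K n] E, IsSheafIso K n f)
    (hE : IsRankTwoBundleModule K n E) {j : ℕ} (hj : 2 ≤ j) (hjn : j + 2 ≤ n)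
    (hPF : EV (PolyS K n) (P × F) (PolyS K n) j) :
    EV (PolyS K n) (A2 (PolyS K n) (P × F)) (PolyS K n) j := by
  obtain ⟨f, hf1, hf2⟩ := hcoh
  obtain ⟨c1, hf1⟩ := ann_ker hf1
  obtain ⟨c2, hf2⟩ := ann_range hf2
  refine monad_A2 depthAt (β.prodMap (LinearMap.id : F →ₗ[PolyS K n] F)) (kinl β α hβα)
    ((f.comp (mh α β)).comp (kfst β)) ?_ ?_ ?_ ?_ ?_ hj hjn hPF (EV_A2E hE (by omega) (by omega))
  · intro i
    obtain ⟨c, s, hs⟩ := lift_B β (ann_range hβsurj) i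
    refine ⟨c, s.prodMap (XX K n i ^ c • LinearMap.id), fun b => ?_⟩
    refine Prod.ext ?_ ?_
    · exact hs b.1
    · rfl
  · intro i
    obtain ⟨c, r, hr⟩ := exists_retr α hαinj hsubbundle i
    exact ⟨c, r.comp ((Submodule.subtype _).comp (kfst β)), hr⟩
  · intro a
    have : mh α β (kfst β (kinl (F := F) β α hβα a)) = 0 := (mh_zero _ _ _).2 ⟨a, rfl⟩
    simp only [LinearMap.comp_apply, this, map_zero]
  · intro i
    refine ⟨c1, fun z hz => ?_⟩
    have h1 := hf1 i _ hz
    rw [← map_smul, mh_zero] at h1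
    obtain ⟨a, ha⟩ := h1
    refine ⟨a, kinl_fst _ _ _ _ _ ?_⟩
    rw [map_smul]; exact ha
  · intro i
    refine ⟨c2, fun y => ?_⟩
    obtain ⟨w, hw⟩ := hf2 i y
    obtain ⟨z, rfl⟩ := mh_surj α β w
    refine ⟨⟨(z.1, 0), ?_⟩, hw⟩
    rw [LinearMap.mem_ker]
    exact Prod.ext z.2 rfl

end

section
variable {R : Type} [CommRing R] {X Y W : Type} [AddCommGroup X] [Module R X] [AddCommGroup Y] [Module R Y]
  [AddCommGroup W] [Module R W]

/-- `w ∧ w' ↦ r w ⊗ v w' - r w' ⊗ v w` -/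
def rv (r : W →ₗ[R] X) (v : W →ₗ[R] Y) : A2 R W →ₗ[R] X ⊗[R] Y :=
  A2lift (TensorProduct.map r v - (TensorProduct.map r v).comp (TensorProduct.comm R W W).toLinearMap)
    (by intro m; simp)

lemma tens_retract (u : X →ₗ[R] W) (r : W →ₗ[R] X) (v : W →ₗ[R] Y) (t : Y →ₗ[R] W)
    (h1 : ∀ x, r (u x) = x) (h2 : ∀ y, v (t y) = y) (h3 : ∀ y, r (t y) = 0) {j : ℕ}
    (h : EV R (A2 R W) R j) : EV R (X ⊗[R] Y) R j := by
  refine EV.retract ((pA R W).comp (TensorProduct.map u t)) (rv r v) ?_ h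
  refine TensorProduct.ext' fun x y => ?_
  have : rv r v (wd R (u x) (t y)) = x ⊗ₜ y := by
    simp [rv, h1, h2, h3]
  exact this

lemma A2_retract (u : X →ₗ[R] W) (r : W →ₗ[R] X) (h1 : ∀ x, r (u x) = x) {j : ℕ}
    (h : EV R (A2 R W) R j) : EV R (A2 R X) R j := by
  refine EV.retract (A2map u) (A2map r) ?_ h
  refine A2_ext fun x y => ?_
  simp [h1]

lemma tens_sub {ι : Type} {x : ι → R} {n : ℕ} (hD : DepthAt x n) (Y' : Submodule R Y)
    (h : ∀ i, ∃ c : ℕ, ∀ y, x i ^ c • y ∈ Y') {j : ℕ} (hj : j ≤ n)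
    (hv : EV R (X ⊗[R] Y') R j) : EV R (X ⊗[R] Y) R j := by
  have key : ∀ i, ∃ (c : ℕ) (q : Y →ₗ[R] Y'), q.comp Y'.subtype = x i ^ c • LinearMap.id ∧
      Y'.subtype.comp q = x i ^ c • LinearMap.id := by
    intro i
    obtain ⟨c, hc⟩ := h i
    refine ⟨c, LinearMap.codRestrict Y' (x i ^ c • (LinearMap.id : Y →ₗ[R] Y)) hc, ?_, ?_⟩
    · rfl
    · rfl
  refine v_iso hD (f := Y'.subtype.lTensor X) ?_ ?_ hj hv
  · intro i
    obtain ⟨c, q, h1, -⟩ := key i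
    refine ⟨c, fun z hz => ?_⟩
    have := congrArg (q.lTensor X) hz
    rw [← LinearMap.comp_apply, ← LinearMap.lTensor_comp, h1, LinearMap.lTensor_smul, LinearMap.lTensor_id, map_zero] at this
    exact this
  · intro i
    obtain ⟨c, q, -, h1⟩ := key i
    refine ⟨c, fun z => ⟨q.lTensor X z, ?_⟩⟩
    rw [← LinearMap.comp_apply, ← LinearMap.lTensor_comp, h1, LinearMap.lTensor_smul, LinearMap.lTensor_id]
    rfl

lemma exists_t (u : X →ₗ[R] W) (v : W →ₗ[R] Y) (huv : Function.Exact u v) (r : W →ₗ[R] X)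
    (h1 : ∀ x, r (u x) = x) : ∃ t : LinearMap.range v →ₗ[R] W,
      (∀ y, v.rangeRestrict (t y) = y) ∧ ∀ y, r (t y) = 0 := by
  have hvu : ∀ x, v (u x) = 0 := fun x => (huv _).2 ⟨x, rfl⟩
  let e : W →ₗ[R] W := LinearMap.id - u.comp r
  have he : LinearMap.ker v.rangeRestrict ≤ LinearMap.ker e := by
    intro w hw
    rw [LinearMap.ker_rangeRestrict] at hw
    obtain ⟨x, rfl⟩ := (huv w).1 hw
    simp [e, h1]
  let t : LinearMap.range v →ₗ[R] W := ((LinearMap.ker v.rangeRestrict).liftQ e he).comp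
    (v.rangeRestrict.quotKerEquivOfSurjective (LinearMap.surjective_rangeRestrict _)).symm.toLinearMap
  have ht : ∀ w, t (v.rangeRestrict w) = e w := by
    intro w
    have : (v.rangeRestrict.quotKerEquivOfSurjective (LinearMap.surjective_rangeRestrict _)).symm (v.rangeRestrict w)
      = (LinearMap.ker v.rangeRestrict).mkQ w := by
      rw [LinearEquiv.symm_apply_eq]; rfl
    simp only [t, LinearMap.comp_apply, LinearEquiv.coe_coe, this]
    rfl
  refine ⟨t, fun y => ?_, fun y => ?_⟩ <;> obtain ⟨w, rfl⟩ := LinearMap.surjective_rangeRestrict v y <;> rw [ht]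
  · refine Subtype.ext ?_
    simp [e, hvu]
  · simp [e, h1]

theorem split_core {ι : Type} {x : ι → R} {n : ℕ} (hD : DepthAt x n)
    (u : X →ₗ[R] W) (v : W →ₗ[R] Y) (hu : Function.Injective u)
    (huv : Function.Exact u v) {c : ℕ} (hc : ∀ i y, x i ^ c • y ∈ LinearMap.range v)
    (r : W →ₗ[R] X) (hr : ∀ x, r (u x) = x) :
    (∀ j, j + 1 ≤ n → EV R X R j → EV R Y R j → EV R W R j) ∧
    (∀ j, j ≤ n → EV R (A2 R W) R j → EV R (X ⊗[R] Y) R j) ∧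
    (∀ j, EV R (A2 R W) R j → EV R (A2 R X) R j) := by
  obtain ⟨t, ht1, ht2⟩ := exists_t u v huv r hr
  refine ⟨fun j hj h1 h2 => ?_, fun j hj h => ?_, fun j h => A2_retract u r hr h⟩
  · have hex : Function.Exact u v.rangeRestrict := by
      intro w
      rw [← huv w, ← LinearMap.mem_ker, LinearMap.ker_rangeRestrict, LinearMap.mem_ker]
    refine EV.mid hu hex (LinearMap.surjective_rangeRestrict v) h1 ?_
    refine v_sub' hD (Submodule.subtype_injective (LinearMap.range v)) ?_ hj h2
    exact fun i => ⟨c, fun y => ⟨⟨_, hc i y⟩, rfl⟩⟩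
  · refine tens_sub hD (LinearMap.range v) (fun i => ⟨c, hc i⟩) hj ?_
    exact tens_retract u r v.rangeRestrict t hr ht1 ht2 h

end

end HSplit

/-- Let `E` be a rank two bundle on `ℙⁿ` with isolated cohomology
of type `(n,k)` (`n ≥ 7`, `1 < k < n/2`).  Then the exact sequence
`0 → P_k(N) → P ⊕ F → P_{n-k}(M) → 0` associated to the minimal monad bundle `P`
of `E` is not split. -/
theorem horrocks_sequence_not_split
    (K : Type) [Field K] (n : ℕ) (hn : 7 ≤ n)
    (k : ℕ) (hk1 : 1 < k) (hk2 : 2 * k < n)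
    (A B P : Type) [AddCommGroup A] [Module (PolyS K n) A]
    [AddCommGroup B] [Module (PolyS K n) B] [AddCommGroup P] [Module (PolyS K n) P]
    (hAfree : Module.Free (PolyS K n) A) (hAfin : Module.Finite (PolyS K n) A)
    (hBfree : Module.Free (PolyS K n) B) (hBfin : Module.Finite (PolyS K n) B)
    (hP : IsBundleModule K n P)
    (hP1 : Subsingleton (Hstar K n 1 P))
    (hPn1 : Subsingleton (Hstar K n (n-1) P))
    (α : A →ₗ[PolyS K n] P) (β : P →ₗ[PolyS K n] B)
    (hβα : β.comp α = 0)
    (hαinj : Function.Injective α)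
    (hsubbundle : ∀ p : PrimeSpectrum (PolyS K n), p.asIdeal ≠ irrel K n →
      Module.Free (Localization.AtPrime p.asIdeal)
        (LocalizedModule p.asIdeal.primeCompl (P ⧸ LinearMap.range α)))
    (hβsurj : ∃ c : ℕ, (irrel K n) ^ c ≤
      Module.annihilator (PolyS K n) (B ⧸ LinearMap.range β))
    (hαmin : LinearMap.range α ≤ (irrel K n) • (⊤ : Submodule (PolyS K n) P))
    (hβmin : LinearMap.range β ≤ (irrel K n) • (⊤ : Submodule (PolyS K n) B))
    (E : Type) [AddCommGroup E] [Module (PolyS K n) E]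
    (hcoh : ∃ f : MonadHomology α β →ₗ[PolyS K n] E, IsSheafIso K n f)
    (hE : IsRankTwoBundleModule K n E)
    (hHk : ¬ Subsingleton (Hstar K n k E))
    (hHnk : ¬ Subsingleton (Hstar K n (n - k) E))
    (hvan : ∀ i : ℕ, 1 ≤ i → i ≤ n - 1 → i ≠ 1 → i ≠ k → i ≠ n - k → i ≠ n - 1 →
      Subsingleton (Hstar K n i E))
    (resN : MinimalResolution K n ↥(Hstar K n k E))
    (resM : MinimalResolution K n ↥(Hstar K n (n - k) E))
    (m : ℕ)
    (u : ↥(LinearMap.range (resN.d k)) →ₗ[PolyS K n] P × (Fin m → PolyS K n))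
    (v : P × (Fin m → PolyS K n) →ₗ[PolyS K n] ↥(LinearMap.range (resM.d (n - k))))
    (hu : Function.Injective u) (huv : Function.Exact u v)
    (hv : ∃ c : ℕ, (irrel K n) ^ c ≤ Module.annihilator (PolyS K n)
      (↥(LinearMap.range (resM.d (n - k))) ⧸ LinearMap.range v)) :
    ¬ ∃ r : P × (Fin m → PolyS K n) →ₗ[PolyS K n] ↥(LinearMap.range (resN.d k)),
        r.comp u = LinearMap.id := by
  open HSplit in
  rintro ⟨r, hr⟩
  have := hP.finite
  have := res_finite resN
  have := res_finite resM
  have hN : Tor (XX K n) (Hstar K n k E) := Hstar_tor k E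
  have hM : Tor (XX K n) (Hstar K n (n-k) E) := Hstar_tor (n-k) E
  have := not_subsingleton_iff_nontrivial.1 hHk
  have := not_subsingleton_iff_nontrivial.1 hHnk
  have hr' : ∀ x, r (u x) = x := fun x => LinearMap.congr_fun hr x
  obtain ⟨c, hc⟩ := ann_range hv
  obtain ⟨c1, c2, c3⟩ := split_core depthAt u v hu huv hc r hr'
  have hW : ∀ j, 2 ≤ j → j + 2 ≤ n → j + k + 1 ≠ n + 1 → j + (n - k) + 1 ≠ n + 1 →
      EV (PolyS K n) (A2 (PolyS K n) (P × (Fin m → PolyS K n))) (PolyS K n) j := by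
    intro j hj1 hj2 hj3 hj4
    have h1 := EV_Q resN hN hj3 (by omega)
    have h2 := EV_Q resM hM hj4 (by omega)
    exact A2_PF α β hβα hαinj hsubbundle hβsurj hcoh hE hj1 hj2 (c1 j (by omega) h1 h2)
  rcases Nat.lt_or_ge 2 k with h | h
  · have h3 := c2 (k-1) (by omega) (hW (k-1) (by omega) (by omega) (by omega) (by omega))
    exact case_ge3 hM hN resN resM h hk2 h3
  · obtain rfl : k = 2 := by omega
    have h3 := c3 (n-4) (hW (n-4) (by omega) (by omega) (by omega) (by omega))
    have h4 := c3 (n-3) (hW (n-3) (by omega) (by omega) (by omega) (by omega))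
    exact case2 hN resN hn h3 h4
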